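/- arXiv:1309.4620 — 3 statements merged into one kernel-verified Lean document; each statement's English description precedes it below -/
import Mathlib

section
/- Let K be a field, let B be a reduced finitely generated commutative K-algebra, let M ⊆ B be a maximal ideal, let A = B_M be the localization, and let Â denote the completion of A at its maximal ideal. Then Â is reduced, and the extension C_A·Â of the conductor of A equals the conductor C_Â = Ann_Â(closure of Â in Q(Â)/Â) of Â; that is, the conductor commutes with completion: C_A·Â = C_Â. -/
set_option synthInstance.maxHeartbeats 1000000
set_option maxHeartbeats 1000000

open scoped nonZeroDivisors

noncomputable section

/-- The conductor of a reduced ring `A` in its integral closure inside `Q(A)`: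
`C_A = {a : A | a · Ā ⊆ A}`. -/
def conductorIdeal (A : Type*) [CommRing A] : Ideal A where
  carrier := {a : A | ∀ x ∈ integralClosure A (FractionRing A),
      algebraMap A (FractionRing A) a * x ∈ (algebraMap A (FractionRing A)).range}
  add_mem' := by
    intro a b ha hb x hx
    rw [map_add, add_mul]
    exact add_mem (ha x hx) (hb x hx)
  zero_mem' := by
    intro x hx
    rw [map_zero, zero_mul]
    exact zero_mem _
  smul_mem' := by
    intro c a ha x hx
    obtain ⟨y, hy⟩ := ha x hx
    refine ⟨c * y, ?_⟩
    rw [map_mul, hy, smul_eq_mul, map_mul, mul_assoc]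

/-!
The completion `A → Â` has geometrically normal fibres. Indeed, Noether normalization presents `B`
as finite over a polynomial ring `P = K[x₁, …, xₙ]` whose origin lies under `M`, and then `Â` is a
direct factor of `B ⊗[P] K⟦x₁, …, xₙ⟧`; this reduces the claim to the normality of
`L ⊗[P] K⟦x₁, …, xₙ⟧` for a finite extension `L` of `K(x₁, …, xₙ)`. If `L` is separable, that ring
is étale over a localization of the normal domain `K⟦x₁, …, xₙ⟧`. In general, `L` becomes separable
after adjoining `q`-th roots of the variables and of finitely many scalars, and this replaces `P` by
a ring of the same kind.

Consequently `- ⊗[A] Â` preserves, for finite `A`-algebras, reducedness and (by the Grauert–Remmert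
criterion, which tests normality by an endomorphism ring of a radical ideal) normality. So `Â` is
reduced and its normalization is `Ā ⊗[A] Â`. As `Ā` is a finite `A`-module, `Ā = s⁻¹N` for an ideal
`N` and a nonzerodivisor `s`; hence `C_A = (s : N)`, and colon ideals commute with flat base change.
-/

open scoped TensorProduct

universe u v w

/-! ### Normal rings -/

section DivisibilityCriterion

open Polynomial

variable {R S : Type*} [CommRing R] [CommRing S]

theorem eval_scaleRoots_map_eq_zero (f : R →+* S) {q : R[X]} (hq : q.Monic) {a u : R}
    (h : (q.scaleRoots u).eval a = 0) : ((q.map f).scaleRoots (f u)).eval (f a) = 0 := by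
  nontriviality S
  rw [← map_scaleRoots q u f (by simp [hq.leadingCoeff]), eval_map_apply, h, map_zero]

theorem algebraMap_mul_pow_natDegree_mul_eval₂ [Algebra R S] {q : R[X]} {a u : R} {x : S}
    (hx : algebraMap R S u * x = algebraMap R S a) :
    algebraMap R S u ^ q.natDegree * q.eval₂ (algebraMap R S) x =
      algebraMap R S ((q.scaleRoots u).eval a) := by
  rw [← scaleRoots_eval₂_mul, hx, eval₂_at_apply]

theorem isIntegrallyClosed_iff_dvd : IsIntegrallyClosed R ↔ ∀ (a : R), ∀ u ∈ R⁰, ∀ q : R[X],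
    q.Monic → (q.scaleRoots u).eval a = 0 → u ∣ a := by
  rw [isIntegrallyClosed_iff (FractionRing R)]
  have hinj := IsFractionRing.injective R (FractionRing R)
  refine ⟨fun h a u hu q hq hqa ↦ ?_, fun h x ⟨q, hq, hqx⟩ ↦ ?_⟩
  · have hx := IsLocalization.mk'_spec' (FractionRing R) a ⟨u, hu⟩
    have hux := IsLocalization.map_units (FractionRing R) ⟨u, hu⟩
    obtain ⟨b, hb⟩ := h ⟨q, hq, (hux.pow _).mul_right_eq_zero.mp <|
      (algebraMap_mul_pow_natDegree_mul_eval₂ hx).trans (by rw [hqa, map_zero])⟩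
    exact ⟨b, hinj (by rw [map_mul, hb, hx])⟩
  · obtain ⟨a, u, rfl⟩ := IsLocalization.exists_mk'_eq R⁰ x
    obtain ⟨b, hb⟩ := h a u u.2 q hq <| hinj <| by
      rw [← algebraMap_mul_pow_natDegree_mul_eval₂ (IsLocalization.mk'_spec' _ a u), hqx, mul_zero,
        map_zero]
    exact ⟨b, by rw [IsLocalization.eq_mk'_iff_mul_eq, hb, map_mul, mul_comm]⟩

theorem algebraMap_mem_nonZeroDivisors_of_flat [Algebra R S] [Module.Flat R S] {u : R}
    (hu : u ∈ R⁰) : algebraMap R S u ∈ S⁰ := by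
  have hreg : IsSMulRegular (S ⊗[R] R) u :=
    IsSMulRegular.lTensor S fun a b h ↦ (mul_cancel_left_mem_nonZeroDivisors hu).mp h
  refine mem_nonZeroDivisors_iff_right.mpr fun x hx ↦ (TensorProduct.rid R S).symm.injective <|
    hreg ?_
  simp only [← map_smul, Algebra.smul_def, mul_comm _ x, hx, map_zero, smul_zero]

end DivisibilityCriterion

/-- A *normal* ring: reduced, and integrally closed in its total ring of fractions. For a Noetherian
ring this amounts to being a finite product of integrally closed domains. -/
structure IsNormalRing (R : Type*) [CommRing R] : Prop where
  isReduced : IsReduced R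
  isIntegrallyClosed : IsIntegrallyClosed R

namespace IsNormalRing

open Polynomial

variable {R S : Type*} [CommRing R] [CommRing S]

theorem dvd_of_eval_scaleRoots_eq_zero (h : IsNormalRing R) {a u : R} (hu : u ∈ R⁰) {q : R[X]}
    (hq : q.Monic) (hqa : (q.scaleRoots u).eval a = 0) : u ∣ a :=
  isIntegrallyClosed_iff_dvd.mp h.isIntegrallyClosed a u hu q hq hqa

theorem of_ringEquiv (e : R ≃+* S) (h : IsNormalRing R) : IsNormalRing S where
  isReduced := have := h.isReduced; isReduced_of_injective e.symm e.symm.injective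
  isIntegrallyClosed := have := h.isIntegrallyClosed; IsIntegrallyClosed.of_equiv e

theorem pi {ι : Type*} {R : ι → Type*} [∀ i, CommRing (R i)] (h : ∀ i, IsNormalRing (R i)) :
    IsNormalRing (∀ i, R i) where
  isReduced := have := fun i ↦ (h i).isReduced; inferInstance
  isIntegrallyClosed := isIntegrallyClosed_iff_dvd.mpr fun a u hu q hq hqa ↦ by
    classical
    refine pi_dvd_iff.mpr fun i ↦ (h i).dvd_of_eval_scaleRoots_eq_zero ?_
      (hq.map (Pi.evalRingHom R i)) (eval_scaleRoots_map_eq_zero (Pi.evalRingHom R i) hq hqa)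
    refine mem_nonZeroDivisors_iff_right.mpr fun x hx ↦ ?_
    have hsingle : Pi.single i x * u = 0 := by
      rw [← Pi.single_mul_left, show x * u i = 0 from hx, Pi.single_zero]
    simpa using congrFun ((mem_nonZeroDivisors_iff_right.mp hu) _ hsingle) i

theorem of_faithfullyFlat [Algebra R S] [Module.FaithfullyFlat R S] (h : IsNormalRing S) :
    IsNormalRing R where
  isReduced := have := h.isReduced
    isReduced_of_injective (algebraMap R S) (FaithfulSMul.algebraMap_injective R S)
  isIntegrallyClosed := isIntegrallyClosed_iff_dvd.mpr fun a u hu q hq hqa ↦ by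
    have hdvd := h.dvd_of_eval_scaleRoots_eq_zero (algebraMap_mem_nonZeroDivisors_of_flat hu)
      (hq.map _) (eval_scaleRoots_map_eq_zero (algebraMap R S) hq hqa)
    rw [← Ideal.mem_span_singleton, ← Ideal.comap_map_eq_self_of_faithfullyFlat (B := S)
      (Ideal.span {u}), Ideal.mem_comap, Ideal.map_span, Set.image_singleton]
    exact Ideal.mem_span_singleton.mpr hdvd

end IsNormalRing

/-- `f` is the projection of `R` onto a direct factor: it is surjective, and its kernel is killed by
an element `e` with `f e = 1`; such an `e` is idempotent and `f` restricts to `eR ≅ S`. -/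
def IsDirectFactor {R S : Type*} [CommRing R] [CommRing S] (f : R →+* S) : Prop :=
  Function.Surjective f ∧ ∃ e, f e = 1 ∧ ∀ x, f x = 0 → e * x = 0

namespace IsDirectFactor

open Polynomial

variable {R S : Type*} [CommRing R] [CommRing S] {f : R →+* S}

theorem isReduced [IsReduced R] (hf : IsDirectFactor f) : IsReduced S := by
  obtain ⟨hsurj, e, hfe, hker⟩ := hf
  refine ⟨fun s ⟨n, hn⟩ ↦ ?_⟩
  obtain ⟨x, rfl⟩ := hsurj s
  have hnil : IsNilpotent (e * x) := ⟨n + 1, by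
    rw [mul_pow, pow_succ e, mul_assoc, hker, mul_zero]
    rw [map_pow, pow_succ, hn, zero_mul]⟩
  rw [← one_mul (f x), ← hfe, ← map_mul, hnil.eq_zero, map_zero]

-- An integral fraction `f a / f w` is the image of the integral fraction `ea / (ew + 1 - e)`.
theorem isIntegrallyClosed [IsIntegrallyClosed R] (hf : IsDirectFactor f) :
    IsIntegrallyClosed S := by
  obtain ⟨hsurj, e, hfe, hker⟩ := hf
  nontriviality S
  have : Nontrivial R := f.domain_nontrivial
  refine isIntegrallyClosed_iff_dvd.mpr fun s v hv q hq hqs ↦ ?_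
  obtain ⟨a, rfl⟩ := hsurj s
  obtain ⟨w, rfl⟩ := hsurj v
  obtain ⟨r, rfl, -, hr⟩ :=
    lifts_and_natDegree_eq_and_monic ((lifts_iff_coeff_lifts q).mpr fun n ↦ hsurj _) hq
  set u := e * w + (1 - e) with hu
  have hfu : f u = f w := by simp [hu, hfe]
  have hfea : f (e * a) = f a := by rw [map_mul, hfe, one_mul]
  have hu₀ : u ∈ R⁰ := mem_nonZeroDivisors_iff_right.mpr fun x hx ↦ by
    have hex : e * x = 0 := hker _ <| mem_nonZeroDivisors_iff_right.mp hv _ <| by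
      rw [← hfu, ← map_mul, hx, map_zero]
    linear_combination hx + (1 - w) * hex
  have hroot : ((r * X).scaleRoots u).eval (e * a) = 0 := by
    have hzero : e * (r.scaleRoots u).eval (e * a) = 0 := hker _ <| by
      rwa [← eval_map_apply, map_scaleRoots _ _ _ (by simp [hr.leadingCoeff]), hfu, hfea]
    rw [mul_scaleRoots' _ _ _ (by simp [hr.leadingCoeff]), eval_mul,
      show (X : R[X]).scaleRoots u = X by simpa using X_add_C_scaleRoots (0 : R) u, eval_X,
      mul_left_comm, ← mul_assoc, hzero, zero_mul]
  have hdvd := isIntegrallyClosed_iff_dvd.mp ‹_› (e * a) u hu₀ _ (hr.mul monic_X) hroot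
  simpa only [hfu, hfea] using map_dvd f hdvd

theorem isNormalRing (h : IsNormalRing R) (hf : IsDirectFactor f) : IsNormalRing S :=
  have := h.isReduced
  have := h.isIntegrallyClosed
  ⟨hf.isReduced, hf.isIntegrallyClosed⟩

theorem lTensor {A C R S : Type*} [CommRing A] [CommRing C] [CommRing R] [CommRing S] [Algebra A C]
    [Algebra A R] [Algebra A S] {f : R →ₐ[A] S} (hf : IsDirectFactor (f : R →+* S)) :
    IsDirectFactor (Algebra.TensorProduct.map (AlgHom.id A C) f : C ⊗[A] R →+* C ⊗[A] S) := by
  obtain ⟨hsurj, e, hfe, hker⟩ := hf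
  refine ⟨TensorProduct.map_surjective Function.surjective_id hsurj, 1 ⊗ₜ e, ?_, fun x hx ↦ ?_⟩
  · simp [show f e = 1 from hfe, Algebra.TensorProduct.one_def]
  have hexact := lTensor_exact C (LinearMap.exact_subtype_ker_map f.toLinearMap) hsurj
  obtain ⟨y, rfl⟩ := (hexact x).mp hx
  clear hx
  induction y with
  | zero => simp
  | add y z hy hz => rw [map_add, mul_add, hy, hz, add_zero]
  | tmul c y => simp [hker y y.2]

end IsDirectFactor

section FiniteEtale

variable (R S : Type*) [CommRing R] [IsDomain R] [CommRing S] [Algebra R S]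

theorem isFractionRing_tensorProduct_of_isIntegral (F : Type*) [Field F] [Algebra R F]
    [IsFractionRing R F] [Module.Flat R S] [Algebra.IsIntegral R S] :
    IsFractionRing S (S ⊗[R] F) := by
  have : IsLocalization (Algebra.algebraMapSubmonoid S R⁰) (S ⊗[R] F) := inferInstance
  refine (IsLocalization.iff_of_le_of_exists_dvd _ S⁰ ?_ fun s hs ↦ ?_).mp this
  · rintro _ ⟨r, hr, rfl⟩
    exact algebraMap_mem_nonZeroDivisors_of_flat hr
  · obtain ⟨r, hr, hsr⟩ :=
      (Algebra.IsIntegral.isIntegral (R := R) s).isAlgebraic.exists_nonzero_dvd hs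
    exact ⟨_, ⟨r, mem_nonZeroDivisors_of_ne_zero hr, rfl⟩, hsr⟩

theorem isReduced_of_etale [Algebra.Etale R S] : IsReduced S := by
  let F := FractionRing R
  have : IsReduced (F ⊗[R] S) := Algebra.FormallyUnramified.isReduced_of_field F (F ⊗[R] S)
  refine isReduced_of_injective (Algebra.TensorProduct.includeRight : S →ₐ[R] F ⊗[R] S) ?_
  exact Algebra.TensorProduct.includeRight_injective (IsFractionRing.injective R F)

theorem isIntegrallyClosed_of_smooth_of_isIntegral [IsIntegrallyClosed R] [Algebra.Smooth R S]
    [Algebra.IsIntegral R S] : IsIntegrallyClosed S := by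
  let F := FractionRing R
  have := isFractionRing_tensorProduct_of_isIntegral R S F
  refine (isIntegrallyClosed_iff (S ⊗[R] F)).mpr fun {x} hx ↦ ?_
  obtain ⟨y, hy⟩ :=
    (TensorProduct.toIntegralClosure_bijective_of_smooth (R := R) (B := F)).2 ⟨x, hx⟩
  obtain rfl : (TensorProduct.toIntegralClosure R S F y : S ⊗[R] F) = x := congrArg Subtype.val hy
  clear hy hx
  induction y with
  | zero => exact ⟨0, by simp⟩
  | add y z hy hz =>
    obtain ⟨s, hs⟩ := hy
    obtain ⟨t, ht⟩ := hz
    exact ⟨s + t, by rw [map_add, hs, ht, map_add]; rfl⟩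
  | tmul s z =>
    obtain ⟨r, hr⟩ := IsIntegrallyClosed.isIntegral_iff.mp z.2
    refine ⟨r • s, ?_⟩
    change (r • s) ⊗ₜ[R] 1 = s ⊗ₜ[R] z.1
    rw [← hr, TensorProduct.smul_tmul, Algebra.smul_def, mul_one]

theorem IsNormalRing.of_etale_of_isIntegral [IsIntegrallyClosed R] [Algebra.Etale R S]
    [Algebra.IsIntegral R S] : IsNormalRing S :=
  ⟨isReduced_of_etale R S, isIntegrallyClosed_of_smooth_of_isIntegral R S⟩

theorem IsNormalRing.tensorProduct_of_isSeparable (k L : Type*) [Field k] [Field L] [Algebra k L]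
    [FiniteDimensional k L] [Algebra.IsSeparable k L] [Algebra k R] [IsIntegrallyClosed R] :
    IsNormalRing (L ⊗[k] R) := by
  have : Algebra.FormallyEtale k L := .of_isSeparable k L
  have : Algebra.FinitePresentation k L := Algebra.FinitePresentation.of_finiteType.mp inferInstance
  have : Algebra.Etale k L := ⟨inferInstance, inferInstance⟩
  exact (of_etale_of_isIntegral R (R ⊗[k] L)).of_ringEquiv
    (Algebra.TensorProduct.comm k R L).toRingEquiv

end FiniteEtale

/-! ### Normality of power series rings -/

section PowerSeries

open PowerSeries

variable {R F : Type*} [CommRing R] [CommRing F] [Algebra R F]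

theorem mem_range_algebraMap_powerSeries_iff {f : F⟦X⟧} :
    f ∈ (algebraMap R⟦X⟧ F⟦X⟧).range ↔ ∀ n, coeff n f ∈ (algebraMap R F).range := by
  refine ⟨?_, fun h ↦ ?_⟩
  · rintro ⟨g, rfl⟩ n
    exact ⟨coeff n g, by rw [algebraMap_apply'', coeff_map]⟩
  · choose g hg using h
    exact ⟨mk g, by ext n; rw [algebraMap_apply'', coeff_map, coeff_mk, hg]⟩

theorem X_pow_mul_mem_range_algebraMap_powerSeries_iff {f : F⟦X⟧} (k : ℕ) :
    X ^ k * f ∈ (algebraMap R⟦X⟧ F⟦X⟧).range ↔ f ∈ (algebraMap R⟦X⟧ F⟦X⟧).range := by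
  refine ⟨fun h ↦ mem_range_algebraMap_powerSeries_iff.mpr fun n ↦ ?_, fun ⟨g, hg⟩ ↦
    ⟨X ^ k * g, by simp [algebraMap_apply'', ← hg]⟩⟩
  simpa [coeff_X_pow_mul] using mem_range_algebraMap_powerSeries_iff.mp h (n + k)

theorem isAlmostIntegral_constantCoeff [IsDomain R] {f : F⟦X⟧} (hf : IsAlmostIntegral R⟦X⟧ f) :
    IsAlmostIntegral R (constantCoeff f) := by
  obtain ⟨d, hd, hdf⟩ := hf
  refine ⟨constantCoeff d.divXPowOrder, mem_nonZeroDivisors_of_ne_zero fun h ↦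
    nonZeroDivisors.ne_zero hd (constantCoeff_divXPowOrder_eq_zero_iff.mp h), fun n ↦ ?_⟩
  obtain ⟨g, hg⟩ : d.divXPowOrder • f ^ n ∈ (algebraMap R⟦X⟧ F⟦X⟧).range := by
    rw [← X_pow_mul_mem_range_algebraMap_powerSeries_iff d.order.toNat]
    convert hdf n using 1
    conv_rhs => rw [← X_pow_order_mul_divXPowOrder (f := d)]
    simp [Algebra.smul_def, algebraMap_apply'', mul_assoc]
  refine ⟨constantCoeff g, ?_⟩
  have hmap (h : R⟦X⟧) : constantCoeff (algebraMap R⟦X⟧ F⟦X⟧ h) =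
      algebraMap R F (constantCoeff h) := by
    rw [algebraMap_apply'', ← coeff_zero_eq_constantCoeff_apply, coeff_map,
      coeff_zero_eq_constantCoeff_apply]
  rw [← hmap, hg, Algebra.smul_def, map_mul, map_pow, hmap, Algebra.smul_def]

theorem isAlmostIntegral_of_X_mul {f : F⟦X⟧} (hf : IsAlmostIntegral R⟦X⟧ (X * f)) :
    IsAlmostIntegral R⟦X⟧ f := by
  obtain ⟨d, hd, hdf⟩ := hf
  refine ⟨d, hd, fun n ↦ (X_pow_mul_mem_range_algebraMap_powerSeries_iff n).mp ?_⟩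
  rw [mul_smul_comm, ← mul_pow]
  exact hdf n

theorem mem_range_algebraMap_powerSeries_of_isAlmostIntegral [IsDomain R]
    (hRF : ∀ x : F, IsAlmostIntegral R x → x ∈ (algebraMap R F).range) {f : F⟦X⟧}
    (hf : IsAlmostIntegral R⟦X⟧ f) : f ∈ (algebraMap R⟦X⟧ F⟦X⟧).range := by
  refine mem_range_algebraMap_powerSeries_iff.mpr fun n ↦ ?_
  induction n generalizing f with
  | zero => simpa using hRF _ (isAlmostIntegral_constantCoeff hf)
  | succ n ih =>
    obtain ⟨c, hc⟩ := hRF _ (isAlmostIntegral_constantCoeff hf)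
    have hC : C (constantCoeff f) ∈ completeIntegralClosure R⟦X⟧ F⟦X⟧ := by
      have := (completeIntegralClosure R⟦X⟧ F⟦X⟧).algebraMap_mem (C c)
      rwa [algebraMap_apply'', map_C, hc] at this
    have hsub : IsAlmostIntegral R⟦X⟧ (f - C (constantCoeff f)) :=
      (completeIntegralClosure R⟦X⟧ F⟦X⟧).sub_mem hf hC
    rw [sub_const_eq_X_mul_shift] at hsub
    simpa using ih (isAlmostIntegral_of_X_mul hsub)

instance isIntegrallyClosed_powerSeries [IsNoetherianRing R] [IsDomain R]
    [IsIntegrallyClosed R] :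
    IsIntegrallyClosed R⟦X⟧ := by
  let F := FractionRing R
  let j : FractionRing R⟦X⟧ →+* FractionRing F⟦X⟧ := IsFractionRing.map
    (j := algebraMap R⟦X⟧ F⟦X⟧) (map_injective _ (IsFractionRing.injective R F))
  have hj (g : R⟦X⟧) : j (algebraMap _ _ g) = algebraMap _ _ (algebraMap R⟦X⟧ F⟦X⟧ g) :=
    IsLocalization.map_eq _ g
  refine (isIntegrallyClosed_iff (FractionRing R⟦X⟧)).mpr fun {x} hx ↦ ?_
  have hjx : IsIntegral F⟦X⟧ (j x) := by
    obtain ⟨q, hq, hqx⟩ := hx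
    refine ⟨q.map (algebraMap R⟦X⟧ F⟦X⟧), hq.map _, ?_⟩
    rw [Polynomial.eval₂_map, ← map_zero j, ← hqx, Polynomial.hom_eval₂]
    exact congrArg (Polynomial.eval₂ · (j x) q) (RingHom.ext fun g ↦ (hj g).symm)
  obtain ⟨f, hf⟩ := IsIntegrallyClosed.isIntegral_iff.mp hjx
  have hfai : IsAlmostIntegral R⟦X⟧ f := by
    obtain ⟨d, hd, hdx⟩ := hx.isAlmostIntegral
    refine ⟨d, hd, fun n ↦ ?_⟩
    obtain ⟨g, hg⟩ := hdx n
    refine ⟨g, IsFractionRing.injective F⟦X⟧ (FractionRing F⟦X⟧) ?_⟩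
    rw [← hj, hg, Algebra.smul_def, Algebra.smul_def, map_mul, map_pow, hj, ← hf, map_mul, map_pow]
  obtain ⟨g, rfl⟩ := mem_range_algebraMap_powerSeries_of_isAlmostIntegral (fun x hx ↦
    IsIntegrallyClosed.isIntegral_iff.mp hx.isIntegral) hfai
  exact ⟨g, j.injective (by rw [hj, hf])⟩

instance isIntegrallyClosed_mvPowerSeries_fin (n : ℕ) (K : Type*) [Field K] :
    IsIntegrallyClosed (MvPowerSeries (Fin n) K) := by
  induction n with
  | zero => exact .of_equiv (MvPowerSeries.isEmptyEquiv (σ := Fin 0) (R := K)).symm.toRingEquiv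
  | succ n ih =>
    have : IsDomain (MvPowerSeries (Fin n) K) := NoZeroDivisors.to_isDomain _
    exact .of_equiv (MvPowerSeries.finSuccEquiv K n).symm.toRingEquiv

end PowerSeries

/-! ### Completions -/

section AdicallyCompleteModules

variable {R : Type*} [CommRing R] (I : Ideal R)

theorem isPrecomplete_of_finite [IsPrecomplete I R] (N : Type*) [AddCommGroup N] [Module R N]
    [Module.Finite R N] : IsPrecomplete I N := by
  refine AdicCompletion.of_surjective_iff.mp fun y ↦ ?_
  obtain ⟨x, rfl⟩ := AdicCompletion.ofTensorProduct_surjective_of_finite I N y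
  induction x with
  | zero => exact ⟨0, by simp⟩
  | add x z hx hz =>
    obtain ⟨a, ha⟩ := hx
    obtain ⟨b, hb⟩ := hz
    exact ⟨a + b, by rw [map_add, map_add, ha, hb]⟩
  | tmul r x =>
    obtain ⟨r, rfl⟩ := AdicCompletion.of_surjective I R r
    exact ⟨r • x, by
      rw [AdicCompletion.ofTensorProduct_tmul, map_smul, ← algebraMap_smul (AdicCompletion I R)]
      rfl⟩

theorem isAdicComplete_of_finite [IsNoetherianRing R] [IsAdicComplete I R] (N : Type*)
    [AddCommGroup N] [Module R N] [Module.Finite R N] : IsAdicComplete I N where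
  toIsHausdorff := .of_le_jacobson I N (IsAdicComplete.le_jacobson_bot I)
  toIsPrecomplete := isPrecomplete_of_finite I N

attribute [local instance] Algebra.TensorProduct.rightAlgebra in
theorem isAdicComplete_tensorProduct_of_finite (C T : Type*) [CommRing C] [CommRing T] [Algebra R C]
    [Algebra R T] [Module.Finite R C] [IsNoetherianRing T] [IsAdicComplete I T] :
    IsAdicComplete I (C ⊗[R] T) := by
  have : IsAdicComplete (I.map (algebraMap R T)) T :=
    (IsAdicComplete.map_algebraMap_iff (S := T) _ _).mpr ‹_›
  have : Module.Finite T (C ⊗[R] T) := .of_equiv_equiv (A₁ := T) (B₁ := T ⊗[R] C)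
    (.refl T) (Algebra.TensorProduct.comm R T C).toRingEquiv (by ext; simp; rfl)
  exact (IsAdicComplete.map_algebraMap_iff (S := T) _ _).mp
    (isAdicComplete_of_finite (I.map (algebraMap R T)) (C ⊗[R] T))

end AdicallyCompleteModules

/-- `T` is the `M`-adic completion of `R`: it is `M`-adically complete and, for every `n`, the
projection `R → R ⧸ M ^ n` extends to `T` with kernel `M ^ n T`, so that `T ⧸ M ^ n T ≅ R ⧸ M ^ n`.
This covers `AdicCompletion M R` as well as power series rings over polynomial rings. -/
structure IsCompletionAt {R : Type*} [CommRing R] (M : Ideal R) (T : Type*) [CommRing T]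
    [Algebra R T] : Prop where
  isAdicComplete : IsAdicComplete M T
  exists_algHom_quotient_pow : ∀ n : ℕ, ∃ g : T →ₐ[R] R ⧸ M ^ n,
    RingHom.ker g = (M ^ n).map (algebraMap R T)

theorem map_map_algebraMap {R S T : Type*} [CommRing R] [CommRing S] [CommRing T] [Algebra R S]
    [Algebra R T] (f : S →ₐ[R] T) (I : Ideal R) :
    (I.map (algebraMap R S)).map f = I.map (algebraMap R T) := by
  rw [← AlgHom.comp_algebraMap f, ← Ideal.map_map]
  rfl

theorem map_mem_map_algebraMap {R S T : Type*} [CommRing R] [CommRing S] [CommRing T] [Algebra R S]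
    [Algebra R T] (f : S →ₐ[R] T) {I : Ideal R} {x : S} (hx : x ∈ I.map (algebraMap R S)) :
    f x ∈ I.map (algebraMap R T) :=
  map_map_algebraMap f I ▸ Ideal.mem_map_of_mem f hx

namespace IsCompletionAt

variable {R T : Type*} [CommRing R] {M : Ideal R} [CommRing T] [Algebra R T]

theorem adicCompletion (hM : M.FG) : IsCompletionAt M (AdicCompletion M R) where
  isAdicComplete := AdicCompletion.isAdicComplete hM
  exists_algHom_quotient_pow n := ⟨AdicCompletion.evalₐ M n, by
    have hker := AdicCompletion.pow_smul_top_eq_ker_eval (M := R) (n := n) hM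
    rw [Ideal.smul_top_eq_map] at hker
    ext x
    refine Iff.trans ?_ (SetLike.ext_iff.mp hker x).symm
    rw [RingHom.mem_ker, LinearMap.mem_ker]
    refine ⟨fun h ↦ ?_, fun h ↦ ?_⟩
    · rw [← AdicCompletion.factor_evalₐ_eq_eval M x (by simp), h, map_zero]
    · rw [← AdicCompletion.factor_eval_eq_evalₐ M x (by simp), h, map_zero]⟩

theorem isAdicComplete_map (h : IsCompletionAt M T) :
    IsAdicComplete (M.map (algebraMap R T)) T :=
  (IsAdicComplete.map_algebraMap_iff (S := T) _ _).mpr h.isAdicComplete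

theorem of_algEquiv {T' : Type*} [CommRing T'] [Algebra R T'] (h : IsCompletionAt M T)
    (e : T ≃ₐ[R] T') : IsCompletionAt M T' where
  isAdicComplete := by
    have := h.isAdicComplete_map
    rw [← IsAdicComplete.congr_ringEquiv _ e.toRingEquiv] at this
    rw [← IsAdicComplete.map_algebraMap_iff (S := T'), ← map_map_algebraMap e.toAlgHom]
    exact this
  exists_algHom_quotient_pow n := by
    obtain ⟨g, hg⟩ := h.exists_algHom_quotient_pow n
    refine ⟨g.comp e.symm, ?_⟩
    rw [← map_map_algebraMap e.toAlgHom, ← hg]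
    exact Ideal.comap_symm (I := RingHom.ker g) e.toRingEquiv

theorem mvPowerSeries (σ K : Type*) [Finite σ] [CommRing K] :
    IsCompletionAt (MvPolynomial.idealOfVars σ K) (MvPowerSeries σ K) :=
  (adicCompletion (MvPolynomial.idealOfVars_fg _ _)).of_algEquiv
    (MvPowerSeries.toAdicCompletionAlgEquiv σ K).symm

theorem algebraMap_mem_map_pow_iff (h : IsCompletionAt M T) {n : ℕ} {r : R} :
    algebraMap R T r ∈ (M ^ n).map (algebraMap R T) ↔ r ∈ M ^ n := by
  obtain ⟨g, hg⟩ := h.exists_algHom_quotient_pow n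
  rw [← hg, RingHom.mem_ker, AlgHom.commutes]
  exact Ideal.Quotient.eq_zero_iff_mem

theorem exists_sub_algebraMap_mem (h : IsCompletionAt M T) (n : ℕ) (t : T) :
    ∃ r, t - algebraMap R T r ∈ (M ^ n).map (algebraMap R T) := by
  obtain ⟨g, hg⟩ := h.exists_algHom_quotient_pow n
  obtain ⟨r, hr⟩ := Ideal.Quotient.mk_surjective (g t)
  refine ⟨r, ?_⟩
  rw [← hg, RingHom.mem_ker, map_sub, AlgHom.commutes, ← hr]
  exact sub_self _

theorem isMaximal_map (h : IsCompletionAt M T) [M.IsMaximal] :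
    (M.map (algebraMap R T)).IsMaximal := by
  obtain ⟨g, hg⟩ := h.exists_algHom_quotient_pow 1
  rw [← pow_one (M.map (algebraMap R T)), ← Ideal.map_pow, ← hg]
  have hM : (M ^ 1).IsMaximal := by rwa [pow_one]
  let := Ideal.Quotient.field (M ^ 1)
  exact RingHom.ker_isMaximal_of_surjective g fun y ↦
    let ⟨r, hr⟩ := Ideal.Quotient.mk_surjective y
    ⟨algebraMap R T r, (g.commutes r).trans hr⟩

theorem isUnit_iff_notMem (h : IsCompletionAt M T) [M.IsMaximal] {t : T} :
    IsUnit t ↔ t ∉ M.map (algebraMap R T) := by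
  have := h.isMaximal_map
  have := h.isAdicComplete_map
  have := isLocalRing_of_isAdicComplete_maximal (M.map (algebraMap R T))
  rw [IsLocalRing.eq_maximalIdeal h.isMaximal_map, IsLocalRing.notMem_maximalIdeal]

theorem isUnit_algebraMap_iff (h : IsCompletionAt M T) [M.IsMaximal] {r : R} :
    IsUnit (algebraMap R T r) ↔ r ∉ M := by
  rw [h.isUnit_iff_notMem, ← pow_one M, h.algebraMap_mem_map_pow_iff]

theorem exists_algHom (h : IsCompletionAt M T) {S : Type*} [CommRing S] [Algebra R S] (J : Ideal S)
    [IsAdicComplete J S] (hMJ : M.map (algebraMap R S) ≤ J) : Nonempty (T →ₐ[R] S) := by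
  choose g hg using h.exists_algHom_quotient_pow
  have hpow (n : ℕ) {r : R} (hr : r ∈ M ^ n) : algebraMap R S r ∈ J ^ n :=
    Ideal.pow_right_mono hMJ n (Ideal.map_pow (algebraMap R S) M n ▸ Ideal.mem_map_of_mem _ hr)
  let f (n : ℕ) : T →ₐ[R] S ⧸ J ^ n := (Ideal.Quotient.liftₐ (M ^ n) (Algebra.ofId R (S ⧸ J ^ n))
    fun r hr ↦ Ideal.Quotient.eq_zero_iff_mem.mpr (hpow n hr)).comp (g n)
  have hf (n : ℕ) (t : T) (r : R) (hr : t - algebraMap R T r ∈ (M ^ n).map (algebraMap R T)) :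
      f n t = algebraMap R (S ⧸ J ^ n) r := by
    rw [← sub_eq_zero, ← (f n).commutes, ← map_sub]
    rw [← hg, RingHom.mem_ker] at hr
    exact (congrArg _ hr).trans (map_zero _)
  refine ⟨IsAdicComplete.liftAlgHom J f fun {m n} hmn ↦ AlgHom.ext fun t ↦ ?_⟩
  obtain ⟨r, hr⟩ := h.exists_sub_algebraMap_mem n t
  rw [AlgHom.comp_apply, hf n t r hr, AlgHom.commutes,
    hf m t r (Ideal.map_mono (Ideal.pow_le_pow_right hmn) hr)]

-- Elements outside `M` are already units modulo `M ^ n`.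
theorem of_isLocalization_atPrime [M.IsMaximal] {A : Type*} [CommRing A] [IsLocalRing A]
    [Algebra R A] [IsLocalization.AtPrime A M] [Algebra A T] [IsScalarTower R A T]
    (h : IsCompletionAt (IsLocalRing.maximalIdeal A) T) : IsCompletionAt M T := by
  have hmap (n : ℕ) : (M ^ n).map (algebraMap R A) = IsLocalRing.maximalIdeal A ^ n := by
    rw [Ideal.map_pow, IsLocalization.AtPrime.map_eq_maximalIdeal M A]
  have hmap_one := hmap 1
  rw [pow_one, pow_one] at hmap_one
  refine ⟨(IsAdicComplete.map_algebraMap_iff (S := A) _ _).mp (hmap_one ▸ h.isAdicComplete),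
    fun n ↦ ?_⟩
  obtain ⟨g, hg⟩ := h.exists_algHom_quotient_pow n
  have hunit (s : M.primeCompl) : IsUnit (algebraMap R (R ⧸ M ^ n) s) := by
    obtain ⟨c, m, hm, hcm⟩ := Ideal.IsMaximal.exists_inv_pow M s.2 (n := n)
    refine .of_mul_eq_one_right (algebraMap R (R ⧸ M ^ n) c) ?_
    rw [← map_mul, ← map_one (algebraMap R (R ⧸ M ^ n)), ← hcm, map_add, left_eq_add]
    exact Ideal.Quotient.eq_zero_iff_mem.mpr hm
  let f : A →ₐ[R] R ⧸ M ^ n := IsLocalization.liftAlgHom (M := M.primeCompl)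
    (f := Algebra.ofId R (R ⧸ M ^ n)) hunit
  have hf (a : A) : f a = 0 ↔ a ∈ IsLocalRing.maximalIdeal A ^ n := by
    obtain ⟨r, s, rfl⟩ := IsLocalization.exists_mk'_eq M.primeCompl a
    have hfr : f (IsLocalization.mk' A r s) = 0 ↔ r ∈ M ^ n := by
      rw [← (hunit s).mul_left_eq_zero, ← f.commutes, ← map_mul, IsLocalization.mk'_spec,
        f.commutes]
      exact Ideal.Quotient.eq_zero_iff_mem
    rw [hfr, ← hmap, IsLocalization.mk'_mem_map_algebraMap_iff M.primeCompl]
    refine ⟨fun hr ↦ ⟨1, one_mem _, by rwa [one_mul]⟩, fun ⟨c, hc, hcr⟩ ↦ ?_⟩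
    rw [← Ideal.Quotient.eq_zero_iff_mem, map_mul] at hcr
    exact Ideal.Quotient.eq_zero_iff_mem.mp ((hunit ⟨c, hc⟩).mul_right_eq_zero.mp hcr)
  refine ⟨(Ideal.Quotient.liftₐ _ f fun a ha ↦ (hf a).mpr ha).comp (g.restrictScalars R), ?_⟩
  rw [IsScalarTower.algebraMap_eq R A T, ← Ideal.map_map, hmap, ← hg]
  ext t
  obtain ⟨a, ha⟩ := Ideal.Quotient.mk_surjective (g t)
  rw [RingHom.mem_ker, RingHom.mem_ker, ← ha, Ideal.Quotient.eq_zero_iff_mem, ← hf,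
    AlgHom.comp_apply, AlgHom.restrictScalars_apply, ← ha]
  rfl

theorem exists_sub_algebraMap_mem_tensorProduct (h : IsCompletionAt M T) {C : Type*} [CommRing C]
    [Algebra R C] (n : ℕ) (s : C ⊗[R] T) :
    ∃ c, s - algebraMap C (C ⊗[R] T) c ∈ (M ^ n).map (algebraMap R (C ⊗[R] T)) := by
  induction s with
  | zero => exact ⟨0, by simp⟩
  | add x y hx hy =>
    obtain ⟨a, ha⟩ := hx
    obtain ⟨b, hb⟩ := hy
    refine ⟨a + b, ?_⟩
    rw [map_add, add_sub_add_comm]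
    exact add_mem ha hb
  | tmul c t =>
    obtain ⟨r, hr⟩ := h.exists_sub_algebraMap_mem n t
    refine ⟨r • c, ?_⟩
    have hsub : c ⊗ₜ[R] t - algebraMap C (C ⊗[R] T) (r • c) =
        (c ⊗ₜ 1) * Algebra.TensorProduct.includeRight (t - algebraMap R T r) := by
      rw [Algebra.TensorProduct.algebraMap_apply, Algebra.algebraMap_self_apply,
        Algebra.TensorProduct.includeRight_apply, Algebra.TensorProduct.tmul_mul_tmul, mul_one,
        one_mul, TensorProduct.tmul_sub, TensorProduct.smul_tmul, Algebra.algebraMap_eq_smul_one]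
    rw [hsub]
    exact Ideal.mul_mem_left _ _
      (map_mem_map_algebraMap (Algebra.TensorProduct.includeRight : T →ₐ[R] C ⊗[R] T) hr)

theorem tensorProduct [IsNoetherianRing T] (h : IsCompletionAt M T) (C : Type*) [CommRing C]
    [Algebra R C] [Module.Finite R C] :
    IsCompletionAt (M.map (algebraMap R C)) (C ⊗[R] T) where
  isAdicComplete := by
    have := h.isAdicComplete
    exact (IsAdicComplete.map_algebraMap_iff (S := C) _ _).mpr
      (isAdicComplete_tensorProduct_of_finite M C T)
  exists_algHom_quotient_pow n := by
    rw [← Ideal.map_pow, Ideal.map_map, ← IsScalarTower.algebraMap_eq]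
    obtain ⟨g, -⟩ := h.exists_algHom_quotient_pow n
    let Q := C ⧸ (M ^ n).map (algebraMap R C)
    let π : R ⧸ M ^ n →ₐ[R] Q := Ideal.Quotient.liftₐ (M ^ n) (Algebra.ofId R Q) fun r hr ↦
      Ideal.Quotient.eq_zero_iff_mem.mpr (Ideal.mem_map_of_mem (algebraMap R C) hr)
    let f : C ⊗[R] T →ₐ[C] Q :=
      Algebra.TensorProduct.lift (Algebra.ofId C Q) (π.comp g) fun _ _ ↦ .all _ _
    have hle : (M ^ n).map (algebraMap R (C ⊗[R] T)) ≤ RingHom.ker f := by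
      refine Ideal.map_le_iff_le_comap.mpr fun r hr ↦ ?_
      rw [Ideal.mem_comap, RingHom.mem_ker, IsScalarTower.algebraMap_apply R C, f.commutes]
      exact Ideal.Quotient.eq_zero_iff_mem.mpr (Ideal.mem_map_of_mem (algebraMap R C) hr)
    refine ⟨f, le_antisymm (fun s hs ↦ ?_) hle⟩
    obtain ⟨c, hc⟩ := h.exists_sub_algebraMap_mem_tensorProduct n s
    have hfc : f (algebraMap C (C ⊗[R] T) c) = 0 := by
      rw [← sub_sub_cancel s (algebraMap C (C ⊗[R] T) c), map_sub, (RingHom.mem_ker).mp hs,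
        (RingHom.mem_ker).mp (hle hc), sub_zero]
    rw [f.commutes] at hfc
    rw [← sub_add_cancel s (algebraMap C (C ⊗[R] T) c)]
    exact add_mem hc (map_mem_map_algebraMap (IsScalarTower.toAlgHom R C (C ⊗[R] T))
      (Ideal.Quotient.eq_zero_iff_mem.mp hfc))

end IsCompletionAt

theorem exists_notMem_forall_pow_mul_mem {B : Type*} [CommRing B] (I M : Ideal B)
    [IsArtinianRing (B ⧸ I)] (hM : M ≠ ⊤) : ∃ c ∉ M, ∃ N : ℕ, ∀ x ∈ M ^ N, c * x ∈ I := by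
  let J := M.map (Ideal.Quotient.mk I)
  obtain ⟨N, hN⟩ := IsArtinian.monotone_stabilizes (R := B ⧸ I) (M := B ⧸ I)
    ⟨fun k ↦ OrderDual.toDual (J ^ k), fun _ _ ↦ Ideal.pow_le_pow_right⟩
  have hstable : J ^ N = J ^ (N + 1) := congrArg OrderDual.ofDual (hN (N + 1) N.le_succ)
  obtain ⟨r, hrJ, hr⟩ := Submodule.exists_mem_and_smul_eq_self_of_fg_of_le_smul J (J ^ N)
    (IsNoetherian.noetherian _) (by rw [smul_eq_mul, ← pow_succ', ← hstable])
  obtain ⟨r, hrM, rfl⟩ := (Ideal.mem_map_iff_of_surjective _ Ideal.Quotient.mk_surjective).mp hrJ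
  refine ⟨1 - r, fun h ↦ hM ((Ideal.eq_top_iff_one M).mpr (by simpa using add_mem h hrM)), N,
    fun x hx ↦ ?_⟩
  have hrx := hr (Ideal.Quotient.mk I x) (by rw [← Ideal.map_pow]; exact Ideal.mem_map_of_mem _ hx)
  rw [← Ideal.Quotient.eq_zero_iff_mem, map_mul, map_sub, map_one, sub_mul, one_mul, ← smul_eq_mul,
    hrx, sub_self]

theorem isArtinianRing_quotient_map_of_finite {P : Type*} (B : Type*) [CommRing P] [CommRing B]
    [Algebra P B] [Module.Finite P B] (m : Ideal P) [m.IsMaximal] :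
    IsArtinianRing (B ⧸ m.map (algebraMap P B)) := by
  let := Ideal.Quotient.field m
  have : Module.Finite (P ⧸ m) (B ⧸ m.map (algebraMap P B)) := .of_restrictScalars_finite P _ _
  exact .of_finite (P ⧸ m) _

theorem isNoetherianRing_tensorProduct_of_finite (P B O : Type*) [CommRing P] [CommRing B]
    [CommRing O] [Algebra P B] [Algebra P O] [Module.Finite P B] [IsNoetherianRing O] :
    IsNoetherianRing (B ⊗[P] O) :=
  have : IsNoetherianRing (O ⊗[P] B) := .of_finite O _
  isNoetherianRing_of_ringEquiv _ (Algebra.TensorProduct.comm P O B).toRingEquiv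

/-- The comparison map `B ⊗[P] O → T` of completions, where `O` and `T` stand for the completions of
`P` and of a finite `P`-algebra `B`, and `f : O → T` is the induced map. -/
def comparisonMap {P O : Type*} (B : Type*) {T : Type*} [CommRing P] [CommRing O] [CommRing B]
    [CommRing T] [Algebra P O] [Algebra P B] [Algebra B T] [Algebra P T] [IsScalarTower P B T]
    (f : O →ₐ[P] T) : B ⊗[P] O →ₐ[B] T :=
  Algebra.TensorProduct.lift (Algebra.ofId B T) f fun _ _ ↦ .all _ _

section Comparison

variable {P O B T : Type*} [CommRing P] [CommRing O] [CommRing B] [CommRing T] [Algebra P O]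
  [Algebra P B] [Algebra B T] [Algebra P T] [IsScalarTower P B T] {m : Ideal P} {M : Ideal B}

theorem IsCompletionAt.nonempty_algHom (hO : IsCompletionAt m O) (hT : IsCompletionAt M T)
    (hmM : m.map (algebraMap P B) ≤ M) : Nonempty (O →ₐ[P] T) := by
  have := hT.isAdicComplete_map
  refine hO.exists_algHom (M.map (algebraMap B T)) ?_
  rw [IsScalarTower.algebraMap_eq P B T, ← Ideal.map_map]
  exact Ideal.map_mono hmM

theorem algebraMap_pow_mul_mem_of_comparisonMap_eq_zero (hO : IsCompletionAt m O)
    (hT : IsCompletionAt M T) (hmM : m.map (algebraMap P B) ≤ M) (f : O →ₐ[P] T) {c : B} {N : ℕ}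
    (hc : ∀ x ∈ M ^ N, c * x ∈ m.map (algebraMap P B)) {s : B ⊗[P] O}
    (hs : comparisonMap B f s = 0) (k : ℕ) :
    algebraMap B (B ⊗[P] O) c ^ k * s ∈ (m ^ k).map (algebraMap P (B ⊗[P] O)) := by
  have hpow {x : B} (hx : x ∈ (M ^ N) ^ k) : c ^ k * x ∈ (m ^ k).map (algebraMap P B) := by
    have hle : Ideal.span {c} * M ^ N ≤ m.map (algebraMap P B) :=
      Ideal.span_singleton_mul_le_iff.mpr hc
    rw [Ideal.map_pow]
    refine Ideal.pow_right_mono hle k ?_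
    rw [mul_pow, Ideal.span_singleton_pow]
    exact Ideal.mul_mem_mul (Ideal.mem_span_singleton_self _) hx
  obtain ⟨b, hb⟩ := hO.exists_sub_algebraMap_mem_tensorProduct (N * k + k) s
  have hbM : b ∈ (M ^ N) ^ k := by
    have hb' := map_mem_map_algebraMap ((comparisonMap B f).restrictScalars P) hb
    rw [AlgHom.restrictScalars_apply, map_sub, hs, zero_sub, neg_mem_iff, AlgHom.commutes,
      IsScalarTower.algebraMap_eq P B T, ← Ideal.map_map] at hb'
    rw [← pow_mul]
    refine Ideal.pow_le_pow_right (Nat.le_add_right _ k) (hT.algebraMap_mem_map_pow_iff.mp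
      (Ideal.map_mono ?_ hb'))
    rw [Ideal.map_pow]
    exact Ideal.pow_right_mono hmM _
  rw [← sub_add_cancel s (algebraMap B (B ⊗[P] O) b), mul_add, ← map_pow, ← map_mul]
  exact add_mem (Ideal.mul_mem_left _ _ (Ideal.map_mono (Ideal.pow_le_pow_right (by lia)) hb))
    (map_mem_map_algebraMap (IsScalarTower.toAlgHom P B (B ⊗[P] O)) (hpow hbM))

theorem comparisonMap_surjective [IsNoetherianRing O] [Module.Finite P B] [m.IsMaximal]
    [M.IsMaximal] (hO : IsCompletionAt m O) (hT : IsCompletionAt M T)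
    (hmM : m.map (algebraMap P B) ≤ M) (f : O →ₐ[P] T) :
    Function.Surjective (comparisonMap B f) := by
  have := isArtinianRing_quotient_map_of_finite B m
  obtain ⟨c, hcM, N, hc⟩ :=
    exists_notMem_forall_pow_mul_mem (m.map (algebraMap P B)) M (Ideal.IsMaximal.ne_top ‹_›)
  have hle : (M ^ N).map (algebraMap B T) ≤ m.map (algebraMap P T) := by
    refine Ideal.map_le_iff_le_comap.mpr fun x hx ↦ ?_
    have hcx := Ideal.mem_map_of_mem (algebraMap B T) (hc x hx)
    rw [Ideal.map_map, ← IsScalarTower.algebraMap_eq, map_mul] at hcx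
    exact (Ideal.unit_mul_mem_iff_mem _ (hT.isUnit_algebraMap_iff.mpr hcM)).mp hcx
  have := hO.isAdicComplete
  have := hT.isAdicComplete
  have := isAdicComplete_tensorProduct_of_finite m B O
  have : IsHausdorff m T := .of_map (S := B) hmM
  refine surjective_of_mkQ_comp_surjective (I := m)
    (f := ((comparisonMap B f).restrictScalars P).toLinearMap) fun q ↦ ?_
  obtain ⟨t, rfl⟩ := Submodule.mkQ_surjective _ q
  obtain ⟨b, hb⟩ := hT.exists_sub_algebraMap_mem N t
  refine ⟨algebraMap B _ b, ((Submodule.Quotient.eq _).mpr ?_).symm⟩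
  rw [Ideal.smul_top_eq_map]
  change t - comparisonMap B f (algebraMap B _ b) ∈ _
  rw [AlgHom.commutes]
  exact hle hb

theorem comparisonMap_bijective_of_pow_le [IsNoetherianRing O] [Module.Finite P B] [m.IsMaximal]
    [M.IsMaximal] (hO : IsCompletionAt m O) (hT : IsCompletionAt M T)
    (hmM : m.map (algebraMap P B) ≤ M) (f : O →ₐ[P] T) {N : ℕ}
    (hN : M ^ N ≤ m.map (algebraMap P B)) : Function.Bijective (comparisonMap B f) := by
  refine ⟨(injective_iff_map_eq_zero _).mpr fun s hs ↦ ?_, comparisonMap_surjective hO hT hmM f⟩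
  have := hO.isAdicComplete
  have := isAdicComplete_tensorProduct_of_finite m B O
  refine IsHausdorff.haus (I := m) inferInstance s fun k ↦ ?_
  rw [SModEq.zero, Ideal.smul_top_eq_map]
  have hk := algebraMap_pow_mul_mem_of_comparisonMap_eq_zero hO hT hmM f (c := 1)
    (fun x hx ↦ by simpa only [one_mul] using hN hx) hs k
  rwa [map_one, one_pow, one_mul] at hk

theorem exists_isUnit_comparisonMap_mul_eq_zero [IsNoetherianRing O] [Module.Finite P B]
    [m.IsMaximal] [M.IsMaximal] (hO : IsCompletionAt m O) (hT : IsCompletionAt M T)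
    (hmM : m.map (algebraMap P B) ≤ M) (f : O →ₐ[P] T) :
    ∃ t, IsUnit (comparisonMap B f t) ∧ ∀ s, comparisonMap B f s = 0 → t * s = 0 := by
  have := isArtinianRing_quotient_map_of_finite B m
  obtain ⟨c, hcM, N, hc⟩ :=
    exists_notMem_forall_pow_mul_mem (m.map (algebraMap P B)) M (Ideal.IsMaximal.ne_top ‹_›)
  have := isNoetherianRing_tensorProduct_of_finite P B O
  let φ := comparisonMap B f
  have := hT.isMaximal_map
  let 𝔫 : PrimeSpectrum (B ⊗[P] O) := ⟨(M.map (algebraMap B T)).comap φ, Ideal.comap_isPrime _ _⟩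
  let L := Localization.AtPrime 𝔫.asIdeal
  have hcunit : IsUnit (algebraMap (B ⊗[P] O) L (algebraMap B (B ⊗[P] O) c)) :=
    IsLocalization.map_units L (⟨_, fun h ↦ hT.isUnit_iff_notMem.mp
      (hT.isUnit_algebraMap_iff.mpr hcM) (φ.commutes c ▸ h)⟩ : 𝔫.asIdeal.primeCompl)
  have hm𝔫 : m.map (algebraMap P (B ⊗[P] O)) ≤ 𝔫.asIdeal := by
    refine Ideal.map_le_iff_le_comap.mpr fun p hp ↦ ?_
    rw [Ideal.mem_comap, IsScalarTower.algebraMap_apply P B]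
    change φ _ ∈ M.map (algebraMap B T)
    rw [φ.commutes]
    exact Ideal.mem_map_of_mem _ (hmM (Ideal.mem_map_of_mem _ hp))
  have hzero (s : B ⊗[P] O) (hs : φ s = 0) : algebraMap (B ⊗[P] O) L s = 0 := by
    rw [← Ideal.mem_bot, ← Ideal.iInf_pow_eq_bot_of_isLocalRing (IsLocalRing.maximalIdeal L)
      Ideal.IsPrime.ne_top', Ideal.mem_iInf]
    intro k
    have hk := Ideal.mem_map_of_mem (algebraMap _ L)
      (algebraMap_pow_mul_mem_of_comparisonMap_eq_zero hO hT hmM f hc hs k)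
    rw [map_mul, map_pow, Ideal.unit_mul_mem_iff_mem _ (hcunit.pow k)] at hk
    rw [← Localization.AtPrime.map_eq_maximalIdeal, ← Ideal.map_pow]
    refine Ideal.map_mono ?_ hk
    rw [Ideal.map_pow]
    exact Ideal.pow_right_mono hm𝔫 k
  have hsupp : 𝔫 ∉ Module.support (B ⊗[P] O) (RingHom.ker φ) := by
    refine Module.notMem_support_iff'.mpr fun s ↦ ?_
    obtain ⟨t, ht⟩ := (IsLocalization.map_eq_zero_iff 𝔫.asIdeal.primeCompl L s.1).mp (hzero s s.2)
    exact ⟨t, t.2, Subtype.ext ht⟩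
  rw [Module.mem_support_iff_of_finite, SetLike.not_le_iff_exists] at hsupp
  obtain ⟨t, ht, ht𝔫⟩ := hsupp
  exact ⟨t, hT.isUnit_iff_notMem.mpr ht𝔫, fun s hs ↦
    congrArg Subtype.val (Module.mem_annihilator.mp ht ⟨s, hs⟩)⟩

theorem isDirectFactor_comparisonMap [IsNoetherianRing O] [Module.Finite P B] [m.IsMaximal]
    [M.IsMaximal] (hO : IsCompletionAt m O) (hT : IsCompletionAt M T)
    (hmM : m.map (algebraMap P B) ≤ M) (f : O →ₐ[P] T) :
    IsDirectFactor (comparisonMap B f : B ⊗[P] O →+* T) := by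
  have hsurj := comparisonMap_surjective hO hT hmM f
  obtain ⟨t, ⟨u, hu⟩, ht⟩ := exists_isUnit_comparisonMap_mul_eq_zero hO hT hmM f
  obtain ⟨v, hv⟩ := hsurj ↑u⁻¹
  refine ⟨hsurj, v * t, ?_, fun s hs ↦ by rw [mul_assoc, ht s hs, mul_zero]⟩
  change comparisonMap B f (v * t) = 1
  rw [map_mul, hv, ← hu, Units.inv_mul]

end Comparison

/-! ### Purely inseparable descent for polynomial rings -/

section PurelyInseparable

open MvPolynomial

theorem isSeparable_of_coeffs_minpoly_mem_range {E F Ω : Type*} [Field E] [Field F] [Field Ω]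
    [Algebra E Ω] [Algebra F Ω] {a : Ω} (ha : IsSeparable E a)
    (h : ∀ c ∈ (minpoly E a).coeffs, algebraMap E Ω c ∈ (algebraMap F Ω).range) :
    IsSeparable F a := by
  have hlifts : (minpoly E a).map (algebraMap E Ω) ∈ Polynomial.lifts (algebraMap F Ω) := by
    rw [Polynomial.lifts_iff_coeff_lifts]
    intro i
    rw [Polynomial.coeff_map]
    by_cases hi : (minpoly E a).coeff i = 0
    · exact ⟨0, by rw [hi, map_zero, map_zero]⟩
    · exact h _ (Polynomial.mem_coeffs_iff.mpr ⟨i, Polynomial.mem_support_iff.mpr hi, rfl⟩)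
  obtain ⟨f, hf⟩ := (Polynomial.mem_lifts _).mp hlifts
  have hfsep : f.Separable := by
    rwa [← Polynomial.separable_map (algebraMap F Ω), hf, Polynomial.separable_map]
  refine hfsep.of_dvd (minpoly.dvd _ _ ?_)
  rw [← Polynomial.eval_map_algebraMap, hf, Polynomial.eval_map_algebraMap, minpoly.aeval]

theorem exists_forall_pow_mem_range_of_mem_perfectClosure {k Ω : Type*} [Field k] [Field Ω]
    [Algebra k Ω] (p : ℕ) [ExpChar k p] (C : Finset Ω) (hC : ∀ c ∈ C, c ∈ perfectClosure k Ω) :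
    ∃ e : ℕ, ∀ c ∈ C, c ^ p ^ e ∈ (algebraMap k Ω).range := by
  choose! e he using fun c hc ↦ (mem_perfectClosure_iff_pow_mem p).mp (hC c hc)
  refine ⟨C.sup e, fun c hc ↦ ?_⟩
  rw [← Nat.add_sub_cancel' (Finset.le_sup hc), pow_add, pow_mul]
  exact pow_mem (he c hc) _

theorem exists_intermediateField_forall_exists_pow_eq {K Ω : Type*} [Field K] [Field Ω]
    [Algebra K Ω] [IsAlgClosed Ω] {q : ℕ} (hq : 0 < q) (s : Finset K) :
    ∃ K' : IntermediateField K Ω, FiniteDimensional K K' ∧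
      ∀ b ∈ s, ∃ r : K', (r : Ω) ^ q = algebraMap K Ω b := by
  classical
  choose root hroot using fun b : K ↦ IsAlgClosed.exists_pow_nat_eq (algebraMap K Ω b) hq
  refine ⟨IntermediateField.adjoin K (s.image root : Finset Ω),
    IntermediateField.finiteDimensional_adjoin fun x hx ↦ ?_, fun b hb ↦ ⟨⟨root b,
      IntermediateField.subset_adjoin K _ (Finset.mem_image_of_mem root hb)⟩, hroot b⟩⟩
  obtain ⟨b, -, rfl⟩ := Finset.mem_image.mp hx
  exact .of_pow hq (hroot b ▸ isIntegral_algebraMap)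

theorem exists_aeval_pow_expChar_pow_eq {σ K Ω : Type*} [Field K] [Field Ω] [Algebra K Ω]
    [Algebra (MvPolynomial σ K) Ω] [IsScalarTower K (MvPolynomial σ K) Ω] (p e : ℕ) [ExpChar Ω p]
    (y : σ → Ω) (hy : ∀ i, y i ^ p ^ e = algebraMap (MvPolynomial σ K) Ω (X i))
    (K' : IntermediateField K Ω) (f : MvPolynomial σ K)
    (hf : ∀ j ∈ f.support, ∃ r : K', (r : Ω) ^ p ^ e = algebraMap K Ω (f.coeff j)) :
    ∃ f' : MvPolynomial σ K', aeval y f' ^ p ^ e = algebraMap (MvPolynomial σ K) Ω f := by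
  choose! r hr using hf
  refine ⟨∑ j ∈ f.support, monomial j (r j), ?_⟩
  rw [← iterateFrobenius_def, map_sum, map_sum]
  conv_rhs => rw [f.as_sum, map_sum]
  refine Finset.sum_congr rfl fun j hj ↦ ?_
  rw [aeval_monomial, iterateFrobenius_def, mul_pow, monomial_eq, map_mul]
  congr 1
  · rw [← algebraMap_eq, ← IsScalarTower.algebraMap_apply]
    exact hr j hj
  · rw [Finsupp.prod, Finsupp.prod, ← Finset.prod_pow, map_prod]
    refine Finset.prod_congr rfl fun i _ ↦ ?_
    rw [map_pow, ← hy, ← pow_mul, ← pow_mul, mul_comm]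

theorem exists_aeval_div_aeval_eq_of_mem_perfectClosure {σ K k Ω : Type*} [Field K] [Field k]
    [Field Ω] [Algebra K Ω] [Algebra (MvPolynomial σ K) k] [IsFractionRing (MvPolynomial σ K) k]
    [Algebra (MvPolynomial σ K) Ω] [IsScalarTower K (MvPolynomial σ K) Ω] [Algebra k Ω]
    [IsScalarTower (MvPolynomial σ K) k Ω] [IsAlgClosed Ω] (C : Finset Ω)
    (hC : ∀ c ∈ C, c ∈ perfectClosure k Ω) :
    ∃ K' : IntermediateField K Ω, FiniteDimensional K K' ∧ ∃ q : ℕ, 0 < q ∧ ∃ y : σ → Ω,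
      (∀ i, y i ^ q = algebraMap (MvPolynomial σ K) Ω (X i)) ∧
      ∀ c ∈ C, ∃ G H : MvPolynomial σ K', c = aeval y G / aeval y H := by
  classical
  let p := ringExpChar k
  have : ExpChar Ω p := expChar_of_injective_algebraMap (algebraMap k Ω).injective p
  obtain ⟨e, he⟩ := exists_forall_pow_mem_range_of_mem_perfectClosure p C hC
  have hfrac (c : Ω) (hc : c ∈ C) : ∃ g h : MvPolynomial σ K, c ^ p ^ e =
      algebraMap (MvPolynomial σ K) Ω g / algebraMap (MvPolynomial σ K) Ω h := by
    obtain ⟨x, hx⟩ := he c hc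
    obtain ⟨g, h, -, rfl⟩ := IsFractionRing.div_surjective (A := MvPolynomial σ K) x
    refine ⟨g, h, ?_⟩
    rw [← hx, map_div₀, ← IsScalarTower.algebraMap_apply, ← IsScalarTower.algebraMap_apply]
  choose! g h hgh using hfrac
  have hq : 0 < p ^ e := pow_pos (expChar_pos k p) e
  obtain ⟨K', hK', hroot⟩ := exists_intermediateField_forall_exists_pow_eq (Ω := Ω) hq
    (C.biUnion fun c ↦ (g c).support.image (g c).coeff ∪ (h c).support.image (h c).coeff)
  choose y hy using fun i ↦
    IsAlgClosed.exists_pow_nat_eq (algebraMap (MvPolynomial σ K) Ω (X i)) hq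
  refine ⟨K', hK', p ^ e, hq, y, hy, fun c hc ↦ ?_⟩
  obtain ⟨G, hG⟩ := exists_aeval_pow_expChar_pow_eq p e y hy K' (g c) fun j hj ↦ hroot _
    (Finset.mem_biUnion.mpr ⟨c, hc, Finset.mem_union_left _ (Finset.mem_image_of_mem _ hj)⟩)
  obtain ⟨H, hH⟩ := exists_aeval_pow_expChar_pow_eq p e y hy K' (h c) fun j hj ↦ hroot _
    (Finset.mem_biUnion.mpr ⟨c, hc, Finset.mem_union_right _ (Finset.mem_image_of_mem _ hj)⟩)
  refine ⟨G, H, iterateFrobenius_inj Ω p e ?_⟩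
  rw [iterateFrobenius_def, iterateFrobenius_def, hgh c hc, ← hG, ← hH, div_pow]

theorem finite_aeval_aeval_X {σ K K' : Type*} [Finite σ] [Field K] [Field K'] [Algebra K K']
    [FiniteDimensional K K'] {f : σ → Polynomial K} (hf : ∀ i, (f i).Monic)
    (hdeg : ∀ i, 0 < (f i).natDegree) :
    (aeval fun i ↦ (f i).aeval (X i) : MvPolynomial σ K →ₐ[K] MvPolynomial σ K').Finite := by
  set φ : MvPolynomial σ K →ₐ[K] MvPolynomial σ K' := aeval fun i ↦ (f i).aeval (X i)
  have hcomp : φ.toRingHom.comp (algebraMap K _) = algebraMap K (MvPolynomial σ K') :=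
    φ.comp_algebraMap
  refine RingHom.IsIntegral.to_finite (f := φ.toRingHom) (fun x ↦ ?_)
    (.of_comp_finiteType (f := algebraMap K _) ?_)
  · induction x using MvPolynomial.induction_on with
    | C a =>
      obtain ⟨g, hg, hga⟩ := (Algebra.IsIntegral.isIntegral (R := K) a).map
        (IsScalarTower.toAlgHom K K' (MvPolynomial σ K'))
      refine ⟨g.map (algebraMap K _), hg.map _, ?_⟩
      rw [Polynomial.eval₂_map, hcomp]
      exact hga
    | add x y hx hy => exact RingHom.IsIntegralElem.add _ hx hy
    | mul_X x i hx =>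
      have hmonic := (hf i).map (algebraMap K (MvPolynomial σ K))
      refine RingHom.IsIntegralElem.mul _ hx
        ⟨(f i).map (algebraMap K _) - Polynomial.C (X i), hmonic.sub_of_left ?_, ?_⟩
      · refine Polynomial.degree_C_le.trans_lt ?_
        rw [Polynomial.degree_eq_natDegree hmonic.ne_zero, (hf i).natDegree_map]
        exact_mod_cast hdeg i
      · have hXi : φ.toRingHom (X i) = (f i).aeval (X i) := aeval_X _ i
        rw [Polynomial.eval₂_sub, Polynomial.eval₂_C, Polynomial.eval₂_map, hcomp, hXi,
          Polynomial.aeval_def, sub_self]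
  · rw [hcomp, RingHom.finiteType_algebraMap]
    exact .trans (S := K') inferInstance inferInstance

theorem finite_aeval_X_pow {σ K K' : Type*} [Finite σ] [Field K] [Field K'] [Algebra K K']
    [FiniteDimensional K K'] {q : ℕ} (hq : 0 < q) :
    (aeval fun i ↦ X i ^ q : MvPolynomial σ K →ₐ[K] MvPolynomial σ K').Finite := by
  simpa only [map_pow, Polynomial.aeval_X] using finite_aeval_aeval_X (σ := σ) (K := K) (K' := K')
    (f := fun _ ↦ Polynomial.X ^ q) (fun _ ↦ Polynomial.monic_X_pow q)
    (fun _ ↦ by rwa [Polynomial.natDegree_X_pow])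

end PurelyInseparable

section RootCover

open MvPolynomial

/-- `P'` is a root cover of the polynomial ring `K[x₁, …, xₙ]`: a finite extension which is itself
a polynomial ring `K'[y₁, …, yₙ]` over a field, with `xᵢ = yᵢ ^ q` for some `q > 0`. Such covers
absorb the inseparability of finite extensions of `K(x₁, …, xₙ)`. -/
structure IsRootCover (n : ℕ) (K : Type u) [Field K] (P' : Type w) [CommRing P']
    [Algebra (MvPolynomial (Fin n) K) P'] : Prop where
  finite : Module.Finite (MvPolynomial (Fin n) K) P'
  exists_ringEquiv : ∃ (K' : Type w) (_ : Field K') (e : P' ≃+* MvPolynomial (Fin n) K') (q : ℕ),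
    0 < q ∧ ∀ i, e (algebraMap (MvPolynomial (Fin n) K) P' (X i)) = X i ^ q

section

variable {n : ℕ} {K : Type u} {Ω : Type w} [Field K] [Field Ω] [Algebra K Ω]
  [Algebra (MvPolynomial (Fin n) K) Ω] [IsScalarTower K (MvPolynomial (Fin n) K) Ω]

theorem aeval_aeval_X_pow (K' : IntermediateField K Ω) {q : ℕ} {y : Fin n → Ω}
    (hy : ∀ i, y i ^ q = algebraMap (MvPolynomial (Fin n) K) Ω (X i)) (f : MvPolynomial (Fin n) K) :
    aeval y (aeval (fun i ↦ X i ^ q : Fin n → MvPolynomial (Fin n) K') f) =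
      algebraMap (MvPolynomial (Fin n) K) Ω f := by
  have hcomp : ((aeval y).restrictScalars K).comp
      (aeval (fun i ↦ X i ^ q : Fin n → MvPolynomial (Fin n) K')) =
      IsScalarTower.toAlgHom K (MvPolynomial (Fin n) K) Ω := by
    ext i
    simp [hy]
  exact DFunLike.congr_fun hcomp f

/-- The subring `K'[y₁, …, yₙ]` of `Ω`, as an algebra over `K[x₁, …, xₙ]` where `xᵢ = yᵢ ^ q`. -/
def rootSubalgebra (K' : IntermediateField K Ω) {q : ℕ} {y : Fin n → Ω}
    (hy : ∀ i, y i ^ q = algebraMap (MvPolynomial (Fin n) K) Ω (X i)) :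
    Subalgebra (MvPolynomial (Fin n) K) Ω :=
  { (aeval (R := K') y).range.toSubsemiring with
    algebraMap_mem' := fun f ↦ ⟨_, aeval_aeval_X_pow K' hy f⟩ }

theorem isRootCover_rootSubalgebra [FaithfulSMul (MvPolynomial (Fin n) K) Ω]
    (K' : IntermediateField K Ω) [FiniteDimensional K K'] {q : ℕ} (hq : 0 < q) {y : Fin n → Ω}
    (hy : ∀ i, y i ^ q = algebraMap (MvPolynomial (Fin n) K) Ω (X i)) :
    IsRootCover n K (rootSubalgebra K' hy) := by
  let φ : MvPolynomial (Fin n) K →ₐ[K] MvPolynomial (Fin n) K' := aeval fun i ↦ X i ^ q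
  let ψ : MvPolynomial (Fin n) K' →ₐ[K'] Ω := aeval y
  have hφ : φ.Finite := finite_aeval_X_pow hq
  have hψφ (f) : ψ (φ f) = algebraMap _ Ω f := aeval_aeval_X_pow K' hy f
  have hinj := FaithfulSMul.algebraMap_injective (MvPolynomial (Fin n) K) Ω
  have hψ : Function.Injective ψ := by
    let := φ.toRingHom.toAlgebra
    have : Algebra.IsIntegral (MvPolynomial (Fin n) K) (MvPolynomial (Fin n) K') :=
      ⟨hφ.to_isIntegral⟩
    refine (RingHom.injective_iff_ker_eq_bot ψ.toRingHom).mpr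
      (Ideal.eq_bot_of_comap_eq_bot (R := MvPolynomial (Fin n) K) (eq_bot_iff.mpr fun f hf ↦ ?_))
    have hf0 : ψ (φ f) = 0 := hf
    rwa [hψφ, map_eq_zero_iff _ hinj] at hf0
  let e : MvPolynomial (Fin n) K' ≃+* rootSubalgebra K' hy :=
    (AlgEquiv.ofInjective ψ hψ).toRingEquiv
  have he (f) : algebraMap _ (rootSubalgebra K' hy) f = e (φ f) := Subtype.ext (hψφ f).symm
  refine ⟨RingHom.finite_algebraMap.mp ?_, K', inferInstance, e.symm, q, hq, fun i ↦ ?_⟩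
  · rw [show algebraMap _ _ = (e : _ →+* _).comp φ.toRingHom from RingHom.ext he]
    exact (RingHom.Finite.of_surjective _ e.surjective).comp hφ
  · rw [he, e.symm_apply_apply, aeval_X]

end

theorem exists_isRootCover_forall_isSeparable (n : ℕ) (K : Type u) (k : Type v) (Ω : Type w)
    [Field K] [Field k] [Field Ω] [Algebra (MvPolynomial (Fin n) K) k]
    [IsFractionRing (MvPolynomial (Fin n) K) k] [Algebra (MvPolynomial (Fin n) K) Ω] [Algebra k Ω]
    [IsScalarTower (MvPolynomial (Fin n) K) k Ω] [IsAlgClosed Ω] [Algebra.IsAlgebraic k Ω]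
    (s : Finset Ω) :
    ∃ P' : Subalgebra (MvPolynomial (Fin n) K) Ω, IsRootCover n K P' ∧
      ∀ (F : Type w) [Field F] [Algebra P' F] [Algebra F Ω] [IsScalarTower P' F Ω],
        ∀ a ∈ s, IsSeparable F a := by
  classical
  let : Algebra K Ω := ((algebraMap (MvPolynomial (Fin n) K) Ω).comp C).toAlgebra
  have : IsScalarTower K (MvPolynomial (Fin n) K) Ω := .of_algebraMap_eq' rfl
  have : FaithfulSMul (MvPolynomial (Fin n) K) k :=
    (faithfulSMul_iff_algebraMap_injective _ _).mpr (IsFractionRing.injective _ k)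
  have : FaithfulSMul (MvPolynomial (Fin n) K) Ω := .trans _ k _
  let E := perfectClosure k Ω
  have : Algebra.IsAlgebraic E Ω := .tower_top (K := k) E
  obtain ⟨K', _, q, hq, y, hy, hfrac⟩ := exists_aeval_div_aeval_eq_of_mem_perfectClosure
    (σ := Fin n) (K := K) (k := k) (Ω := Ω)
    (s.biUnion fun a ↦ (minpoly E a).coeffs.image (algebraMap E Ω))
    (by
      simp only [Finset.mem_biUnion, Finset.mem_image]
      rintro _ ⟨-, -, c, -, rfl⟩
      exact c.2)
  refine ⟨rootSubalgebra K' hy, isRootCover_rootSubalgebra K' hq hy, fun F _ _ _ _ a ha ↦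
    isSeparable_of_coeffs_minpoly_mem_range (Algebra.IsSeparable.isSeparable E a) fun c hc ↦ ?_⟩
  obtain ⟨G, H, hGH⟩ := hfrac _ (Finset.mem_biUnion.mpr ⟨a, ha, Finset.mem_image_of_mem _ hc⟩)
  let toField (f : MvPolynomial (Fin n) K') : F :=
    algebraMap (rootSubalgebra K' hy) F ⟨aeval y f, f, rfl⟩
  have htoField (f) : algebraMap F Ω (toField f) = aeval y f :=
    (IsScalarTower.algebraMap_apply (rootSubalgebra K' hy) F Ω _).symm
  exact ⟨toField G / toField H, by rw [map_div₀, htoField, htoField, hGH]⟩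

theorem exists_intermediateField_isSeparable_of_basis {P k L F Ω ι : Type*} [CommRing P] [Field k]
    [Field L] [Field F] [Field Ω] [Algebra P k] [IsFractionRing P k] [Algebra k L] [Algebra P F]
    [Algebra F Ω] [Algebra P Ω] [Algebra k Ω] [Algebra L Ω] [IsScalarTower P F Ω]
    [IsScalarTower P k Ω] [IsScalarTower k L Ω] [Finite ι] (b : Module.Basis ι k L)
    (hb : ∀ i, IsSeparable F (algebraMap L Ω (b i))) :
    ∃ L' : IntermediateField F Ω, FiniteDimensional F L' ∧ Algebra.IsSeparable F L' ∧
      ∀ x, algebraMap L Ω x ∈ L' := by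
  have hsep : ∀ a ∈ Set.range fun i ↦ algebraMap L Ω (b i), IsSeparable F a := by
    rintro _ ⟨i, rfl⟩
    exact hb i
  refine ⟨.adjoin F (Set.range fun i ↦ algebraMap L Ω (b i)),
    IntermediateField.finiteDimensional_adjoin fun x hx ↦ (hsep x hx).isIntegral,
    (IntermediateField.isSeparable_adjoin_iff_isSeparable _ _).mpr hsep, fun x ↦ ?_⟩
  set L' := IntermediateField.adjoin F (Set.range fun i ↦ algebraMap L Ω (b i))
  have hP (f : P) : algebraMap P Ω f ∈ L' := by
    rw [IsScalarTower.algebraMap_apply P F Ω]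
    exact L'.algebraMap_mem _
  have hk (c : k) : algebraMap k Ω c ∈ L' := by
    obtain ⟨f, g, -, rfl⟩ := IsFractionRing.div_surjective (A := P) c
    rw [map_div₀, ← IsScalarTower.algebraMap_apply, ← IsScalarTower.algebraMap_apply]
    exact div_mem (hP f) (hP g)
  have := Fintype.ofFinite ι
  rw [← b.sum_repr x, map_sum]
  refine sum_mem fun i _ ↦ ?_
  rw [Algebra.smul_def, map_mul, ← IsScalarTower.algebraMap_apply]
  exact mul_mem (hk _) (IntermediateField.subset_adjoin _ _ ⟨i, rfl⟩)

theorem exists_field_isSeparable_of_basis {P P' k F L ι : Type*} {Ω : Type w} [CommRing P]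
    [CommRing P'] [Field k] [Field L] [Field F] [Field Ω] [Algebra P k] [IsFractionRing P k]
    [Algebra k L] [Algebra P L] [Algebra P P'] [Algebra P' F] [Algebra P F] [Algebra F Ω]
    [Algebra P Ω] [Algebra P' Ω] [Algebra k Ω] [Algebra L Ω] [IsScalarTower P P' Ω]
    [IsScalarTower P' F Ω] [IsScalarTower P F Ω] [IsScalarTower P k Ω] [IsScalarTower P L Ω]
    [IsScalarTower k L Ω] [Finite ι] (b : Module.Basis ι k L)
    (hb : ∀ i, IsSeparable F (algebraMap L Ω (b i))) :
    ∃ (L' : Type w) (_ : Field L') (_ : Algebra P L') (_ : Algebra P' L') (_ : Algebra F L')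
      (_ : Algebra L L'), IsScalarTower P P' L' ∧ IsScalarTower P L L' ∧ IsScalarTower P' F L' ∧
      FiniteDimensional F L' ∧ Algebra.IsSeparable F L' := by
  obtain ⟨L', hfin, hsep, hL⟩ := exists_intermediateField_isSeparable_of_basis (P := P) b hb
  let : Algebra L L' := ((algebraMap L Ω).codRestrict L' hL).toAlgebra
  exact ⟨L', inferInstance, inferInstance, inferInstance, inferInstance, inferInstance,
    .of_algebraMap_eq fun f ↦ Subtype.ext (IsScalarTower.algebraMap_apply P P' Ω f),
    .of_algebraMap_eq fun f ↦ Subtype.ext (IsScalarTower.algebraMap_apply P L Ω f),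
    .of_algebraMap_eq fun f ↦ Subtype.ext (IsScalarTower.algebraMap_apply P' F Ω f), hfin, hsep⟩

theorem exists_isRootCover_isSeparable (n : ℕ) (K : Type u) (k : Type v) (L Ω : Type w) [Field K]
    [Field k] [Field L] [Field Ω] [Algebra (MvPolynomial (Fin n) K) k]
    [IsFractionRing (MvPolynomial (Fin n) K) k] [Algebra (MvPolynomial (Fin n) K) L] [Algebra k L]
    [IsScalarTower (MvPolynomial (Fin n) K) k L] [FiniteDimensional k L]
    [Algebra (MvPolynomial (Fin n) K) Ω] [Algebra k Ω] [Algebra L Ω] [IsScalarTower k L Ω]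
    [IsScalarTower (MvPolynomial (Fin n) K) L Ω] [IsAlgClosure L Ω] :
    ∃ (P' : Type w) (_ : CommRing P') (_ : IsDomain P') (_ : Algebra (MvPolynomial (Fin n) K) P')
      (L' : Type w) (_ : Field L') (_ : Algebra (MvPolynomial (Fin n) K) L') (_ : Algebra P' L')
      (_ : Algebra (FractionRing P') L') (_ : Algebra L L'),
      IsRootCover n K P' ∧ IsScalarTower (MvPolynomial (Fin n) K) P' L' ∧
      IsScalarTower (MvPolynomial (Fin n) K) L L' ∧ IsScalarTower P' (FractionRing P') L' ∧
      FiniteDimensional (FractionRing P') L' ∧ Algebra.IsSeparable (FractionRing P') L' := by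
  classical
  have := IsAlgClosure.isAlgClosed L (K := Ω)
  have := IsAlgClosure.isAlgebraic (R := L) (K := Ω)
  have : IsScalarTower (MvPolynomial (Fin n) K) k Ω := .to₁₂₄ _ k L _
  have : Algebra.IsAlgebraic k Ω := .trans k L Ω
  let b := Module.finBasis k L
  obtain ⟨P', hP', hsep⟩ := exists_isRootCover_forall_isSeparable n K k Ω
    (Finset.univ.image fun i ↦ algebraMap L Ω (b i))
  let := FractionRing.liftAlgebra P' Ω
  have : IsScalarTower (MvPolynomial (Fin n) K) (FractionRing P') Ω := .to₁₃₄ _ P' _ _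
  obtain ⟨L', _, _, _, _, _, h⟩ := exists_field_isSeparable_of_basis (P := MvPolynomial (Fin n) K)
    (P' := P') (F := FractionRing P') (Ω := Ω) b fun i ↦
      hsep _ _ (Finset.mem_image_of_mem _ (Finset.mem_univ i))
  exact ⟨P', inferInstance, inferInstance, inferInstance, L', _, _, _, _, _, hP', h⟩

end RootCover

theorem IsCompletionAt.comap_of_bijective {R S T : Type*} [CommRing R] [CommRing S] [CommRing T]
    [Algebra R S] [Algebra S T] [Algebra R T] [IsScalarTower R S T] {M : Ideal S}
    (h : IsCompletionAt M T) (hRS : Function.Bijective (algebraMap R S)) :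
    IsCompletionAt (M.comap (algebraMap R S)) T := by
  have hmap : (M.comap (algebraMap R S)).map (algebraMap R S) = M :=
    Ideal.map_comap_of_surjective _ hRS.2 M
  refine ⟨(IsAdicComplete.map_algebraMap_iff (S := S) _ _).mp (hmap.symm ▸ h.isAdicComplete),
    fun n ↦ ?_⟩
  obtain ⟨g, hg⟩ := h.exists_algHom_quotient_pow n
  let e : R ≃ₐ[R] S := .ofBijective (Algebra.ofId R S) hRS
  have hpow : M ^ n = (M.comap (algebraMap R S) ^ n).map e := by
    rw [Ideal.map_pow]
    exact congrArg (· ^ n) hmap.symm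
  let q := Ideal.quotientEquivAlg (M.comap (algebraMap R S) ^ n) (M ^ n) e hpow
  refine ⟨(q.symm : _ →ₐ[R] _).comp (g.restrictScalars R), ?_⟩
  rw [IsScalarTower.algebraMap_eq R S T, ← Ideal.map_map, Ideal.map_pow, hmap, ← hg]
  ext t
  exact map_eq_zero_iff _ q.symm.injective

theorem isMaximal_idealOfVars (σ K : Type*) [Field K] :
    (MvPolynomial.idealOfVars σ K).IsMaximal := by
  have hker : MvPolynomial.idealOfVars σ K = RingHom.ker (MvPolynomial.constantCoeff (σ := σ)) := by
    ext p
    rw [← pow_one (MvPolynomial.idealOfVars σ K), MvPolynomial.mem_pow_idealOfVars_iff',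
      RingHom.mem_ker, MvPolynomial.constantCoeff_eq]
    refine ⟨fun h ↦ h 0 (by simp), fun h x hx ↦ ?_⟩
    rw [(Finsupp.degree_eq_zero_iff x).mp (Nat.lt_one_iff.mp hx), h]
  rw [hker]
  exact RingHom.ker_isMaximal_of_surjective _ fun a ↦ ⟨.C a, MvPolynomial.constantCoeff_C _ a⟩

namespace IsRootCover

variable {n : ℕ} {K : Type u} [Field K] {P' : Type w} [CommRing P']
  [Algebra (MvPolynomial (Fin n) K) P']

theorem isIntegrallyClosed (h : IsRootCover n K P') : IsIntegrallyClosed P' := by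
  obtain ⟨K', _, e, -⟩ := h.exists_ringEquiv
  exact .of_equiv e.symm

theorem exists_isCompletionAt (h : IsRootCover n K P') :
    ∃ m' : Ideal P', m'.IsMaximal ∧
      (MvPolynomial.idealOfVars (Fin n) K).map (algebraMap _ P') ≤ m' ∧
      (∃ N, m' ^ N ≤ (MvPolynomial.idealOfVars (Fin n) K).map (algebraMap _ P')) ∧
      ∃ (O' : Type w) (_ : CommRing O') (_ : IsDomain O') (_ : IsIntegrallyClosed O')
        (_ : Algebra P' O'), FaithfulSMul P' O' ∧ IsCompletionAt m' O' := by
  obtain ⟨K', _, e, q, hq, hX⟩ := h.exists_ringEquiv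
  let : Algebra P' (MvPolynomial (Fin n) K') := e.toRingHom.toAlgebra
  let : Algebra P' (MvPowerSeries (Fin n) K') :=
    ((algebraMap (MvPolynomial (Fin n) K') _).comp e.toRingHom).toAlgebra
  have : IsScalarTower P' (MvPolynomial (Fin n) K') (MvPowerSeries (Fin n) K') :=
    .of_algebraMap_eq' rfl
  have := isMaximal_idealOfVars (Fin n) K'
  have hvars : (MvPolynomial.idealOfVars (Fin n) K').comap (algebraMap P' _) =
      Ideal.span (Set.range fun i ↦ e.symm (MvPolynomial.X i)) := by
    change Ideal.comap e _ = _
    rw [← Ideal.map_symm, MvPolynomial.idealOfVars, Ideal.map_span, ← Set.range_comp]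
    rfl
  have hX' (i) : algebraMap (MvPolynomial (Fin n) K) P' (.X i) = e.symm (.X i) ^ q := by
    rw [← map_pow, ← hX, e.symm_apply_apply]
  refine ⟨(MvPolynomial.idealOfVars (Fin n) K').comap (algebraMap P' _),
    Ideal.comap_isMaximal_of_surjective _ e.surjective, ?_, ?_, MvPowerSeries (Fin n) K',
    inferInstance, NoZeroDivisors.to_isDomain _, inferInstance, inferInstance, ?_,
    (IsCompletionAt.mvPowerSeries (Fin n) K').comap_of_bijective e.bijective⟩
  · rw [MvPolynomial.idealOfVars, Ideal.map_span, Ideal.span_le]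
    rintro _ ⟨_, ⟨i, rfl⟩, rfl⟩
    have hi : e.symm (.X i) ∈ Ideal.span (Set.range fun i ↦ e.symm (MvPolynomial.X i)) :=
      Ideal.subset_span ⟨i, rfl⟩
    rw [hvars, hX']
    exact Ideal.pow_mem_of_mem _ hi _ hq
  · refine Ideal.exists_pow_le_of_le_radical_of_fg ?_ ?_
    · rw [hvars, Ideal.span_le]
      rintro _ ⟨i, rfl⟩
      refine ⟨q, ?_⟩
      rw [← hX']
      exact Ideal.mem_map_of_mem _ (Ideal.subset_span ⟨i, rfl⟩)
    · rw [hvars]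
      exact Submodule.fg_span (Set.finite_range _)
  · exact (faithfulSMul_iff_algebraMap_injective _ _).mpr
      ((MvPolynomial.coe_injective (Fin n) K').comp e.injective)

end IsRootCover

/-! ### Geometric normality of the fibres of the completion -/

theorem IsNormalRing.of_tensorProduct_field (L R L' : Type*) [Field L] [CommRing R] [Algebra L R]
    [Field L'] [Algebra L L'] (h : IsNormalRing (L' ⊗[L] R)) : IsNormalRing R :=
  (h.of_ringEquiv (Algebra.TensorProduct.comm L L' R).toRingEquiv).of_faithfullyFlat

theorem isNormalRing_tensorProduct_of_isSeparable_fractionRing (P O k L : Type*) [CommRing P]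
    [CommRing O] [IsDomain O] [IsIntegrallyClosed O] [Algebra P O] [FaithfulSMul P O] [Field k]
    [Field L] [Algebra P k] [IsFractionRing P k] [Algebra k L] [Algebra P L]
    [IsScalarTower P k L] [FiniteDimensional k L] [Algebra.IsSeparable k L] :
    IsNormalRing (L ⊗[P] O) := by
  let : Algebra O (k ⊗[P] O) := Algebra.TensorProduct.rightAlgebra
  have hle : Algebra.algebraMapSubmonoid O P⁰ ≤ O⁰ :=
    algebraMapSubmonoid_le_nonZeroDivisors_of_faithfulSMul _ le_rfl
  have : IsLocalization (Algebra.algebraMapSubmonoid O P⁰) (k ⊗[P] O) := .tensorRight k P⁰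
  have : IsDomain (k ⊗[P] O) := IsLocalization.isDomain_of_le_nonZeroDivisors _ hle
  have : IsIntegrallyClosed (k ⊗[P] O) := isIntegrallyClosed_of_isLocalization _ _ hle
  exact (IsNormalRing.tensorProduct_of_isSeparable (k ⊗[P] O) k L).of_ringEquiv
    (Algebra.TensorProduct.cancelBaseChange P k k L O).toRingEquiv

theorem IsNormalRing.tensorProduct_of_comparisonMap_bijective {P O P' O' L : Type*} [CommRing P]
    [CommRing O] [CommRing P'] [CommRing O'] [CommRing L] [Algebra P O] [Algebra P P']
    [Algebra P' O'] [Algebra P O'] [IsScalarTower P P' O'] [Algebra P' L] [Algebra P L]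
    [IsScalarTower P P' L] {f : O →ₐ[P] O'} (hf : Function.Bijective (comparisonMap P' f))
    (h : IsNormalRing (L ⊗[P'] O')) : IsNormalRing (L ⊗[P] O) := by
  let e : L ⊗[P] O ≃ₐ[L] L ⊗[P'] O' :=
    (Algebra.TensorProduct.cancelBaseChange P P' L L O).symm.trans
      (Algebra.TensorProduct.congr .refl (.ofBijective _ hf))
  exact h.of_ringEquiv e.symm.toRingEquiv

theorem IsRootCover.isNormalRing_tensorProduct_mvPowerSeries {n : ℕ} {K P' : Type*} [Field K]
    [CommRing P'] [IsDomain P'] [Algebra (MvPolynomial (Fin n) K) P'] (h : IsRootCover n K P')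
    (L : Type*) [Field L] [Algebra P' L] [Algebra (FractionRing P') L]
    [IsScalarTower P' (FractionRing P') L] [FiniteDimensional (FractionRing P') L]
    [Algebra.IsSeparable (FractionRing P') L] [Algebra (MvPolynomial (Fin n) K) L]
    [IsScalarTower (MvPolynomial (Fin n) K) P' L] :
    IsNormalRing (L ⊗[MvPolynomial (Fin n) K] MvPowerSeries (Fin n) K) := by
  obtain ⟨m', _, hle, ⟨N, hN⟩, O', _, _, _, _, _, hO'⟩ := h.exists_isCompletionAt
  let : Algebra (MvPolynomial (Fin n) K) O' := Algebra.compHom O' (algebraMap _ P')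
  have : IsScalarTower (MvPolynomial (Fin n) K) P' O' := .of_algebraMap_eq' rfl
  have := h.finite
  have := isMaximal_idealOfVars (Fin n) K
  have hO := IsCompletionAt.mvPowerSeries (Fin n) K
  obtain ⟨f⟩ := hO.nonempty_algHom hO' hle
  exact .tensorProduct_of_comparisonMap_bijective
    (comparisonMap_bijective_of_pow_le hO hO' hle f hN)
    (isNormalRing_tensorProduct_of_isSeparable_fractionRing P' O' (FractionRing P') L)

theorem isNormalRing_tensorProduct_mvPowerSeries (n : ℕ) (K k L : Type*) [Field K] [Field k]
    [Field L] [Algebra (MvPolynomial (Fin n) K) k] [IsFractionRing (MvPolynomial (Fin n) K) k]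
    [Algebra (MvPolynomial (Fin n) K) L] [Algebra k L]
    [IsScalarTower (MvPolynomial (Fin n) K) k L] [FiniteDimensional k L] :
    IsNormalRing (L ⊗[MvPolynomial (Fin n) K] MvPowerSeries (Fin n) K) := by
  obtain ⟨P', _, _, _, L', _, _, _, _, _, hP', _, _, _, _, _⟩ :=
    exists_isRootCover_isSeparable n K k L (AlgebraicClosure L)
  exact .of_tensorProduct_field L _ L' <|
    (hP'.isNormalRing_tensorProduct_mvPowerSeries L').of_ringEquiv
      (Algebra.TensorProduct.cancelBaseChange (MvPolynomial (Fin n) K) L L' L' _).symm.toRingEquiv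

/-- The field `k` is the residue field of `A` at the prime `ker (A → k)`: every element of `k` is a
quotient of images of elements of `A` (a zero denominator only yields `0`). -/
def IsResidueField (A k : Type*) [CommRing A] [Field k] [Algebra A k] : Prop :=
  ∀ x : k, ∃ a b : A, x = algebraMap A k a / algebraMap A k b

namespace IsResidueField

variable {A k : Type*} [CommRing A] [Field k] [Algebra A k]

theorem of_isFractionRing (A k : Type*) [CommRing A] [Field k] [Algebra A k]
    [IsFractionRing A k] : IsResidueField A k := fun x ↦ by
  obtain ⟨a, b, -, h⟩ := IsFractionRing.div_surjective (A := A) x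
  exact ⟨a, b, h.symm⟩

theorem of_surjective (h : Function.Surjective (algebraMap A k)) : IsResidueField A k := fun x ↦ by
  obtain ⟨a, rfl⟩ := h x
  exact ⟨a, 1, by rw [map_one, div_one]⟩

theorem isFractionRing [FaithfulSMul A k] (h : IsResidueField A k) : IsFractionRing A k :=
  .of_field A k h

theorem tower_top {C : Type*} [CommRing C] [Algebra A C] [Algebra C k] [IsScalarTower A C k]
    (h : IsResidueField A k) : IsResidueField C k := fun x ↦ by
  obtain ⟨a, b, rfl⟩ := h x
  exact ⟨algebraMap A C a, algebraMap A C b, by simp only [← IsScalarTower.algebraMap_apply]⟩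

theorem of_isLocalization {B : Type*} [CommRing B] [Algebra B A] (S : Submonoid B)
    [IsLocalization S A] [Algebra B k] [IsScalarTower B A k] (h : IsResidueField A k) :
    IsResidueField B k := fun x ↦ by
  obtain ⟨a, a', rfl⟩ := h x
  obtain ⟨b, s, rfl⟩ := IsLocalization.exists_mk'_eq S a
  obtain ⟨b', s', rfl⟩ := IsLocalization.exists_mk'_eq S a'
  have hne (s : S) : algebraMap B k s ≠ 0 := by
    rw [IsScalarTower.algebraMap_apply B A k]
    exact ((IsLocalization.map_units A s).map (algebraMap A k)).ne_zero
  have hmk (b : B) (s : S) :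
      algebraMap A k (IsLocalization.mk' A b s) = algebraMap B k b / algebraMap B k s := by
    rw [eq_div_iff (hne s), IsScalarTower.algebraMap_apply B A k,
      IsScalarTower.algebraMap_apply B A k, ← map_mul, IsLocalization.mk'_spec]
  exact ⟨b * s', s * b', by rw [hmk, hmk, div_div_div_eq, map_mul, map_mul]⟩

theorem finiteDimensional {C L : Type*} [CommRing C] [Algebra A C] [Module.Finite A C] [Field L]
    [Algebra C L] [Algebra k L] [Algebra A L] [IsScalarTower A C L] [IsScalarTower A k L]
    (h : IsResidueField C L) : FiniteDimensional k L := by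
  let φ : k ⊗[A] C →ₐ[k] L :=
    Algebra.TensorProduct.lift (Algebra.ofId k L) (IsScalarTower.toAlgHom A C L) fun _ _ ↦ .all _ _
  have hφ (c : C) : φ (1 ⊗ₜ c) = algebraMap C L c := by simp [φ]
  refine .of_surjective φ.toLinearMap fun x ↦ ?_
  obtain ⟨a, b, rfl⟩ := h x
  have hinv : (algebraMap C L b)⁻¹ ∈ φ.range :=
    φ.range.inv_mem_of_algebraic (x := ⟨_, _, hφ b⟩) <| by
      have := (Algebra.IsIntegral.isIntegral (R := k) (1 ⊗ₜ[A] b : k ⊗[A] C)).map φ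
      rw [hφ] at this
      exact this.isAlgebraic
  have ha : algebraMap C L a ∈ φ.range := ⟨_, hφ a⟩
  exact div_eq_mul_inv (algebraMap C L a) _ ▸ mul_mem ha hinv

end IsResidueField

/-- The fibres of `A → T` are geometrically normal: for a residue field `k` of `A` and a finite
extension `L / k`, the ring `L ⊗[A] T` is normal. Both fields range over the universe of `A`, which
contains all residue fields up to isomorphism. -/
def HasGeometricallyNormalFibres (A : Type u) (T : Type v) [CommRing A] [CommRing T] [Algebra A T] :
    Prop :=
  ∀ (k L : Type u) [Field k] [Field L] [Algebra A k] [Algebra k L] [Algebra A L]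
    [IsScalarTower A k L] [FiniteDimensional k L], IsResidueField A k → IsNormalRing (L ⊗[A] T)

section NoetherNormalization

open MvPolynomial

theorem exists_monic_aeval_mem (K : Type*) {B : Type*} [Field K] [CommRing B] [Algebra K B]
    [Algebra.FiniteType K B] (M : Ideal B) [M.IsMaximal] (b : B) :
    ∃ f : Polynomial K, f.Monic ∧ 0 < f.natDegree ∧ f.aeval b ∈ M := by
  let := Ideal.Quotient.field M
  have : Module.Finite K (B ⧸ M) := finite_of_finite_type_of_isJacobsonRing K (B ⧸ M)
  have hintegral : IsIntegral K (Ideal.Quotient.mkₐ K M b) := Algebra.IsIntegral.isIntegral _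
  refine ⟨minpoly K (Ideal.Quotient.mkₐ K M b), minpoly.monic hintegral,
    minpoly.natDegree_pos hintegral, ?_⟩
  rw [← Ideal.Quotient.eq_zero_iff_mem, ← Ideal.Quotient.mkₐ_eq_mk K,
    ← Polynomial.aeval_algHom_apply]
  exact minpoly.aeval _ _

theorem exists_finite_injective_map_idealOfVars_le (K B : Type*) [Field K] [CommRing B]
    [Algebra K B] [Algebra.FiniteType K B] (M : Ideal B) [hM : M.IsMaximal] :
    ∃ (n : ℕ) (g : MvPolynomial (Fin n) K →ₐ[K] B), Function.Injective g ∧ g.Finite ∧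
      (idealOfVars (Fin n) K).map g ≤ M := by
  have : Nontrivial B := ⟨0, 1, fun h ↦ hM.ne_top ((Ideal.eq_top_iff_one M).mpr (h ▸ M.zero_mem))⟩
  obtain ⟨n, g, hg, hgf⟩ := exists_finite_inj_algHom_of_fg K B
  choose f hf hdeg hfM using fun i ↦ exists_monic_aeval_mem K M (g (X i))
  let ψ : MvPolynomial (Fin n) K →ₐ[K] MvPolynomial (Fin n) K := aeval fun i ↦ (f i).aeval (X i)
  have hψ : Function.Injective ψ :=
    (algebraicIndependent_X (Fin n) K).polynomial_aeval_of_transcendental fun i ↦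
      Polynomial.transcendental (f i) (hdeg i).ne' (by rw [hf i]; exact one_mem _)
  refine ⟨n, g.comp ψ, hg.comp hψ, hgf.comp (finite_aeval_aeval_X hf hdeg), ?_⟩
  rw [idealOfVars, Ideal.map_span, Ideal.span_le]
  rintro _ ⟨_, ⟨i, rfl⟩, rfl⟩
  change g (ψ (X i)) ∈ M
  rw [aeval_X, ← Polynomial.aeval_algHom_apply]
  exact hfM i

end NoetherNormalization

theorem IsCompletionAt.isNoetherianRing_of_finiteType (K : Type*) {B T : Type*} [Field K]
    [CommRing B] [Algebra K B] [Algebra.FiniteType K B] {M : Ideal B} [M.IsMaximal] [CommRing T]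
    [Algebra B T] (hT : IsCompletionAt M T) : IsNoetherianRing T := by
  obtain ⟨n, g, -, hgf, hgM⟩ := exists_finite_injective_map_idealOfVars_le K B M
  let : Algebra (MvPolynomial (Fin n) K) B := g.toRingHom.toAlgebra
  let : Algebra (MvPolynomial (Fin n) K) T := Algebra.compHom T (algebraMap _ B)
  have : IsScalarTower (MvPolynomial (Fin n) K) B T := .of_algebraMap_eq' rfl
  have : Module.Finite (MvPolynomial (Fin n) K) B := hgf
  have := isMaximal_idealOfVars (Fin n) K
  have hO := IsCompletionAt.mvPowerSeries (Fin n) K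
  obtain ⟨f⟩ := hO.nonempty_algHom hT hgM
  have := isNoetherianRing_tensorProduct_of_finite (MvPolynomial (Fin n) K) B
    (MvPowerSeries (Fin n) K)
  exact isNoetherianRing_of_surjective _ T (comparisonMap B f).toRingHom
    (comparisonMap_surjective hO hT hgM f)

theorem IsCompletionAt.isNormalRing_tensorProduct_of_isDomain (K : Type*) {C T : Type*} [Field K]
    [CommRing C] [IsDomain C] [Algebra K C] [Algebra.FiniteType K C] {M : Ideal C} [M.IsMaximal]
    [CommRing T] [Algebra C T] (hT : IsCompletionAt M T) (k L : Type*) [Field k] [Field L]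
    [Algebra C k] [IsFractionRing C k] [Algebra k L] [Algebra C L] [IsScalarTower C k L]
    [FiniteDimensional k L] : IsNormalRing (L ⊗[C] T) := by
  obtain ⟨n, g, hg, hgf, hgM⟩ := exists_finite_injective_map_idealOfVars_le K C M
  let P := MvPolynomial (Fin n) K
  let : Algebra P C := g.toRingHom.toAlgebra
  let : Algebra P T := Algebra.compHom T (algebraMap P C)
  let : Algebra P k := Algebra.compHom k (algebraMap P C)
  let : Algebra P L := Algebra.compHom L (algebraMap P C)
  have : IsScalarTower P C T := .of_algebraMap_eq' rfl
  have : IsScalarTower P C k := .of_algebraMap_eq' rfl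
  have : IsScalarTower P C L := .of_algebraMap_eq' rfl
  have : IsScalarTower P k L := .to₁₃₄ P C k L
  have : Module.Finite P C := hgf
  have : FaithfulSMul P C := (faithfulSMul_iff_algebraMap_injective P C).mpr hg
  have : FaithfulSMul P k := .trans P C k
  let : Algebra (FractionRing P) k := FractionRing.liftAlgebra P k
  let : Algebra (FractionRing P) L := Algebra.compHom L (algebraMap (FractionRing P) k)
  have : IsScalarTower (FractionRing P) k L := .of_algebraMap_eq' rfl
  have : IsScalarTower P (FractionRing P) L := .to₁₂₄ P (FractionRing P) k L
  have : FiniteDimensional (FractionRing P) k :=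
    (IsResidueField.of_isFractionRing C k).finiteDimensional (A := P)
  have : FiniteDimensional (FractionRing P) L := .trans _ k L
  have := isMaximal_idealOfVars (Fin n) K
  have hO := IsCompletionAt.mvPowerSeries (Fin n) K
  obtain ⟨f⟩ := hO.nonempty_algHom hT hgM
  have hnormal := (isNormalRing_tensorProduct_mvPowerSeries n K (FractionRing P) L).of_ringEquiv
    (Algebra.TensorProduct.cancelBaseChange P C L L (MvPowerSeries (Fin n) K)).symm.toRingEquiv
  exact (isDirectFactor_comparisonMap hO hT hgM f).lTensor.isNormalRing hnormal

theorem IsCompletionAt.isNormalRing_tensorProduct (K : Type*) {B T : Type*} [Field K]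
    [CommRing B] [Algebra K B] [Algebra.FiniteType K B] {M : Ideal B} [M.IsMaximal] [CommRing T]
    [Algebra B T] (hT : IsCompletionAt M T) (k L : Type*) [Field k] [Field L] [Algebra B k]
    [Algebra k L] [Algebra B L] [IsScalarTower B k L] [FiniteDimensional k L]
    (hk : IsResidueField B k) (hM : RingHom.ker (algebraMap B k) ≤ M) :
    IsNormalRing (L ⊗[B] T) := by
  let C := B ⧸ RingHom.ker (algebraMap B k)
  let : Algebra C k := (RingHom.kerLift (algebraMap B k)).toAlgebra
  let : Algebra C L := Algebra.compHom L (algebraMap C k)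
  have : IsScalarTower C k L := .of_algebraMap_eq' rfl
  have : IsScalarTower B C k := .of_algebraMap_eq' rfl
  have : IsScalarTower B C L := .to₁₂₄ B C k L
  have : FaithfulSMul C k :=
    (faithfulSMul_iff_algebraMap_injective C k).mpr (RingHom.kerLift_injective _)
  have : IsDomain C := (FaithfulSMul.algebraMap_injective C k).isDomain
  have : IsFractionRing C k := hk.tower_top.isFractionRing
  have : (M.map (algebraMap B C)).IsMaximal :=
    .map_of_surjective_of_ker_le Ideal.Quotient.mk_surjective (Ideal.mk_ker.trans_le hM)
  have : IsNoetherianRing T := hT.isNoetherianRing_of_finiteType K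
  exact ((hT.tensorProduct C).isNormalRing_tensorProduct_of_isDomain K k L).of_ringEquiv
    (Algebra.TensorProduct.cancelBaseChange B C L L T).toRingEquiv

theorem IsCompletionAt.hasGeometricallyNormalFibres (K B : Type*) {A : Type u} {T : Type v}
    [Field K] [CommRing B] [Algebra K B] [Algebra.FiniteType K B] (M : Ideal B) [M.IsMaximal]
    [CommRing A] [IsLocalRing A] [Algebra B A] [IsLocalization.AtPrime A M] [CommRing T]
    [Algebra A T] (hT : IsCompletionAt (IsLocalRing.maximalIdeal A) T) :
    HasGeometricallyNormalFibres A T := by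
  intro k L _ _ _ _ _ _ _ hk
  let : Algebra B T := Algebra.compHom T (algebraMap B A)
  let : Algebra B k := Algebra.compHom k (algebraMap B A)
  let : Algebra B L := Algebra.compHom L (algebraMap B A)
  have : IsScalarTower B A T := .of_algebraMap_eq' rfl
  have : IsScalarTower B A k := .of_algebraMap_eq' rfl
  have : IsScalarTower B A L := .of_algebraMap_eq' rfl
  have : IsScalarTower B k L := .to₁₃₄ B A k L
  have hker : RingHom.ker (algebraMap B k) ≤ M := fun b hb ↦ by
    by_contra hbM
    have hunit := (IsLocalization.map_units A (⟨b, hbM⟩ : M.primeCompl)).map (algebraMap A k)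
    rw [← IsScalarTower.algebraMap_apply] at hunit
    exact hunit.ne_zero hb
  have hnormal := hT.of_isLocalization_atPrime (M := M).isNormalRing_tensorProduct K k L
    (hk.of_isLocalization M.primeCompl) hker
  exact hnormal.of_ringEquiv
    (IsLocalization.algebraTensorEquiv M.primeCompl A L T).symm.toRingEquiv

/-! ### Finiteness of the normalization -/

section Finiteness

theorem finite_integralClosure_iff_of_isIntegral (R S L : Type*) [CommRing R] [CommRing S]
    [CommRing L] [Algebra R S] [Algebra.IsIntegral R S] [Algebra R L] [Algebra S L]
    [IsScalarTower R S L] :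
    Module.Finite R (integralClosure S L) ↔ Module.Finite R (integralClosure R L) := by
  have heq : (integralClosure S L).restrictScalars R = integralClosure R L :=
    Subalgebra.ext fun x ↦ ⟨isIntegral_trans (A := S) x, IsIntegral.tower_top⟩
  rw [← heq]
  rfl

theorem finite_integralClosure_of_algHom {R L L' : Type*} [CommRing R] [IsNoetherianRing R]
    [CommRing L] [CommRing L'] [Algebra R L] [Algebra R L'] (f : L →ₐ[R] L')
    (hf : Function.Injective f) [Module.Finite R (integralClosure R L')] :
    Module.Finite R (integralClosure R L) := by
  let g : integralClosure R L →ₗ[R] integralClosure R L' :=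
    f.toLinearMap.restrict (p := (integralClosure R L).toSubmodule)
      (q := (integralClosure R L').toSubmodule) fun _ hx ↦ hx.map f
  exact .of_injective g fun x y h ↦ Subtype.ext (hf (congrArg Subtype.val h))

theorem finite_integralClosure_pi {R ι : Type*} [CommRing R] [IsNoetherianRing R] [Finite ι]
    (L : ι → Type*) [∀ i, CommRing (L i)] [∀ i, Algebra R (L i)]
    [∀ i, Module.Finite R (integralClosure R (L i))] :
    Module.Finite R (integralClosure R (∀ i, L i)) := by
  let g : integralClosure R (∀ i, L i) →ₗ[R] ∀ i, integralClosure R (L i) :=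
    LinearMap.pi fun i ↦ (Pi.evalAlgHom R L i).toLinearMap.restrict
      (p := (integralClosure R (∀ i, L i)).toSubmodule)
      (q := (integralClosure R (L i)).toSubmodule) fun _ hx ↦ hx.map (Pi.evalAlgHom R L i)
  exact .of_injective g fun x y h ↦ Subtype.ext (funext fun i ↦ congrArg Subtype.val (congrFun h i))

theorem finite_integralClosure_of_isLocalization {B A L : Type*} [CommRing B] [CommRing A]
    [CommRing L] [Algebra B A] [Algebra A L] [Algebra B L] [IsScalarTower B A L]
    [IsNoetherianRing A] (S : Submonoid B) [IsLocalization S A]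
    [hfin : Module.Finite B (integralClosure B L)] : Module.Finite A (integralClosure A L) := by
  obtain ⟨s, hs⟩ := (Module.Finite.iff_fg (N := (integralClosure B L).toSubmodule)).mp hfin
  have hle : (integralClosure A L).toSubmodule ≤ Submodule.span A (s : Set L) := fun x hx ↦ by
    obtain ⟨m, hm⟩ := IsIntegral.exists_multiple_integral_of_isLocalization S x hx
    have hmx : (m : B) • x ∈ Submodule.span B (s : Set L) := hs ▸ hm
    have hunit := IsLocalization.map_units A m
    rw [← Submodule.smul_mem_iff_of_isUnit _ hunit, algebraMap_smul]
    exact Submodule.span_le_restrictScalars B A _ hmx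
  exact .of_injective _ (Submodule.inclusion_injective hle)

theorem finite_integralClosure_mvPolynomial (n : ℕ) (K k L : Type*) [Field K] [Field k] [Field L]
    [Algebra (MvPolynomial (Fin n) K) k] [IsFractionRing (MvPolynomial (Fin n) K) k]
    [Algebra (MvPolynomial (Fin n) K) L] [Algebra k L]
    [IsScalarTower (MvPolynomial (Fin n) K) k L] [FiniteDimensional k L] :
    Module.Finite (MvPolynomial (Fin n) K) (integralClosure (MvPolynomial (Fin n) K) L) := by
  obtain ⟨P', _, _, _, L', _, _, _, _, _, hP', _, _, _, _, _⟩ :=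
    exists_isRootCover_isSeparable n K k L (AlgebraicClosure L)
  have := hP'.finite
  have := hP'.isIntegrallyClosed
  have : IsNoetherianRing P' := .of_finite (MvPolynomial (Fin n) K) P'
  have : Module.Finite P' (integralClosure P' L') :=
    IsIntegralClosure.finite P' (FractionRing P') L' _
  have := (finite_integralClosure_iff_of_isIntegral (MvPolynomial (Fin n) K) P' L').mp (.trans P' _)
  exact finite_integralClosure_of_algHom (IsScalarTower.toAlgHom _ L L') (algebraMap L L').injective

theorem finite_integralClosure_of_finiteType (K C k : Type*) [Field K] [CommRing C] [IsDomain C]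
    [Algebra K C] [Algebra.FiniteType K C] [Field k] [Algebra C k] [IsFractionRing C k] :
    Module.Finite C (integralClosure C k) := by
  obtain ⟨n, g, hg, hgf⟩ := exists_finite_inj_algHom_of_fg K C
  let P := MvPolynomial (Fin n) K
  let : Algebra P C := g.toRingHom.toAlgebra
  let : Algebra P k := Algebra.compHom k (algebraMap P C)
  have : IsScalarTower P C k := .of_algebraMap_eq' rfl
  have : Module.Finite P C := hgf
  have : FaithfulSMul P C := (faithfulSMul_iff_algebraMap_injective P C).mpr hg
  have : FaithfulSMul P k := .trans P C k
  let : Algebra (FractionRing P) k := FractionRing.liftAlgebra P k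
  have : FiniteDimensional (FractionRing P) k :=
    (IsResidueField.of_isFractionRing C k).finiteDimensional (A := P)
  have : Module.Finite P (integralClosure C k) :=
    (finite_integralClosure_iff_of_isIntegral P C k).mpr
      (finite_integralClosure_mvPolynomial n K (FractionRing P) k)
  exact .of_restrictScalars_finite P C _

theorem IsResidueField.finite_integralClosure (K : Type*) {B k : Type*} [Field K] [CommRing B]
    [Algebra K B] [Algebra.FiniteType K B] [Field k] [Algebra B k] (hk : IsResidueField B k) :
    Module.Finite B (integralClosure B k) := by
  let C := B ⧸ RingHom.ker (algebraMap B k)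
  let : Algebra C k := (RingHom.kerLift (algebraMap B k)).toAlgebra
  have : IsScalarTower B C k := .of_algebraMap_eq' rfl
  have : FaithfulSMul C k :=
    (faithfulSMul_iff_algebraMap_injective C k).mpr (RingHom.kerLift_injective _)
  have : IsDomain C := (FaithfulSMul.algebraMap_injective C k).isDomain
  have : IsFractionRing C k := hk.tower_top.isFractionRing
  have := finite_integralClosure_of_finiteType K C k
  exact (finite_integralClosure_iff_of_isIntegral B C k).mp (.trans C _)

end Finiteness

theorem isArtinianRing_of_isFractionRing_self (Q : Type*) [CommRing Q] [IsNoetherianRing Q]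
    [IsReduced Q] [IsFractionRing Q Q] : IsArtinianRing Q := by
  refine isArtinianRing_iff_krullDimLE_zero.mpr (.mk₀ fun p hp ↦ ?_)
  obtain ⟨m, hm, hpm⟩ := p.exists_le_maximal hp.ne_top
  have hass := hm.mem_associatedPrimes_of_isFractionRing
  obtain ⟨-, x, hx⟩ := isAssociatedPrime_iff.mp (AssociatedPrimes.mem_iff.mp hass)
  have hmem (y : Q) : y ∈ m ↔ y * x = 0 := by simp [hx]
  have hxm : x ∉ m := fun h ↦ by
    have hx0 : x = 0 := eq_zero_of_pow_eq_zero (n := 2) (sq x ▸ (hmem x).mp h)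
    exact hm.ne_top ((Ideal.eq_top_iff_one m).mpr ((hmem 1).mpr (by rw [hx0, mul_zero])))
  have hmp : m ≤ p := fun y hy ↦
    (hp.mem_or_mem ((hmem y).mp hy ▸ p.zero_mem)).resolve_right fun h ↦ hxm (hpm h)
  rwa [le_antisymm hpm hmp]

theorem exists_fractionRing_algEquiv_pi_isResidueField (A : Type u) [CommRing A]
    [IsNoetherianRing A] [IsReduced A] :
    ∃ (ι : Type u) (_ : Finite ι) (k : ι → Type u) (_ : ∀ i, Field (k i))
      (_ : ∀ i, Algebra A (k i)),
      (∀ i, IsResidueField A (k i)) ∧ Nonempty (FractionRing A ≃ₐ[A] ∀ i, k i) := by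
  have := isArtinianRing_of_isFractionRing_self (FractionRing A)
  let field (m : MaximalSpectrum (FractionRing A)) : Field (FractionRing A ⧸ m.asIdeal) :=
    Ideal.Quotient.field m.asIdeal
  refine ⟨MaximalSpectrum (FractionRing A), inferInstance, fun m ↦ FractionRing A ⧸ m.asIdeal,
    field, fun m ↦ inferInstance, fun m ↦ ?_,
    ⟨(IsArtinianRing.equivPi (FractionRing A)).restrictScalars A⟩⟩
  exact (IsResidueField.of_surjective Ideal.Quotient.mk_surjective).of_isLocalization A⁰

theorem finite_integralClosure_fractionRing (K B : Type*) {A : Type*} [Field K] [CommRing B]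
    [Algebra K B] [Algebra.FiniteType K B] [CommRing A] [IsReduced A] [Algebra B A]
    (S : Submonoid B) [IsLocalization S A] :
    Module.Finite A (integralClosure A (FractionRing A)) := by
  have : IsNoetherianRing B := Algebra.FiniteType.isNoetherianRing K B
  have : IsNoetherianRing A := IsLocalization.isNoetherianRing S A inferInstance
  obtain ⟨ι, _, k, _, _, hk, ⟨e⟩⟩ := exists_fractionRing_algEquiv_pi_isResidueField A
  have (i : ι) : Module.Finite A (integralClosure A (k i)) := by
    let : Algebra B (k i) := Algebra.compHom _ (algebraMap B A)
    have : IsScalarTower B A (k i) := .of_algebraMap_eq' rfl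
    have := ((hk i).of_isLocalization S).finite_integralClosure K
    exact finite_integralClosure_of_isLocalization S
  have := finite_integralClosure_pi (R := A) k
  exact finite_integralClosure_of_algHom e.toAlgHom e.injective

/-! ### Colon ideals and the Grauert–Remmert criterion -/

section FlatColon

variable {D E : Type*} [CommRing D] [CommRing E] [Algebra D E]

theorem tmul_mk_eq_zero_iff (I : Ideal D) (e : E) (b : D) :
    e ⊗ₜ[D] Ideal.Quotient.mk I b = 0 ↔ e * algebraMap D E b ∈ I.map (algebraMap D E) := by
  have hb : e ⊗ₜ[D] Ideal.Quotient.mk I b = (e * algebraMap D E b) ⊗ₜ[D] (1 : D ⧸ I) := by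
    rw [mul_comm, ← Algebra.smul_def, TensorProduct.smul_tmul, Algebra.smul_def, mul_one]
    rfl
  rw [hb, ← Algebra.TensorProduct.quotIdealMapEquivTensorQuot_mk, EmbeddingLike.map_eq_zero_iff,
    Ideal.Quotient.eq_zero_iff_mem]

theorem tmul_eq_zero_iff_mem_map_torsionOf [Module.Flat D E] {N : Type*} [AddCommGroup N]
    [Module D N] (e : E) (x : N) :
    e ⊗ₜ[D] x = 0 ↔ e ∈ (Ideal.torsionOf D N x).map (algebraMap D E) := by
  let f : (D ⧸ Ideal.torsionOf D N x) →ₗ[D] N :=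
    (Ideal.torsionOf D N x).liftQ (LinearMap.toSpanSingleton D N x) le_rfl
  have hf : Function.Injective f :=
    LinearMap.ker_eq_bot.mp (Submodule.ker_liftQ_eq_bot _ _ _ le_rfl)
  have hfe : f.lTensor E (e ⊗ₜ Ideal.Quotient.mk _ 1) = e ⊗ₜ x := by
    rw [LinearMap.lTensor_tmul]
    congr 1
    exact one_smul D x
  rw [← hfe, LinearMap.map_eq_zero_iff _ (Module.Flat.lTensor_preserves_injective_linearMap f hf),
    tmul_mk_eq_zero_iff, map_one, mul_one]

theorem map_colon_of_flat [Module.Flat D E] (I : Ideal D) {J : Ideal D} (hJ : J.FG) :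
    (I.colon (J : Set D)).map (algebraMap D E) =
      (I.map (algebraMap D E)).colon (J.map (algebraMap D E) : Set E) := by
  classical
  obtain ⟨s, rfl⟩ := hJ
  let x : s → D ⧸ I := fun b ↦ Ideal.Quotient.mk I b
  have hx : I.colon (Ideal.span (s : Set D) : Set D) = Ideal.torsionOf D _ x := by
    ext d
    simp [Submodule.mem_colon, funext_iff, x, Algebra.smul_def, ← map_mul,
      Ideal.Quotient.eq_zero_iff_mem]
  ext e
  rw [hx, ← tmul_eq_zero_iff_mem_map_torsionOf,
    ← (TensorProduct.piRight D D E fun _ : s ↦ D ⧸ I).map_eq_zero_iff]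
  simp [Ideal.map_span, Submodule.mem_colon, funext_iff, x, tmul_mk_eq_zero_iff]

end FlatColon

section GrauertRemmert

theorem exists_pow_smul_mem_range_of_mem_adjoin {E Q : Type*} [CommRing E] [CommRing Q]
    [Algebra E Q] {d : E} {y : Q} (hy : IsIntegral E y) (hdy : d • y ∈ (algebraMap E Q).range) :
    ∃ n, ∀ z ∈ Algebra.adjoin E {y}, d ^ n • z ∈ (algebraMap E Q).range := by
  classical
  obtain ⟨p, hp, hpy⟩ := hy
  refine ⟨p.natDegree, fun z hz ↦ ?_⟩
  rw [← Subalgebra.mem_toSubmodule, ← Submodule.span_range_natDegree_eq_adjoin hp hpy] at hz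
  induction hz using Submodule.span_induction with
  | zero => simp
  | add z z' _ _ hz hz' => simpa using add_mem hz hz'
  | smul e z _ hz =>
    rw [smul_comm, Algebra.smul_def e]
    exact mul_mem ⟨e, rfl⟩ hz
  | mem z hz =>
    obtain ⟨i, hi, rfl⟩ := Finset.mem_image.mp (Finset.mem_coe.mp hz)
    obtain ⟨j, hj⟩ := Nat.exists_eq_add_of_le (Finset.mem_range.mp hi).le
    rw [hj, add_comm, pow_add, mul_smul, ← smul_pow, Algebra.smul_def]
    exact mul_mem ⟨_, rfl⟩ (pow_mem hdy i)

theorem mem_of_isIntegral_of_algebraMap_eq_smul {E Q : Type*} [CommRing E] [CommRing Q]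
    [Algebra E Q] [FaithfulSMul E Q] {J : Ideal E} (hJ : J.IsRadical) {i e : E} (hi : i ∈ J) {x : Q}
    (hx : IsIntegral E x) (h : algebraMap E Q e = i • x) : e ∈ J := by
  obtain ⟨p, hp, hpx⟩ := hx
  have hdvd : i ∣ e ^ p.natDegree :=
    Polynomial.dvd_pow_natDegree_of_eval₂_eq_zero (FaithfulSMul.algebraMap_injective E Q) hp i e x
      hpx (by rw [h, Algebra.smul_def])
  exact hJ ⟨_, J.mem_of_dvd hdvd hi⟩

theorem mem_range_of_isIntegral_of_forall_smul_mem_range {E Q : Type*} [CommRing E] [CommRing Q]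
    [Algebra E Q] [FaithfulSMul E Q] {d : E} (hd : IsUnit (algebraMap E Q d)) {J : Ideal E}
    (hdJ : d ∈ J) (hJ : J.IsRadical) (hcolon : (Ideal.span {d} * J).colon (J : Set E) ≤ .span {d})
    {x : Q} (hx : IsIntegral E x) (hJx : ∀ i ∈ J, i • x ∈ (algebraMap E Q).range) :
    x ∈ (algebraMap E Q).range := by
  obtain ⟨w, hw⟩ := hJx d hdJ
  have hwmem : w ∈ (Ideal.span {d} * J).colon (J : Set E) := by
    refine Submodule.mem_colon.mpr fun i hi ↦ ?_
    obtain ⟨e, he⟩ := hJx i hi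
    refine Ideal.mem_span_singleton_mul.mpr
      ⟨e, mem_of_isIntegral_of_algebraMap_eq_smul hJ hi hx he, ?_⟩
    apply FaithfulSMul.algebraMap_injective E Q
    rw [smul_eq_mul, map_mul, map_mul, he, hw, Algebra.smul_def, Algebra.smul_def]
    ring
  obtain ⟨c, rfl⟩ := Ideal.mem_span_singleton'.mp (hcolon hwmem)
  exact ⟨c, hd.mul_left_cancel (by rw [← map_mul, mul_comm, hw, Algebra.smul_def])⟩

theorem mem_range_of_isIntegral_of_colon_le {E Q : Type*} [CommRing E] [CommRing Q] [Algebra E Q]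
    [FaithfulSMul E Q] {d : E} (hd : IsUnit (algebraMap E Q d)) {J : Ideal E} (hdJ : d ∈ J)
    (hJ : J.IsRadical) {N : ℕ} (hN : J ^ N ≤ .span {d})
    (hcolon : (Ideal.span {d} * J).colon (J : Set E) ≤ .span {d})
    {y : Q} (hy : IsIntegral E y) (hdy : d • y ∈ (algebraMap E Q).range) :
    y ∈ (algebraMap E Q).range := by
  obtain ⟨n, hn⟩ := exists_pow_smul_mem_range_of_mem_adjoin hy hdy
  suffices h : ∀ m, ∀ z ∈ Algebra.adjoin E {y}, (∀ j ∈ J ^ m, j • z ∈ (algebraMap E Q).range) →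
      z ∈ (algebraMap E Q).range by
    have hyS : y ∈ Algebra.adjoin E {y} := Algebra.self_mem_adjoin_singleton E y
    refine h (N * n) y hyS fun j hj ↦ ?_
    have hjd : j ∈ Ideal.span {d ^ n} := by
      rw [← Ideal.span_singleton_pow]
      exact Ideal.pow_right_mono hN n (pow_mul J N n ▸ hj)
    obtain ⟨c, rfl⟩ := Ideal.mem_span_singleton'.mp hjd
    rw [mul_smul, Algebra.smul_def]
    exact mul_mem ⟨c, rfl⟩ (hn y hyS)
  intro m
  induction m with
  | zero => exact fun z _ hz ↦ by simpa using hz 1 (by simp)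
  | succ m ih =>
    refine fun z hz hJz ↦ ih z hz fun j hj ↦ ?_
    have hjz : j • z ∈ Algebra.adjoin E {y} := Subalgebra.smul_mem _ hz j
    refine mem_range_of_isIntegral_of_forall_smul_mem_range hd hdJ hJ hcolon
      (adjoin_le_integralClosure hy hjz) fun i hi ↦ ?_
    rw [← mul_smul]
    exact hJz _ (pow_succ' J m ▸ Ideal.mul_mem_mul hi hj)

theorem span_singleton_mul_colon_le {D : Type*} [CommRing D] [IsNoetherianRing D]
    [IsIntegrallyClosed D] {d : D} (hd : d ∈ D⁰) {J : Ideal D} (hdJ : d ∈ J) :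
    (Ideal.span {d} * J).colon (J : Set D) ≤ .span {d} := by
  let F := FractionRing D
  intro x hx
  have hxJ (j : D) (hj : j ∈ J) : ∃ j' ∈ J, d * j' = x * j :=
    Ideal.mem_span_singleton_mul.mp (Submodule.mem_colon.mp hx j hj)
  have hdF : IsUnit (algebraMap D F d) := IsLocalization.map_units F ⟨d, hd⟩
  let y : F := IsLocalization.mk' F x (⟨d, hd⟩ : D⁰)
  have hy : algebraMap D F d * y = algebraMap D F x := IsLocalization.mk'_spec' F x ⟨d, hd⟩
  have hpow (n : ℕ) : ∃ j ∈ J, algebraMap D F j = d • y ^ n := by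
    induction n with
    | zero => exact ⟨d, hdJ, by rw [pow_zero, Algebra.algebraMap_eq_smul_one]⟩
    | succ n ih =>
      obtain ⟨j, hj, hjy⟩ := ih
      obtain ⟨j', hj', hjj'⟩ := hxJ j hj
      refine ⟨j', hj', hdF.mul_left_cancel ?_⟩
      rw [← map_mul, hjj', map_mul, hjy, ← hy, pow_succ, Algebra.smul_def, Algebra.smul_def]
      ring
  have hintegral : IsIntegral D y := by
    refine IsAlmostIntegral.isIntegral_of_nonZeroDivisors_le_comap ⟨d, hd, fun n ↦ ?_⟩
      fun u hu ↦ (IsLocalization.map_units F (⟨u, hu⟩ : D⁰)).mem_nonZeroDivisors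
    obtain ⟨j, -, hj⟩ := hpow n
    exact ⟨j, hj⟩
  obtain ⟨c, hc⟩ := IsIntegrallyClosed.isIntegral_iff.mp hintegral
  refine Ideal.mem_span_singleton.mpr ⟨c, IsFractionRing.injective D F ?_⟩
  rw [map_mul, hc, hy]

end GrauertRemmert

/-! ### Base change of the normalization -/

section FractionRingFibre

theorem isResidueField_residueField {A : Type*} [CommRing A] (p : Ideal A) [p.IsPrime] :
    IsResidueField A p.ResidueField :=
  (IsResidueField.of_surjective (A := Localization.AtPrime p)
    Ideal.Quotient.mk_surjective).of_isLocalization p.primeCompl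

namespace HasGeometricallyNormalFibres

variable {A : Type u} {T : Type v} [CommRing A] [CommRing T] [Algebra A T]

theorem isNormalRing_tensorProduct_of_finite (h : HasGeometricallyNormalFibres A T) {C L : Type u}
    [CommRing C] [Algebra A C] [Module.Finite A C] [Field L] [Algebra C L] [Algebra A L]
    [IsScalarTower A C L] (hL : IsResidueField C L) : IsNormalRing (L ⊗[A] T) := by
  let p := RingHom.ker (algebraMap A L)
  have : p.IsPrime := RingHom.ker_isPrime _
  let k := p.ResidueField
  let : Algebra k L := (Ideal.ResidueField.lift p (algebraMap A L) le_rfl fun a ha ↦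
    (show algebraMap A L a ≠ 0 from ha).isUnit).toAlgebra
  have : IsScalarTower A k L := .of_algebraMap_eq fun a ↦
    (Ideal.ResidueField.lift_algebraMap ..).symm
  have := hL.finiteDimensional (A := A) (k := k)
  exact h k L (isResidueField_residueField p)

theorem isNormalRing_fractionRing_tensorProduct (h : HasGeometricallyNormalFibres A T)
    (C : Type u) [CommRing C] [IsNoetherianRing C] [IsReduced C] [Algebra A C] [Module.Finite A C] :
    IsNormalRing (FractionRing C ⊗[A] T) := by
  classical
  obtain ⟨ι, _, k, _, _, hk, ⟨e⟩⟩ := exists_fractionRing_algEquiv_pi_isResidueField C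
  have := Fintype.ofFinite ι
  let (i : ι) : Algebra A (k i) := Algebra.compHom (k i) (algebraMap A C)
  have (i : ι) : IsScalarTower A C (k i) := .of_algebraMap_eq' rfl
  have hpi : IsNormalRing (∀ i, T ⊗[A] k i) := .pi fun i ↦
    (h.isNormalRing_tensorProduct_of_finite (hk i)).of_ringEquiv
      (Algebra.TensorProduct.comm A (k i) T).toRingEquiv
  let e' : FractionRing C ⊗[A] T ≃ₐ[A] ∀ i, T ⊗[A] k i :=
    (Algebra.TensorProduct.congr (e.restrictScalars A) .refl).trans <|
      (Algebra.TensorProduct.comm A _ T).trans <|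
        Algebra.TensorProduct.piRight A A T k
  exact hpi.of_ringEquiv e'.symm.toRingEquiv

theorem isReduced_tensorProduct (h : HasGeometricallyNormalFibres A T) [Module.Flat A T]
    (C : Type u) [CommRing C] [IsNoetherianRing C] [IsReduced C] [Algebra A C] [Module.Finite A C] :
    IsReduced (C ⊗[A] T) :=
  have := (h.isNormalRing_fractionRing_tensorProduct C).isReduced
  isReduced_of_injective
    (Algebra.TensorProduct.map (IsScalarTower.toAlgHom A C (FractionRing C)) (.id A T))
    (Module.Flat.rTensor_preserves_injective_linearMap
      (IsScalarTower.toAlgHom A C (FractionRing C)).toLinearMap (IsFractionRing.injective C _))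

end HasGeometricallyNormalFibres

end FractionRingFibre

section NormalityAscends

theorem IsNormalRing.mem_range_of_isIntegral {R E Q : Type*} [CommRing R] [CommRing E]
    [CommRing Q] [Algebra R E] [Algebra R Q] [IsFractionRing R Q] (hE : IsNormalRing E)
    (hreg : ∀ u ∈ R⁰, algebraMap R E u ∈ E⁰) (ψ : E →ₐ[R] Q) {y : Q} (hy : IsIntegral R y) :
    y ∈ ψ.range := by
  obtain ⟨q, hq, hqy⟩ := hy
  obtain ⟨a, u, rfl⟩ := IsLocalization.exists_mk'_eq R⁰ y
  have hau := IsLocalization.mk'_spec' Q a u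
  have hqa : (q.scaleRoots u).eval a = 0 := by
    apply IsFractionRing.injective R Q
    rw [← algebraMap_mul_pow_natDegree_mul_eval₂ hau, hqy, mul_zero, map_zero]
  obtain ⟨e, he⟩ := hE.dvd_of_eval_scaleRoots_eq_zero (hreg u u.2) (hq.map (algebraMap R E))
    (eval_scaleRoots_map_eq_zero (algebraMap R E) hq hqa)
  refine ⟨e, (IsLocalization.map_units Q u).mul_left_cancel ?_⟩
  rw [hau, ← ψ.commutes a, he, map_mul, ψ.commutes]
  rfl

theorem exists_smul_mem_range_of_isIntegral {E G Q : Type*} [CommRing E] [CommRing G] [CommRing Q]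
    [Algebra E G] [Algebra E Q] [IsFractionRing E Q] {S : Submonoid E} [IsLocalization S G]
    (hS : S ≤ E⁰) (hG : IsNormalRing G) {y : Q} (hy : IsIntegral E y) :
    ∃ s ∈ S, s • y ∈ (algebraMap E Q).range := by
  have := IsLocalization.flat G S
  let ψ : G →ₐ[E] Q := IsLocalization.liftAlgHom (M := S) (f := Algebra.ofId E Q)
    fun s ↦ IsLocalization.map_units Q (⟨s, hS s.2⟩ : E⁰)
  obtain ⟨g, rfl⟩ :=
    hG.mem_range_of_isIntegral (fun _ ↦ algebraMap_mem_nonZeroDivisors_of_flat) ψ hy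
  obtain ⟨⟨t, s⟩, ht⟩ := IsLocalization.surj S g
  refine ⟨s, s.2, t, ?_⟩
  change _ = (s : E) • ψ g
  rw [← map_smul, Algebra.smul_def, mul_comm, ht, ψ.commutes]

variable {D E : Type*} [CommRing D] [CommRing E] [IsNoetherianRing D] [IsIntegrallyClosed D]
  [Algebra D E] [Module.Flat D E]

theorem mem_range_of_isIntegral_of_flat
    (hrad : ∀ J : Ideal D, J.IsRadical → (J.map (algebraMap D E)).IsRadical) {Q : Type*}
    [CommRing Q] [Algebra E Q] [IsFractionRing E Q] {d : D} (hd : d ∈ D⁰) {y : Q}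
    (hy : IsIntegral E y) (hdy : algebraMap D E d • y ∈ (algebraMap E Q).range) :
    y ∈ (algebraMap E Q).range := by
  let J := (Ideal.span {d}).radical
  have hdJ : d ∈ J := Ideal.le_radical (Ideal.mem_span_singleton_self d)
  obtain ⟨N, hN⟩ := (Ideal.span {d}).exists_radical_pow_le_of_fg (IsNoetherian.noetherian J)
  have hdQ : IsUnit (algebraMap E Q (algebraMap D E d)) :=
    IsLocalization.map_units Q (⟨_, algebraMap_mem_nonZeroDivisors_of_flat hd⟩ : E⁰)
  have hspan : (Ideal.span {d}).map (algebraMap D E) = Ideal.span {algebraMap D E d} := by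
    rw [Ideal.map_span, Set.image_singleton]
  have := (faithfulSMul_iff_algebraMap_injective E Q).mpr (IsFractionRing.injective E Q)
  refine mem_range_of_isIntegral_of_colon_le hdQ (Ideal.mem_map_of_mem _ hdJ)
    (hrad J (Ideal.radical_isRadical _)) (N := N) ?_ ?_ hy hdy
  · rw [← Ideal.map_pow, ← hspan]
    exact Ideal.map_mono hN
  · rw [← hspan, ← Ideal.map_mul, ← map_colon_of_flat _ (IsNoetherian.noetherian J)]
    exact Ideal.map_mono (span_singleton_mul_colon_le hd hdJ)

theorem IsNormalRing.of_isLocalization_algebraMapSubmonoid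
    (hrad : ∀ J : Ideal D, J.IsRadical → (J.map (algebraMap D E)).IsRadical) (G : Type*)
    [CommRing G] [Algebra E G] [IsLocalization (Algebra.algebraMapSubmonoid E D⁰) G]
    (hG : IsNormalRing G) : IsNormalRing E := by
  have hreg : Algebra.algebraMapSubmonoid E D⁰ ≤ E⁰ := by
    rintro _ ⟨d, hd, rfl⟩
    exact algebraMap_mem_nonZeroDivisors_of_flat hd
  refine ⟨?_, (isIntegrallyClosed_iff (FractionRing E)).mpr fun {y} hy ↦ ?_⟩
  · have := hG.isReduced
    exact isReduced_of_injective (algebraMap E G) (IsLocalization.injective G hreg)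
  · obtain ⟨_, ⟨d, hd, rfl⟩, hdy⟩ := exists_smul_mem_range_of_isIntegral hreg hG hy
    exact mem_range_of_isIntegral_of_flat hrad hd hy hdy

end NormalityAscends

section NormalizationOfCompletion

namespace HasGeometricallyNormalFibres

variable {A : Type u} {T : Type v} [CommRing A] [CommRing T] [Algebra A T] [Module.Flat A T]
  (C : Type u) [CommRing C] [IsNoetherianRing C] [Algebra A C] [Module.Finite A C]

variable {C} in
theorem isRadical_map_tensorProduct (h : HasGeometricallyNormalFibres A T) {J : Ideal C}
    (hJ : J.IsRadical) : (J.map (algebraMap C (C ⊗[A] T))).IsRadical := by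
  have : IsReduced (C ⧸ J) := (Ideal.isRadical_iff_quotient_reduced J).mp hJ
  have := h.isReduced_tensorProduct (C ⧸ J)
  rw [Ideal.isRadical_iff_quotient_reduced]
  let e := Algebra.TensorProduct.quotientTensorEquiv (R := A) A T C J
  exact isReduced_of_injective e.symm e.symm.injective

theorem isNormalRing_tensorProduct (h : HasGeometricallyNormalFibres A T) (hC : IsNormalRing C) :
    IsNormalRing (C ⊗[A] T) := by
  have := hC.isReduced
  have := hC.isIntegrallyClosed
  let e : FractionRing C ⊗[A] T ≃+* (C ⊗[A] T) ⊗[C] FractionRing C :=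
    ((Algebra.TensorProduct.comm C _ _).trans
      (Algebra.TensorProduct.cancelBaseChange A C C (FractionRing C) T)).symm.toRingEquiv
  exact .of_isLocalization_algebraMapSubmonoid (fun _ ↦ h.isRadical_map_tensorProduct) _
    ((h.isNormalRing_fractionRing_tensorProduct C).of_ringEquiv e)

end HasGeometricallyNormalFibres

theorem isFractionRing_subalgebra {A F : Type*} [CommRing A] [CommRing F] [Algebra A F]
    [IsFractionRing A F] (C : Subalgebra A F) : IsFractionRing C F where
  map_units := by
    rintro ⟨c, hc⟩
    obtain ⟨⟨a, s⟩, hs⟩ := IsLocalization.surj A⁰ (c : F)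
    suffices ha : a ∈ A⁰ from
      isUnit_of_mul_isUnit_left (hs ▸ IsLocalization.map_units F (⟨a, ha⟩ : A⁰))
    refine mem_nonZeroDivisors_iff_right.mpr fun b hb ↦ IsFractionRing.injective A F ?_
    rw [map_zero]
    have hcb : algebraMap A C b * c = 0 := Subtype.ext <|
      (IsLocalization.map_units F s).mul_left_cancel <| by
        change algebraMap A F s * (algebraMap A F b * c) = algebraMap A F s * 0
        rw [mul_zero, mul_left_comm, mul_comm (algebraMap A F s), hs, ← map_mul, hb, map_zero]
    exact congrArg Subtype.val ((mul_right_mem_nonZeroDivisors_eq_zero_iff hc).mp hcb)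
  surj x := by
    obtain ⟨⟨a, s⟩, hs⟩ := IsLocalization.surj A⁰ x
    have hsC : algebraMap A C s ∈ C⁰ := mem_nonZeroDivisors_of_injective
      (f := C.val) Subtype.val_injective (IsLocalization.map_units F s).mem_nonZeroDivisors
    exact ⟨⟨algebraMap A C a, ⟨_, hsC⟩⟩, hs⟩
  exists_of_eq h := ⟨1, by rw [Subtype.val_injective h]⟩

theorem isNormalRing_integralClosure_fractionRing (A : Type*) [CommRing A] [IsReduced A] :
    IsNormalRing (integralClosure A (FractionRing A)) where
  isReduced :=
    isReduced_of_injective (integralClosure A (FractionRing A)).val Subtype.val_injective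
  isIntegrallyClosed := by
    have := isFractionRing_subalgebra (integralClosure A (FractionRing A))
    exact (isIntegrallyClosed_iff (FractionRing A)).mpr fun {x} hx ↦
      ⟨⟨x, isIntegral_trans x hx⟩, rfl⟩

end NormalizationOfCompletion

/-! ### The conductor -/

section Conductor

open scoped Pointwise in
theorem exists_toSubmodule_integralClosure_eq_map (A : Type*) [CommRing A]
    [Module.Finite A (integralClosure A (FractionRing A))] :
    ∃ s ∈ A⁰, ∃ v : FractionRing A, s • v = 1 ∧ ∃ N : Ideal A,
      Subalgebra.toSubmodule (integralClosure A (FractionRing A)) =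
        Submodule.map (LinearMap.toSpanSingleton A _ v) N := by
  let I : FractionalIdeal A⁰ (FractionRing A) :=
    ⟨Subalgebra.toSubmodule (integralClosure A (FractionRing A)),
      FractionalIdeal.isFractional_of_fg (Module.Finite.iff_fg.mp ‹_›)⟩
  have hnum : I.den • (I : Submodule A (FractionRing A)) =
    Submodule.map (Algebra.linearMap A _) I.num := I.den_mul_self_eq_num
  let v : FractionRing A := IsLocalization.mk' _ 1 I.den
  have hv : (I.den : A) • v = 1 := by
    rw [Algebra.smul_def, IsLocalization.mk'_spec', map_one]
  have hvx {b : A} {x : FractionRing A} (h : algebraMap A _ b = I.den • x) : b • v = x := by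
    rw [Algebra.smul_def, h, Submonoid.smul_def, smul_mul_assoc, ← mul_smul_comm, hv, mul_one]
  refine ⟨I.den, I.den.2, v, hv, I.num, Submodule.ext fun x ↦ ⟨fun hx ↦ ?_, ?_⟩⟩
  · obtain ⟨b, hb, hbx⟩ := hnum.le ⟨x, hx, rfl⟩
    exact ⟨b, hb, hvx hbx⟩
  · rintro ⟨b, hb, rfl⟩
    obtain ⟨x, hx, hbx⟩ := hnum.ge ⟨b, hb, rfl⟩
    rw [LinearMap.toSpanSingleton_apply, hvx hbx.symm]
    exact hx

theorem conductorIdeal_eq_colon {R : Type*} [CommRing R] {s : R} (hs : s ∈ R⁰)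
    {v : FractionRing R} (hv : s • v = 1) {N : Ideal R}
    (hN : Subalgebra.toSubmodule (integralClosure R (FractionRing R)) =
      Submodule.map (LinearMap.toSpanSingleton R _ v) N) :
    conductorIdeal R = (Ideal.span {s}).colon (N : Set R) := by
  have hsF : IsUnit (algebraMap R (FractionRing R) s) := IsLocalization.map_units _ (⟨s, hs⟩ : R⁰)
  have hdvd (a b : R) : algebraMap R (FractionRing R) a * b • v ∈
      (algebraMap R (FractionRing R)).range ↔ s ∣ a * b := by
    have hsv : algebraMap R (FractionRing R) s * (algebraMap R _ a * b • v) =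
        algebraMap R _ (a * b) := by
      rw [← Algebra.smul_def, ← mul_smul_comm, smul_comm, hv, ← Algebra.algebraMap_eq_smul_one,
        map_mul]
    refine exists_congr fun c ↦ ?_
    rw [← hsF.mul_right_inj, hsv, ← map_mul, (IsFractionRing.injective R _).eq_iff, eq_comm]
  ext a
  have hmem : a ∈ conductorIdeal R ↔
      ∀ x ∈ Subalgebra.toSubmodule (integralClosure R (FractionRing R)),
        algebraMap R (FractionRing R) a * x ∈ (algebraMap R (FractionRing R)).range := Iff.rfl
  rw [hmem, hN, Submodule.mem_colon]
  simp only [Submodule.mem_map, forall_exists_index, and_imp, forall_apply_eq_imp_iff₂,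
    LinearMap.toSpanSingleton_apply, hdvd, SetLike.mem_coe, smul_eq_mul, Ideal.mem_span_singleton]

namespace HasGeometricallyNormalFibres

variable {A : Type u} {T : Type v} [CommRing A] [CommRing T] [Algebra A T] [Module.Flat A T]
  [IsNoetherianRing A] [IsReduced A] [Module.Finite A (integralClosure A (FractionRing A))]

theorem mem_range_of_isIntegral (h : HasGeometricallyNormalFibres A T)
    (φ : FractionRing A →ₐ[A] FractionRing T) {y : FractionRing T} (hy : IsIntegral T y) :
    y ∈ (Algebra.TensorProduct.lift (Algebra.ofId T (FractionRing T))
      (φ.comp (integralClosure A (FractionRing A)).val) fun _ _ ↦ .all _ _).range := by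
  let C := integralClosure A (FractionRing A)
  have : IsNoetherianRing C := IsNoetherianRing.of_finite A C
  have hE : IsNormalRing (T ⊗[A] C) :=
    (h.isNormalRing_tensorProduct C (isNormalRing_integralClosure_fractionRing A)).of_ringEquiv
      (Algebra.TensorProduct.comm A C T).toRingEquiv
  let ι : T ⊗[A] C →ₐ[T] T ⊗[A] FractionRing A := Algebra.TensorProduct.map (.id T T) C.val
  have hι : Function.Injective ι :=
    Module.Flat.lTensor_preserves_injective_linearMap C.val.toLinearMap Subtype.val_injective
  have := IsLocalization.flat (T ⊗[A] FractionRing A) (Algebra.algebraMapSubmonoid T A⁰)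
  refine hE.mem_range_of_isIntegral (fun u hu ↦ mem_nonZeroDivisors_of_injective hι ?_) _ hy
  rw [ι.commutes]
  exact algebraMap_mem_nonZeroDivisors_of_flat hu

theorem toSubmodule_integralClosure_eq_span (h : HasGeometricallyNormalFibres A T)
    (φ : FractionRing A →ₐ[A] FractionRing T) :
    Subalgebra.toSubmodule (integralClosure T (FractionRing T)) = Submodule.span T
      (φ '' (Subalgebra.toSubmodule (integralClosure A (FractionRing A)))) := by
  refine le_antisymm (fun y hy ↦ ?_) (Submodule.span_le.mpr ?_)
  · obtain ⟨e, rfl⟩ := h.mem_range_of_isIntegral φ hy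
    clear hy
    induction e with
    | zero => simp
    | add e e' he he' =>
      rw [map_add]
      exact add_mem he he'
    | tmul t x =>
      have hx : φ x ∈ Submodule.span T
          (φ '' (Subalgebra.toSubmodule (integralClosure A (FractionRing A)))) :=
        Submodule.subset_span ⟨x, x.2, rfl⟩
      simpa [← Algebra.smul_def, Algebra.ofId_apply] using Submodule.smul_mem _ t hx
  · rintro _ ⟨x, hx, rfl⟩
    exact (IsIntegral.map φ hx).tower_top

theorem map_conductorIdeal (h : HasGeometricallyNormalFibres A T) :
    (conductorIdeal A).map (algebraMap A T) = conductorIdeal T := by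
  obtain ⟨s, hs, v, hv, N, hN⟩ := exists_toSubmodule_integralClosure_eq_map A
  let φ : FractionRing A →ₐ[A] FractionRing T := IsLocalization.liftAlgHom (M := A⁰)
    (f := Algebra.ofId A _) fun a ↦ IsLocalization.map_units (FractionRing T)
      (⟨_, algebraMap_mem_nonZeroDivisors_of_flat a.2⟩ : T⁰)
  have hφv : algebraMap A T s • φ v = 1 := by
    rw [algebraMap_smul, ← map_smul, hv, map_one]
  have hNT : Subalgebra.toSubmodule (integralClosure T (FractionRing T)) =
      Submodule.map (LinearMap.toSpanSingleton T _ (φ v)) (N.map (algebraMap A T)) := by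
    rw [h.toSubmodule_integralClosure_eq_span φ, hN, Ideal.map, Ideal.span, Submodule.map_span]
    congr 1
    ext y
    simp
  rw [conductorIdeal_eq_colon hs hv hN, map_colon_of_flat _ (IsNoetherian.noetherian N),
    Ideal.map_span, Set.image_singleton,
    conductorIdeal_eq_colon (algebraMap_mem_nonZeroDivisors_of_flat hs) hφv hNT]

end HasGeometricallyNormalFibres

end Conductor

/-- Let `K` be a field, `B` a reduced finitely generated `K`-algebra,
`M ⊆ B` a maximal ideal, `A = B_M`, and `Â` the completion of `A` at its maximal
ideal. Then `Â` is reduced and the conductor commutes with completion: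
`C_A·Â = C_Â`. -/
theorem conductor_commutes_with_completion
    (K : Type*) [Field K] (B : Type*) [CommRing B] [IsReduced B] [Algebra K B]
    [Algebra.FiniteType K B] (M : Ideal B) [M.IsMaximal] :
    IsReduced (AdicCompletion
        (IsLocalRing.maximalIdeal (Localization.AtPrime M)) (Localization.AtPrime M)) ∧
      (conductorIdeal (Localization.AtPrime M)).map
          (algebraMap (Localization.AtPrime M)
            (AdicCompletion
              (IsLocalRing.maximalIdeal (Localization.AtPrime M))
              (Localization.AtPrime M)))
        = conductorIdeal (AdicCompletion
            (IsLocalRing.maximalIdeal (Localization.AtPrime M))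
            (Localization.AtPrime M)) := by
  let A := Localization.AtPrime M
  let T := AdicCompletion (IsLocalRing.maximalIdeal A) A
  have : IsNoetherianRing B := Algebra.FiniteType.isNoetherianRing K B
  have : IsNoetherianRing A := IsLocalization.isNoetherianRing M.primeCompl A inferInstance
  have : IsReduced A := isReduced_localizationPreserves M.primeCompl A inferInstance
  have : Module.Finite A (integralClosure A (FractionRing A)) :=
    finite_integralClosure_fractionRing K B M.primeCompl
  have hfib : HasGeometricallyNormalFibres A T :=
    (IsCompletionAt.adicCompletion (IsNoetherian.noetherian _)).hasGeometricallyNormalFibres K B M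
  have hred : IsReduced (A ⊗[A] T) := hfib.isReduced_tensorProduct A
  let e : A ⊗[A] T ≃ₐ[A] T := Algebra.TensorProduct.lid A T
  exact ⟨isReduced_of_injective e.symm e.symm.injective, hfib.map_conductorIdeal⟩
end
end

section
/- Let A be a reduced Noetherian commutative ring whose integral closure Ā in Q(A) is a finite A-module, let W ⊆ Spec(A), and let J ⊆ A be an ideal. Then: (i) if J is a test ideal at W and P ∈ W, then the localized ideal J_P is a test ideal for A_P; (ii) if W contains the non-normal locus N(A), then J is a test ideal for A if and only if J is a test ideal at W. -/
set_option synthInstance.maxHeartbeats 1000000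
set_option maxHeartbeats 1000000

open scoped nonZeroDivisors

noncomputable section

/-- A test ideal for `A`. -/
def IsTestIdeal (A : Type*) [CommRing A] (J : Ideal A) : Prop :=
  (∃ g ∈ J, g ∈ A⁰) ∧ J.IsRadical ∧
    PrimeSpectrum.zeroLocus (conductorIdeal A : Set A) ⊆
      PrimeSpectrum.zeroLocus (J : Set A)

/-- A test ideal at a subset `W ⊆ Spec A`: it contains a non-zerodivisor, is radical,
and satisfies `V(C_{A_P}) ⊆ V(J_P)` in `Spec A_P` for every `P ∈ W`. -/
def IsTestIdealAt (A : Type*) [CommRing A] (W : Set (PrimeSpectrum A))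
    (J : Ideal A) : Prop :=
  (∃ g ∈ J, g ∈ A⁰) ∧ J.IsRadical ∧
    ∀ P ∈ W,
      PrimeSpectrum.zeroLocus
          (conductorIdeal (Localization.AtPrime P.asIdeal) :
            Set (Localization.AtPrime P.asIdeal)) ⊆
        PrimeSpectrum.zeroLocus
          (J.map (algebraMap A (Localization.AtPrime P.asIdeal)) :
            Set (Localization.AtPrime P.asIdeal))

/-- The non-normal locus of `A`. -/
def nonNormalLocus (A : Type*) [CommRing A] : Set (PrimeSpectrum A) :=
  {P | integralClosure (Localization.AtPrime P.asIdeal)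
      (FractionRing (Localization.AtPrime P.asIdeal)) ≠ ⊥}

/-!
The conductor is the colon ideal `(A : Ā)` in `Q(A)`. When `Q(A)` is zero-dimensional, so is each
localization `M⁻¹Q(A)`, hence its nonzerodivisors are units and `M⁻¹Q(A) = Q(M⁻¹A)`. Integral
closures commute with localization, and so do colons by finitely generated modules; therefore
`C_A · A_P = C_{A_P}`. It follows that `V(C_A) = N(A)`, and the condition `V(C_A) ⊆ V(J)` can be
tested at the closed points of `Spec A_P` for `P ∈ N(A)`. A reduced Noetherian ring has
zero-dimensional `Q(A)` because its zerodivisors form a finite union of minimal primes.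
-/

section KrullDimensionZero

variable {R : Type*} [CommRing R]

lemma isUnit_of_mem_nonZeroDivisors_of_krullDimLE_zero [Ring.KrullDimLE 0 R] {x : R}
    (hx : x ∈ R⁰) : IsUnit x := by
  by_contra hunit
  obtain ⟨m, hm, hxm⟩ := exists_max_ideal_of_mem_nonunits hunit
  exact notMem_nonZeroDivisors_of_mem_mem_minimalPrimes hxm
    m.mem_minimalPrimes_of_krullDimLE_zero hx

lemma iUnion_minimalPrimes_eq_compl_nonZeroDivisors [IsReduced R] :
    ⋃ q ∈ minimalPrimes R, (q : Set R) = (R⁰ : Set R)ᶜ := by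
  rw [minimalPrimes, Ideal.iUnion_minimalPrimes]
  ext x
  simp [Ideal.radical_bot_of_isReduced, mem_nonZeroDivisors_iff_right, mul_comm, and_comm]

lemma mem_minimalPrimes_of_disjoint_nonZeroDivisors [IsReduced R] (hfin : (minimalPrimes R).Finite)
    {p : Ideal R} [hp : p.IsPrime] (hdisj : Disjoint (p : Set R) R⁰) : p ∈ minimalPrimes R := by
  obtain ⟨q, hq, hpq⟩ : ∃ q ∈ minimalPrimes R, p ≤ q :=
    (p.subset_union_prime_finite hfin (f := id) 0 0 fun q hq _ _ ↦ hq.1.1).1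
      (iUnion_minimalPrimes_eq_compl_nonZeroDivisors (R := R) ▸ hdisj.subset_compl_right)
  rwa [hpq.antisymm (hq.2 ⟨hp, bot_le⟩ hpq)]

variable {S : Type*} [CommRing S] [Algebra R S]

lemma krullDimLE_zero_of_isLocalization (M : Submonoid R) [IsLocalization M S]
    [Ring.KrullDimLE 0 R] : Ring.KrullDimLE 0 S := by
  have comap_strictMono : StrictMono (PrimeSpectrum.comap (algebraMap R S)) :=
    Monotone.strictMono_of_injective (fun _ _ h ↦ Ideal.comap_mono h)
      (PrimeSpectrum.localization_comap_injective S M)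
  exact ⟨(Order.krullDim_le_of_strictMono _ comap_strictMono).trans Order.KrullDimLE.krullDim_le⟩

lemma krullDimLE_zero_of_isFractionRing [IsReduced R] (hfin : (minimalPrimes R).Finite)
    [IsFractionRing R S] : Ring.KrullDimLE 0 S := by
  have comap_mem_minimalPrimes (q : Ideal S) [q.IsPrime] :
      q.comap (algebraMap R S) ∈ minimalPrimes R :=
    mem_minimalPrimes_of_disjoint_nonZeroDivisors hfin
      ((IsLocalization.isPrime_iff_isPrime_disjoint R⁰ S q).mp ‹_›).2.symm
  refine .mk₀ fun q hq ↦ ?_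
  obtain ⟨m, hm, hqm⟩ := q.exists_le_maximal hq.ne_top
  have comap_le : m.comap (algebraMap R S) ≤ q.comap (algebraMap R S) :=
    (comap_mem_minimalPrimes m).2 ⟨inferInstance, bot_le⟩ (Ideal.comap_mono hqm)
  rwa [hqm.antisymm ((IsLocalization.orderEmbedding R⁰ S).le_iff_le.mp comap_le)]

end KrullDimensionZero

section LocalizedColon

variable {R X : Type*} [CommRing R] [AddCommGroup X] [Module R X] (M : Submonoid R)
  {N P : Submodule R X}

lemma exists_mem_forall_smul_mem_of_fg (hP : P.FG) (h : ∀ x ∈ P, ∃ s ∈ M, s • x ∈ N) :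
    ∃ s ∈ M, ∀ x ∈ P, s • x ∈ N := by
  induction P, hP using Submodule.fg_induction with
  | singleton x =>
    obtain ⟨s, hs, hsx⟩ := h x (Submodule.mem_span_singleton_self x)
    refine ⟨s, hs, fun y hy ↦ ?_⟩
    obtain ⟨r, rfl⟩ := Submodule.mem_span_singleton.mp hy
    rw [smul_comm]
    exact N.smul_mem r hsx
  | sup P₁ P₂ _ _ ih₁ ih₂ =>
    obtain ⟨s, hs, hsP₁⟩ := ih₁ fun x hx ↦ h x (Submodule.mem_sup_left hx)
    obtain ⟨t, ht, htP₂⟩ := ih₂ fun x hx ↦ h x (Submodule.mem_sup_right hx)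
    refine ⟨s * t, mul_mem hs ht, fun x hx ↦ ?_⟩
    obtain ⟨y, hy, z, hz, rfl⟩ := Submodule.mem_sup.mp hx
    rw [smul_add, mul_smul s t z, mul_comm, mul_smul]
    exact N.add_mem (N.smul_mem t (hsP₁ y hy)) (N.smul_mem s (htP₂ z hz))

variable {Y : Type*} (S : Type*) [CommRing S] [Algebra R S] [IsLocalization M S]
  [AddCommGroup Y] [Module R Y] [Module S Y] [IsScalarTower R S Y]
  (f : X →ₗ[R] Y) [IsLocalizedModule M f]

lemma exists_smul_mem_of_map_mem_localized' {x : X} (hx : f x ∈ N.localized' S M f) :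
    ∃ s ∈ M, s • x ∈ N := by
  obtain ⟨y, hy, s, hxy⟩ := hx
  rw [IsLocalizedModule.mk'_eq_iff, Submonoid.smul_def, ← map_smul] at hxy
  obtain ⟨t, ht⟩ := IsLocalizedModule.exists_of_eq (S := M) hxy
  refine ⟨t * s, mul_mem t.2 s.2, ?_⟩
  rw [mul_smul]
  exact ht ▸ N.smul_mem t hy

lemma map_colon_le_colon_localized' :
    (N.colon (P : Set X)).map (algebraMap R S) ≤
      (N.localized' S M f).colon (P.localized' S M f : Set Y) := by
  refine Ideal.map_le_iff_le_comap.mpr fun r hr ↦ Submodule.mem_colon.mpr ?_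
  rintro _ ⟨x, hx, s, rfl⟩
  exact ⟨r • x, Submodule.mem_colon.mp hr x hx, s, by
    rw [algebraMap_smul, IsLocalizedModule.mk'_smul]⟩

lemma colon_localized'_le_map_colon (hP : P.FG) :
    (N.localized' S M f).colon (P.localized' S M f : Set Y) ≤
      (N.colon (P : Set X)).map (algebraMap R S) := by
  intro b hb
  obtain ⟨r, s, rfl⟩ := IsLocalization.exists_mk'_eq M b
  have map_smul_mem (x : X) (hx : x ∈ P) : f (r • x) ∈ N.localized' S M f := by
    have mk'_smul_mem := Submodule.mem_colon.mp hb (f x) ⟨x, hx, 1, by simp⟩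
    have smul_mk'_smul_mem := (N.localized' S M f).smul_mem (algebraMap R S s) mk'_smul_mem
    rwa [smul_smul, IsLocalization.mk'_spec', algebraMap_smul, ← map_smul] at smul_mk'_smul_mem
  obtain ⟨t, ht, htP⟩ : ∃ t ∈ M, ∀ x ∈ P, t • x ∈ N.comap (LinearMap.lsmul R X r) :=
    exists_mem_forall_smul_mem_of_fg M hP fun x hx ↦ by
      obtain ⟨t, ht, htx⟩ := exists_smul_mem_of_map_mem_localized' M S f (map_smul_mem x hx)
      exact ⟨t, ht, by rwa [Submodule.mem_comap, LinearMap.lsmul_apply, smul_comm]⟩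
  rw [IsLocalization.mk'_mem_map_algebraMap_iff]
  refine ⟨t, ht, Submodule.mem_colon.mpr fun x hx ↦ ?_⟩
  rw [mul_comm, mul_smul]
  exact htP x hx

end LocalizedColon

section LocalizedAlgebra

variable {A B K L : Type*} [CommRing A] [CommRing B] [CommRing K] [CommRing L]
  [Algebra A B] [Algebra A K] [Algebra A L] [Algebra B L] [Algebra K L]
  [IsScalarTower A B L] [IsScalarTower A K L]

lemma isFractionRing_of_isLocalization_of_krullDimLE_zero (M : Submonoid A) [IsLocalization M B]
    [IsLocalization (Algebra.algebraMapSubmonoid K M) L] [IsFractionRing A K]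
    [Ring.KrullDimLE 0 L] : IsFractionRing B L := by
  have : IsLocalization (Algebra.algebraMapSubmonoid B A⁰) L := IsLocalization.commutes B K L M A⁰
  refine IsLocalization.of_le (Algebra.algebraMapSubmonoid B A⁰) _
    (IsLocalization.map_nonZeroDivisors_le M B) fun b hb ↦ ?_
  exact isUnit_of_mem_nonZeroDivisors_of_krullDimLE_zero
    (IsLocalization.nonZeroDivisors_le_comap (Algebra.algebraMapSubmonoid B A⁰) L hb)

variable (M : Submonoid A) [IsLocalization M B] [IsLocalization (Algebra.algebraMapSubmonoid K M) L]

lemma localized'_one :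
    (1 : Submodule A K).localized' B M (IsScalarTower.toAlgHom A K L).toLinearMap = 1 := by
  rw [Submodule.one_eq_span, Submodule.localized'_span, Submodule.one_eq_span]
  simp

lemma localized'_integralClosure :
    (integralClosure A K).toSubmodule.localized' B M (IsScalarTower.toAlgHom A K L).toLinearMap =
      (integralClosure B L).toSubmodule := by
  refine le_antisymm ?_ fun x hx ↦ ?_
  · rw [Submodule.localized'_eq_span, Submodule.span_le]
    rintro _ ⟨y, hy, rfl⟩
    exact (IsIntegral.map (IsScalarTower.toAlgHom A K L) hy).tower_top
  · obtain ⟨s, hsx⟩ := IsIntegral.exists_multiple_integral_of_isLocalization M x hx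
    obtain ⟨⟨y, t⟩, hy⟩ := IsLocalizedModule.surj M (IsScalarTower.toAlgHom A K L).toLinearMap x
    have isIntegral_map : IsIntegral A (algebraMap K L ((s : A) • y)) := by
      have map_eq : algebraMap K L ((s : A) • y) = (t : A) • (s : A) • x := by
        rw [smul_comm]
        exact (map_smul (IsScalarTower.toAlgHom A K L) (s : A) y).trans
          (congrArg ((s : A) • ·) hy.symm)
      exact map_eq ▸ hsx.smul (t : A)
    obtain ⟨u, hu, huy⟩ := IsLocalization.exists_isIntegral_smul_of_isIntegral_map M isIntegral_map
    refine ⟨u • (s : A) • y, huy, ⟨u, hu⟩ * s * t, IsLocalizedModule.mk'_eq_iff.mpr ?_⟩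
    rw [map_smul, map_smul, ← hy, mul_smul, mul_smul]
    rfl

end LocalizedAlgebra

section Conductor

variable {A : Type*} [CommRing A]

lemma colon_integralClosure_le_of_algEquiv {K K' : Type*} [CommRing K] [CommRing K']
    [Algebra A K] [Algebra A K'] (e : K ≃ₐ[A] K') :
    (1 : Submodule A K).colon ((integralClosure A K).toSubmodule : Set K) ≤
      (1 : Submodule A K').colon ((integralClosure A K').toSubmodule : Set K') := by
  intro a ha
  refine Submodule.mem_colon.mpr fun x hx ↦ ?_
  obtain ⟨b, hb⟩ := Submodule.mem_one.mp (Submodule.mem_colon.mp ha (e.symm x) (hx.map e.symm))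
  exact Submodule.mem_one.mpr ⟨b, by rw [← e.commutes, hb, map_smul, e.apply_symm_apply]⟩

variable (A)

lemma conductorIdeal_eq_colon_s6 (K : Type*) [CommRing K] [Algebra A K] [IsFractionRing A K] :
    conductorIdeal A = (1 : Submodule A K).colon ((integralClosure A K).toSubmodule : Set K) := by
  have eq_colon_fractionRing : conductorIdeal A =
      (1 : Submodule A (FractionRing A)).colon
        ((integralClosure A (FractionRing A)).toSubmodule : Set (FractionRing A)) := by
    ext a
    simp only [Submodule.mem_colon, Algebra.smul_def, Submodule.mem_one]
    rfl
  rw [eq_colon_fractionRing]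
  exact le_antisymm (colon_integralClosure_le_of_algEquiv (FractionRing.algEquiv A K))
    (colon_integralClosure_le_of_algEquiv (FractionRing.algEquiv A K).symm)

lemma conductorIdeal_eq_top_iff :
    conductorIdeal A = ⊤ ↔ integralClosure A (FractionRing A) = ⊥ := by
  rw [Ideal.eq_top_iff_one, conductorIdeal_eq_colon_s6 A (FractionRing A), Submodule.mem_colon,
    eq_bot_iff, SetLike.le_def]
  simp only [one_smul, SetLike.mem_coe, Subalgebra.mem_toSubmodule, Submodule.mem_one,
    Algebra.mem_bot, Set.mem_range]

end Conductor

section ConductorLocalization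

variable {A : Type*} [CommRing A] (M : Submonoid A)

lemma conductorIdeal_eq_colon_localized' (B K L : Type*) [CommRing B] [CommRing K] [CommRing L]
    [Algebra A B] [Algebra A K] [Algebra A L] [Algebra B L] [Algebra K L]
    [IsScalarTower A B L] [IsScalarTower A K L] [IsLocalization M B] [IsFractionRing A K]
    [IsLocalization (Algebra.algebraMapSubmonoid K M) L] [Ring.KrullDimLE 0 K] :
    conductorIdeal B =
      ((1 : Submodule A K).localized' B M (IsScalarTower.toAlgHom A K L).toLinearMap).colon
        ((integralClosure A K).toSubmodule.localized' B M
          (IsScalarTower.toAlgHom A K L).toLinearMap : Set L) := by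
  have : Ring.KrullDimLE 0 L :=
    krullDimLE_zero_of_isLocalization (Algebra.algebraMapSubmonoid K M)
  have : IsFractionRing B L := isFractionRing_of_isLocalization_of_krullDimLE_zero (K := K) M
  rw [localized'_one, localized'_integralClosure]
  exact conductorIdeal_eq_colon_s6 B L

variable [Ring.KrullDimLE 0 (FractionRing A)]

lemma map_conductorIdeal_le :
    (conductorIdeal A).map (algebraMap A (Localization M)) ≤ conductorIdeal (Localization M) := by
  rw [conductorIdeal_eq_colon_s6 A (FractionRing A),
    conductorIdeal_eq_colon_localized' M (Localization M) (FractionRing A)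
      (Localization (Algebra.algebraMapSubmonoid (FractionRing A) M))]
  exact map_colon_le_colon_localized' M (Localization M) _

lemma map_conductorIdeal [Module.Finite A (integralClosure A (FractionRing A))] :
    (conductorIdeal A).map (algebraMap A (Localization M)) = conductorIdeal (Localization M) := by
  refine (map_conductorIdeal_le M).antisymm ?_
  rw [conductorIdeal_eq_colon_s6 A (FractionRing A),
    conductorIdeal_eq_colon_localized' M (Localization M) (FractionRing A)
      (Localization (Algebra.algebraMapSubmonoid (FractionRing A) M))]
  exact colon_localized'_le_map_colon M (Localization M) _ (Module.Finite.iff_fg.mp ‹_›)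

end ConductorLocalization

section TestIdeal

lemma zeroLocus_map {R S : Type*} [CommRing R] [CommRing S] (f : R →+* S) (I : Ideal R) :
    PrimeSpectrum.zeroLocus (I.map f : Set S) =
      PrimeSpectrum.comap f ⁻¹' PrimeSpectrum.zeroLocus (I : Set R) := by
  rw [PrimeSpectrum.preimage_comap_zeroLocus, Ideal.map, PrimeSpectrum.zeroLocus_span]

variable {A : Type*} [CommRing A]

lemma comap_algebraMap_closedPoint (P : PrimeSpectrum A) :
    PrimeSpectrum.comap (algebraMap A (Localization.AtPrime P.asIdeal))
      (IsLocalRing.closedPoint (Localization.AtPrime P.asIdeal)) = P :=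
  PrimeSpectrum.ext Localization.AtPrime.under_maximalIdeal

lemma zeroLocus_conductorIdeal [Ring.KrullDimLE 0 (FractionRing A)]
    [Module.Finite A (integralClosure A (FractionRing A))] :
    PrimeSpectrum.zeroLocus (conductorIdeal A : Set A) = nonNormalLocus A := by
  ext P
  calc P ∈ PrimeSpectrum.zeroLocus (conductorIdeal A : Set A)
    _ ↔ Disjoint (P.asIdeal.primeCompl : Set A) (conductorIdeal A) := by
      rw [PrimeSpectrum.mem_zeroLocus, ← Set.disjoint_compl_left_iff_subset]
      rfl
    _ ↔ (conductorIdeal A).map (algebraMap A (Localization.AtPrime P.asIdeal)) ≠ ⊤ :=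
      (IsLocalization.map_algebraMap_ne_top_iff_disjoint ..).symm
    _ ↔ P ∈ nonNormalLocus A := by
      rw [map_conductorIdeal, Ne, conductorIdeal_eq_top_iff]
      rfl

variable {W : Set (PrimeSpectrum A)} {J : Ideal A}

lemma IsTestIdealAt.isTestIdeal_localization (hJ : IsTestIdealAt A W J) {P : PrimeSpectrum A}
    (hP : P ∈ W) : IsTestIdeal (Localization.AtPrime P.asIdeal)
      (J.map (algebraMap A (Localization.AtPrime P.asIdeal))) := by
  obtain ⟨⟨g, hgJ, hg⟩, hrad, hlocus⟩ := hJ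
  refine ⟨⟨_, Ideal.mem_map_of_mem _ hgJ,
    IsLocalization.nonZeroDivisors_le_comap P.asIdeal.primeCompl _ hg⟩, ?_, hlocus P hP⟩
  rw [← hrad.radical, IsLocalization.map_radical P.asIdeal.primeCompl]
  exact Ideal.radical_isRadical _

lemma IsTestIdeal.isTestIdealAt [Ring.KrullDimLE 0 (FractionRing A)] (hJ : IsTestIdeal A J)
    (W : Set (PrimeSpectrum A)) : IsTestIdealAt A W J := by
  obtain ⟨hreg, hrad, hlocus⟩ := hJ
  refine ⟨hreg, hrad, fun P _ ↦ ?_⟩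
  refine (PrimeSpectrum.zeroLocus_anti_mono (map_conductorIdeal_le P.asIdeal.primeCompl)).trans ?_
  rw [zeroLocus_map, zeroLocus_map]
  exact Set.preimage_mono hlocus

lemma IsTestIdealAt.isTestIdeal [Ring.KrullDimLE 0 (FractionRing A)]
    [Module.Finite A (integralClosure A (FractionRing A))] (hJ : IsTestIdealAt A W J)
    (hW : nonNormalLocus A ⊆ W) : IsTestIdeal A J := by
  obtain ⟨hreg, hrad, hlocus⟩ := hJ
  refine ⟨hreg, hrad, fun P hP ↦ ?_⟩
  have closedPoint_mem : IsLocalRing.closedPoint (Localization.AtPrime P.asIdeal) ∈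
      PrimeSpectrum.zeroLocus (J.map (algebraMap A (Localization.AtPrime P.asIdeal)) : Set _) := by
    refine hlocus P (hW (zeroLocus_conductorIdeal (A := A) ▸ hP)) ?_
    rwa [← map_conductorIdeal, zeroLocus_map, Set.mem_preimage, comap_algebraMap_closedPoint]
  rwa [zeroLocus_map, Set.mem_preimage, comap_algebraMap_closedPoint] at closedPoint_mem

end TestIdeal

theorem test_ideal_localization_general
    (A : Type*) [CommRing A] [Ring.KrullDimLE 0 (FractionRing A)]
    [Module.Finite A (integralClosure A (FractionRing A))]
    (W : Set (PrimeSpectrum A)) (J : Ideal A) :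
    (IsTestIdealAt A W J → ∀ P ∈ W,
        IsTestIdeal (Localization.AtPrime P.asIdeal)
          (J.map (algebraMap A (Localization.AtPrime P.asIdeal)))) ∧
      (nonNormalLocus A ⊆ W → (IsTestIdeal A J ↔ IsTestIdealAt A W J)) :=
  ⟨fun hJ _ hP ↦ hJ.isTestIdeal_localization hP,
    fun hW ↦ ⟨fun hJ ↦ hJ.isTestIdealAt W, fun hJ ↦ hJ.isTestIdeal hW⟩⟩

/-- Let `A` be a reduced Noetherian ring with finite normalization,
`W ⊆ Spec A` and `J ⊆ A` an ideal. (i) If `J` is a test ideal at `W` and `P ∈ W`,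
then `J_P` is a test ideal for `A_P`. (ii) If `W ⊇ N(A)`, then `J` is a test ideal
for `A` iff it is a test ideal at `W`. -/
theorem test_ideal_localization
    (A : Type*) [CommRing A] [IsReduced A] [IsNoetherianRing A]
    [Module.Finite A (integralClosure A (FractionRing A))]
    (W : Set (PrimeSpectrum A)) (J : Ideal A) :
    (IsTestIdealAt A W J → ∀ P ∈ W,
        IsTestIdeal (Localization.AtPrime P.asIdeal)
          (J.map (algebraMap A (Localization.AtPrime P.asIdeal)))) ∧
      (nonNormalLocus A ⊆ W → (IsTestIdeal A J ↔ IsTestIdealAt A W J)) := by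
  have := krullDimLE_zero_of_isFractionRing (S := FractionRing A)
    (minimalPrimes.finite_of_isNoetherianRing A)
  exact test_ideal_localization_general A W J
end
end

section
/- Let A be a reduced Noetherian commutative ring whose integral closure Ā in Q(A) is a finite A-module, let A ⊆ A′ ⊆ Ā be an intermediate ring, let W ⊆ Spec(A), let J be a test ideal at W, and set J′ = √(J·A′). If A′ = End_{A′}(J′), i.e., every x ∈ Q(A) with x·J′ ⊆ J′ lies in A′, then the localization A′_P (at the multiplicative set A∖P) is integrally closed in its total ring of fractions for every P ∈ W. -/
set_option synthInstance.maxHeartbeats 1000000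
set_option maxHeartbeats 1000000

open scoped nonZeroDivisors

noncomputable section

/-!
Write `R = A'`, `Q = Q(A)` and `I = J'`. If `x ∈ Q` is integral and `z = x * j` lies in `R` for some
`j ∈ I`, then `z` lies in every prime containing `I`, by lying over, hence in `I`. So for an
integral `x`, the inclusion `x * I ⊆ R` improves to `x * I ⊆ I` and gives `x ∈ R`; iterating,
`x * I ^ k ⊆ R` already forces `x ∈ R`. At a prime `P ∈ W` the test ideal condition says that, up to
radical, `J` consists of denominators of `x` after localizing at `P`. As `R` is Noetherian, a single
`m ∈ A ∖ P` then satisfies `m * x * I ^ k ⊆ R`, so `m * x ∈ R`. Finally, because `Q` is Artinian,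
the total ring of fractions of `R_P` is `Q_P`, and integral closure commutes with localization.
-/

theorem krullDimLE_zero_of_isReduced_of_isFractionRing_self {Q : Type*} [CommRing Q] [IsReduced Q]
    [IsNoetherianRing Q] [IsFractionRing Q Q] : Ring.KrullDimLE 0 Q := by
  refine .mk₀ fun p hp ↦ ?_
  obtain ⟨m, hm, hpm⟩ := p.exists_le_maximal hp.ne_top
  have hm_disjoint : Disjoint (m : Set Q) Q⁰ := Set.disjoint_left.mpr fun a ham ha ↦
    hm.ne_top (m.eq_top_of_isUnit_mem ham
      (IsFractionRing.self_iff_nonZeroDivisors_le_isUnit.mp ‹_› ha))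
  obtain ⟨-, w, hw, hw_ne⟩ := SetLike.lt_iff_le_and_exists.mp
    (Ideal.bot_lt_annihilator_of_disjoint_nonZeroDivisors hm_disjoint)
  have hwm : ∀ a ∈ m, w * a = 0 := Submodule.mem_annihilator.mp hw
  have hwp : w ∉ p := fun h ↦
    hw_ne (IsReduced.eq_zero w ⟨2, by rw [pow_two, hwm w (hpm h)]⟩)
  have hmp : m ≤ p := fun a ha ↦
    (hp.mem_or_mem (hwm a ha ▸ p.zero_mem)).resolve_left hwp
  exact le_antisymm hpm hmp ▸ hm

theorem isReduced_of_isLocalization {R Q : Type*} [CommRing R] [IsReduced R] [CommRing Q]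
    [Algebra R Q] (M : Submonoid R) [IsLocalization M Q] : IsReduced Q :=
  isReduced_of_injective _ (IsLocalization.algEquiv M Q (Localization M)).injective

theorem isArtinianRing_of_isFractionRing (R Q : Type*) [CommRing R] [IsReduced R]
    [IsNoetherianRing R] [CommRing Q] [Algebra R Q] [IsFractionRing R Q] : IsArtinianRing Q := by
  have : IsReduced Q := isReduced_of_isLocalization R⁰
  have : IsNoetherianRing Q := IsLocalization.isNoetherianRing R⁰ Q ‹_›
  have : IsFractionRing Q Q := IsFractionRing.idem R Q
  exact isArtinianRing_iff_krullDimLE_zero.mpr krullDimLE_zero_of_isReduced_of_isFractionRing_self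

theorem isFractionRing_of_isLocalization_of_isFractionRing_self {R Q : Type*} [CommRing R]
    [CommRing Q] [Algebra R Q] [IsFractionRing Q Q] (N : Submonoid R) (hN : N ≤ R⁰)
    [IsLocalization N Q] : IsFractionRing R Q :=
  IsLocalization.of_le N R⁰ hN fun _ hr ↦ IsFractionRing.self_iff_nonZeroDivisors_le_isUnit.mp ‹_›
    (IsLocalization.map_nonZeroDivisors_le N Q (Submonoid.mem_map_of_mem _ hr))

theorem isLocalization_algebraMapSubmonoid_of_faithfulSMul {A Q : Type*} (R : Type*) [CommRing A]
    [CommRing R] [CommRing Q] [Algebra A R] [Algebra A Q] [Algebra R Q] [IsScalarTower A R Q]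
    [FaithfulSMul R Q] (M : Submonoid A) [IsLocalization M Q] :
    IsLocalization (Algebra.algebraMapSubmonoid R M) Q where
  map_units := by
    rintro ⟨_, m, hm, rfl⟩
    rw [← IsScalarTower.algebraMap_apply]
    exact IsLocalization.map_units Q (⟨m, hm⟩ : M)
  surj q := by
    obtain ⟨⟨a, m⟩, h⟩ := IsLocalization.surj M q
    refine ⟨(algebraMap A R a, ⟨_, Algebra.mem_algebraMapSubmonoid_of_mem m⟩), ?_⟩
    simpa only [← IsScalarTower.algebraMap_apply] using h
  exists_of_eq h := ⟨1, by rw [FaithfulSMul.algebraMap_injective R Q h]⟩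

theorem isFractionRing_of_isScalarTower_of_faithfulSMul (A R Q : Type*) [CommRing A] [CommRing R]
    [CommRing Q] [Algebra A R] [Algebra A Q] [Algebra R Q] [IsScalarTower A R Q]
    [FaithfulSMul R Q] [IsFractionRing A Q] : IsFractionRing R Q := by
  have : IsFractionRing Q Q := IsFractionRing.idem A Q
  have := isLocalization_algebraMapSubmonoid_of_faithfulSMul (Q := Q) R A⁰
  refine isFractionRing_of_isLocalization_of_isFractionRing_self
    (Algebra.algebraMapSubmonoid R A⁰) ?_
  rintro _ ⟨a, ha, rfl⟩
  refine mem_nonZeroDivisors_of_injective (FaithfulSMul.algebraMap_injective R Q) ?_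
  rw [← IsScalarTower.algebraMap_apply]
  exact (IsLocalization.map_units Q (⟨a, ha⟩ : A⁰)).mem_nonZeroDivisors

theorem isFractionRing_localization_of_isArtinianRing {R Q B S : Type*} [CommRing R] [CommRing Q]
    [CommRing B] [CommRing S] [Algebra R Q] [Algebra R B] [Algebra R S] [Algebra Q S] [Algebra B S]
    [IsScalarTower R Q S] [IsScalarTower R B S] [IsArtinianRing Q] [IsFractionRing R Q]
    (M : Submonoid R) [IsLocalization M B] [IsLocalization (Algebra.algebraMapSubmonoid Q M) S] :
    IsFractionRing B S := by
  have : IsLocalization (Algebra.algebraMapSubmonoid B R⁰) S :=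
    IsLocalization.commutes B Q S M R⁰
  have : IsArtinianRing S :=
    IsArtinianRing.localization_artinian (Algebra.algebraMapSubmonoid Q M) S
  have : IsFractionRing S S := IsFractionRing.self_iff_nonZeroDivisors_le_isUnit.mpr fun _ ↦
    IsArtinianRing.isUnit_of_mem_nonZeroDivisors
  exact isFractionRing_of_isLocalization_of_isFractionRing_self
    (Algebra.algebraMapSubmonoid B R⁰) (IsLocalization.map_nonZeroDivisors_le M B)

theorem exists_smul_eq_zero_of_algHom_eq_zero {R Q B T : Type*} [CommRing R] [CommRing Q]
    [CommRing B] [CommRing T] [Algebra R Q] [Algebra R B] [Algebra R T] [Algebra B T]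
    [IsScalarTower R B T] [IsFractionRing R Q] [FaithfulSMul B T] (M : Submonoid R)
    [IsLocalization M B] (φ : Q →ₐ[R] T) {q : Q} (hq : φ q = 0) : ∃ m ∈ M, m • q = 0 := by
  obtain ⟨⟨a, v⟩, hqa⟩ := IsLocalization.surj R⁰ q
  have haB : algebraMap R B a = 0 := FaithfulSMul.algebraMap_injective B T <| by
    rw [← IsScalarTower.algebraMap_apply, ← φ.commutes, ← hqa, map_mul, hq, zero_mul, map_zero]
  obtain ⟨m, hma⟩ := (IsLocalization.map_eq_zero_iff M B a).mp haB
  refine ⟨m, m.2, (IsLocalization.map_units Q v).mul_left_eq_zero.mp ?_⟩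
  rw [smul_mul_assoc, hqa, Algebra.smul_def, ← map_mul, hma, map_zero]

theorem exists_mem_span_singleton_mul_le_of_map_le_map {R B : Type*} [CommRing R]
    [CommRing B] [Algebra R B] (M : Submonoid R) [IsLocalization M B] {I D : Ideal R} (hI : I.FG)
    (h : I.map (algebraMap R B) ≤ D.map (algebraMap R B)) :
    ∃ m ∈ M, Ideal.span {m} * I ≤ D := by
  induction I, hI using Submodule.fg_induction with
  | singleton a =>
    obtain ⟨m, hm, hma⟩ := (IsLocalization.algebraMap_mem_map_algebraMap_iff M B D a).mp
      (h (Ideal.mem_map_of_mem _ (Ideal.mem_span_singleton_self a)))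
    refine ⟨m, hm, ?_⟩
    rwa [Ideal.submodule_span_eq, Ideal.span_singleton_mul_span_singleton,
      Ideal.span_singleton_le_iff_mem]
  | sup I₁ I₂ _ _ ih₁ ih₂ =>
    rw [Ideal.map_sup, sup_le_iff] at h
    obtain ⟨m₁, hm₁, h₁⟩ := ih₁ h.1
    obtain ⟨m₂, hm₂, h₂⟩ := ih₂ h.2
    refine ⟨m₁ * m₂, mul_mem hm₁ hm₂, ?_⟩
    rw [← Ideal.span_singleton_mul_span_singleton, Ideal.mul_sup, sup_le_iff]
    constructor
    · rw [mul_comm (Ideal.span _), mul_assoc]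
      exact Ideal.mul_le_right.trans h₁
    · rw [mul_assoc]
      exact Ideal.mul_le_right.trans h₂

section DenominatorIdeal

/-- The ideal `{d ∈ R | d x ∈ R}` of denominators of an element `x` of an `R`-algebra. -/
def denominatorIdeal (R : Type*) {S : Type*} [CommRing R] [CommRing S] [Algebra R S] (x : S) :
    Ideal R :=
  (1 : Submodule R S).colon {x}

variable {R S : Type*} [CommRing R] [CommRing S] [Algebra R S]

theorem mem_denominatorIdeal {x : S} {d : R} :
    d ∈ denominatorIdeal R x ↔ ∃ r : R, algebraMap R S r = d • x := by
  rw [denominatorIdeal, Submodule.mem_colon_singleton, Submodule.mem_one]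

theorem mem_denominatorIdeal_smul {x : S} {d m : R} :
    d ∈ denominatorIdeal R (m • x) ↔ m * d ∈ denominatorIdeal R x := by
  rw [mem_denominatorIdeal, mem_denominatorIdeal, smul_smul, mul_comm]

theorem map_denominatorIdeal_le {A : Type*} [CommRing A] [Algebra A R] [Algebra A S]
    [IsScalarTower A R S] (x : S) :
    (denominatorIdeal A x).map (algebraMap A R) ≤ denominatorIdeal R x := by
  refine Ideal.map_le_iff_le_comap.mpr fun d hd ↦ ?_
  obtain ⟨a, ha⟩ := mem_denominatorIdeal.mp hd
  refine mem_denominatorIdeal.mpr ⟨algebraMap A R a, ?_⟩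
  rw [← IsScalarTower.algebraMap_apply, ha, algebraMap_smul]

theorem conductorIdeal_le_map_denominatorIdeal {A Q B : Type*} [CommRing A] [CommRing Q]
    [CommRing B] [Algebra A Q] [IsFractionRing A Q] [Algebra A B] (M : Submonoid A)
    [IsLocalization M B] {x : Q} (hx : IsIntegral A x) :
    conductorIdeal B ≤ (denominatorIdeal A x).map (algebraMap A B) := by
  intro c hc
  let φ : Q →ₐ[A] FractionRing B := IsLocalization.liftAlgHom (M := A⁰)
    (f := Algebra.ofId A (FractionRing B)) fun v ↦ by
      simpa only [Algebra.ofId_apply, ← IsScalarTower.algebraMap_apply] using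
        IsLocalization.map_units (FractionRing B) (⟨algebraMap A B v,
          IsLocalization.map_nonZeroDivisors_le M B (Submonoid.mem_map_of_mem _ v.2)⟩ : B⁰)
  obtain ⟨b, hb⟩ := hc (φ x) (hx.map φ).tower_top
  obtain ⟨⟨a, s⟩, hcs⟩ := IsLocalization.surj M c
  obtain ⟨⟨a', s'⟩, hbs'⟩ := IsLocalization.surj M b
  have hφ : φ (((s' : A) * a) • x - algebraMap A Q (s * a')) = 0 := by
    have hcsT := congrArg (algebraMap B (FractionRing B)) hcs
    have hbsT := congrArg (algebraMap B (FractionRing B)) hbs'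
    simp only [map_mul, ← IsScalarTower.algebraMap_apply A B (FractionRing B)] at hcsT hbsT
    rw [map_sub, map_smul, φ.commutes, Algebra.smul_def, map_mul, map_mul, ← hcsT, ← hbsT, hb]
    ring
  obtain ⟨t, ht, htx⟩ := exists_smul_eq_zero_of_algHom_eq_zero (B := B) M φ hφ
  have hden : t * (s' * a) ∈ denominatorIdeal A x := mem_denominatorIdeal.mpr
    ⟨t * (s * a'), by
      rw [smul_sub, sub_eq_zero, smul_smul] at htx
      rw [htx, map_mul, Algebra.smul_def]⟩
  refine (IsLocalization.mem_map_algebraMap_iff M B).mpr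
    ⟨(⟨_, hden⟩, ⟨_, mul_mem (mul_mem ht s'.2) s.2⟩), ?_⟩
  simp only [map_mul, ← hcs]
  ring

end DenominatorIdeal

section GrauertRemmert

variable {R S : Type*} [CommRing R] [CommRing S] [Algebra R S] [FaithfulSMul R S]

theorem comap_map_le_radical_of_isIntegral [Algebra.IsIntegral R S] (I : Ideal R) :
    (I.map (algebraMap R S)).comap (algebraMap R S) ≤ I.radical := by
  rw [Ideal.radical_eq_sInf]
  refine le_sInf fun p ⟨hIp, hp⟩ ↦ ?_
  obtain ⟨q, hq⟩ := Algebra.IsIntegral.comap_surjective R S ⟨p, hp⟩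
  obtain rfl : q.asIdeal.comap (algebraMap R S) = p := congrArg PrimeSpectrum.asIdeal hq
  exact Ideal.comap_mono (Ideal.map_le_iff_le_comap.mpr hIp)

theorem mem_radical_of_algebraMap_eq_smul {I : Ideal R} {x : S} (hx : IsIntegral R x) {j z : R}
    (hj : j ∈ I) (hz : algebraMap R S z = j • x) : z ∈ I.radical := by
  have : FaithfulSMul R (integralClosure R S) := FaithfulSMul.tower_bot R _ S
  refine comap_map_le_radical_of_isIntegral (S := integralClosure R S) I ?_
  have hz' : algebraMap R (integralClosure R S) z =
      algebraMap R (integralClosure R S) j * ⟨x, hx⟩ :=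
    Subtype.ext (hz.trans (Algebra.smul_def j x))
  rw [Ideal.mem_comap, hz']
  exact Ideal.mul_mem_right _ _ (Ideal.mem_map_of_mem _ hj)

theorem mem_one_of_pow_le_denominatorIdeal {I : Ideal R} (hI : I.IsRadical)
    (hEnd : ∀ x : S, (∀ j ∈ I, x * algebraMap R S j ∈ algebraMap R S '' I) →
      x ∈ (algebraMap R S).range)
    (k : ℕ) {x : S} (hx : IsIntegral R x) (hk : I ^ k ≤ denominatorIdeal R x) :
    x ∈ (1 : Submodule R S) := by
  induction k generalizing x with
  | zero =>
    simpa [denominatorIdeal] using hk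
  | succ k ih =>
    refine ih hx fun d hd ↦ mem_denominatorIdeal.mpr (hEnd _ fun j hj ↦ ?_)
    obtain ⟨z, hz⟩ := mem_denominatorIdeal.mp (hk (pow_succ I k ▸ Ideal.mul_mem_mul hd hj))
    have hz' : algebraMap R S z = j • d • x := by rw [hz, smul_smul, mul_comm]
    refine ⟨z, hI (mem_radical_of_algebraMap_eq_smul (hx.smul d) hj hz'), ?_⟩
    rw [hz', Algebra.smul_def j, mul_comm]

end GrauertRemmert

theorem exists_isIntegral_algebraMap_eq_smul {R Q B S : Type*} [CommRing R] [CommRing Q]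
    [CommRing B] [CommRing S] [Algebra R Q] [Algebra R B] [Algebra R S] [Algebra Q S] [Algebra B S]
    [IsScalarTower R Q S] [IsScalarTower R B S] (M : Submonoid R) [IsLocalization M B]
    [IsLocalization (Algebra.algebraMapSubmonoid Q M) S] {y : S} (hy : IsIntegral B y) :
    ∃ m ∈ M, ∃ x : Q, IsIntegral R x ∧ algebraMap Q S x = m • y := by
  let ψ : integralClosure R Q →ₐ[R] (integralClosure B S).restrictScalars R :=
    ((IsScalarTower.toAlgHom R Q S).comp (integralClosure R Q).val).codRestrict _
      fun x ↦ (x.2.map (IsScalarTower.toAlgHom R Q S)).tower_top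
  let _ : Algebra (integralClosure R Q) (integralClosure B S) := ψ.toAlgebra
  have : IsScalarTower R (integralClosure R Q) (integralClosure B S) :=
    .of_algebraMap_eq' ψ.comp_algebraMap.symm
  have : IsScalarTower (integralClosure R Q) (integralClosure B S) S := .of_algebraMap_eq' rfl
  have := IsLocalization.integralClosure (S := Q) (Rf := B) (Sf := S) M
  obtain ⟨⟨⟨x, hx⟩, _, m, hm, rfl⟩, hxy⟩ := IsLocalization.surj
    (Algebra.algebraMapSubmonoid (integralClosure R Q) M) (⟨y, hy⟩ : integralClosure B S)
  refine ⟨m, hm, x, hx, ?_⟩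
  have hxyS := congrArg (algebraMap (integralClosure B S) S) hxy
  rw [map_mul, ← IsScalarTower.algebraMap_apply, ← IsScalarTower.algebraMap_apply] at hxyS
  rw [Algebra.smul_def, mul_comm]
  exact hxyS.symm

theorem isIntegrallyClosed_localization_of_exists_smul_mem_one {R Q B : Type*} [CommRing R]
    [CommRing Q] [CommRing B] [Algebra R Q] [Algebra R B] [IsArtinianRing Q] [IsFractionRing R Q]
    (M : Submonoid R) [IsLocalization M B]
    (h : ∀ x : Q, IsIntegral R x → ∃ m ∈ M, m • x ∈ (1 : Submodule R Q)) :
    IsIntegrallyClosed B := by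
  let S := Localization (Algebra.algebraMapSubmonoid Q M)
  let _ : Algebra B S := localizationAlgebra M Q
  have : IsScalarTower R B S := isScalarTower_localizationAlgebra M Q
  have : IsFractionRing B S := isFractionRing_localization_of_isArtinianRing (Q := Q) M
  refine (isIntegrallyClosed_iff S).mpr fun {y} hy ↦ ?_
  obtain ⟨m, hm, x, hx, hxy⟩ := exists_isIntegral_algebraMap_eq_smul (Q := Q) M hy
  obtain ⟨m', hm', hmem⟩ := h x hx
  obtain ⟨r, hr⟩ := Submodule.mem_one.mp hmem
  have hry : algebraMap B S (algebraMap R B r) = (m' * m) • y := by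
    rw [← IsScalarTower.algebraMap_apply, IsScalarTower.algebraMap_apply R Q S, hr,
      ← IsScalarTower.toAlgHom_apply R Q S, map_smul, IsScalarTower.toAlgHom_apply, hxy, smul_smul]
  let u : M := ⟨m' * m, mul_mem hm' hm⟩
  have hunit : IsUnit (algebraMap R B u) := IsLocalization.map_units B u
  refine ⟨IsLocalization.mk' B r u,
    (hunit.map (algebraMap B S)).mul_right_cancel ?_⟩
  rw [← map_mul, IsLocalization.mk'_spec, hry, Algebra.smul_def, mul_comm,
    IsScalarTower.algebraMap_apply R B S]

theorem map_le_radical_map_denominatorIdeal {A L R Q B : Type*} [CommRing A] [CommRing L]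
    [CommRing R] [CommRing Q] [CommRing B] [Algebra A L] [Algebra A R] [Algebra A Q] [Algebra A B]
    [Algebra L B] [Algebra R Q] [Algebra R B] [IsScalarTower A L B] [IsScalarTower A R B]
    [IsScalarTower A R Q] [IsFractionRing A Q] (M : Submonoid A) [IsLocalization M L] {J : Ideal A}
    (hJ : J.map (algebraMap A L) ≤ (conductorIdeal L).radical) {x : Q} (hx : IsIntegral A x) :
    (J.map (algebraMap A R)).map (algebraMap R B) ≤
      ((denominatorIdeal R x).map (algebraMap R B)).radical :=
  calc (J.map (algebraMap A R)).map (algebraMap R B)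
    _ = (J.map (algebraMap A L)).map (algebraMap L B) := by
      rw [Ideal.map_map, Ideal.map_map, ← IsScalarTower.algebraMap_eq,
        ← IsScalarTower.algebraMap_eq]
    _ ≤ ((denominatorIdeal A x).map (algebraMap A L)).radical.map (algebraMap L B) :=
      Ideal.map_mono (hJ.trans (Ideal.radical_mono (conductorIdeal_le_map_denominatorIdeal M hx)))
    _ ≤ (((denominatorIdeal A x).map (algebraMap A L)).map (algebraMap L B)).radical :=
      Ideal.map_radical_le _
    _ = (((denominatorIdeal A x).map (algebraMap A R)).map (algebraMap R B)).radical := by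
      rw [Ideal.map_map, Ideal.map_map, ← IsScalarTower.algebraMap_eq,
        ← IsScalarTower.algebraMap_eq]
    _ ≤ ((denominatorIdeal R x).map (algebraMap R B)).radical :=
      Ideal.radical_mono (Ideal.map_mono (map_denominatorIdeal_le x))

theorem exists_pow_le_denominatorIdeal_smul {R S B : Type*} [CommRing R] [IsNoetherianRing R]
    [CommRing S] [CommRing B] [Algebra R S] [Algebra R B] (N : Submonoid R) [IsLocalization N B]
    {I : Ideal R} {x : S}
    (h : I.map (algebraMap R B) ≤ ((denominatorIdeal R x).map (algebraMap R B)).radical) :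
    ∃ m ∈ N, ∃ k : ℕ, I.radical ^ k ≤ denominatorIdeal R (m • x) := by
  have hI : I.radical ≤
      (((denominatorIdeal R x).map (algebraMap R B)).comap (algebraMap R B)).radical := by
    rw [← Ideal.comap_radical, ((Ideal.radical_isRadical _).comap _).radical_le_iff]
    exact Ideal.map_le_iff_le_comap.mp h
  obtain ⟨k, hk⟩ := Ideal.exists_pow_le_of_le_radical_of_fg hI (IsNoetherian.noetherian _)
  obtain ⟨m, hm, hmk⟩ := exists_mem_span_singleton_mul_le_of_map_le_map N
    (IsNoetherian.noetherian _) (Ideal.map_le_iff_le_comap.mpr hk)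
  exact ⟨m, hm, k, fun d hd ↦ mem_denominatorIdeal_smul.mpr
    (hmk (Ideal.mul_mem_mul (Ideal.mem_span_singleton_self m) hd))⟩

theorem isNoetherianRing_of_le_integralClosure {A K : Type*} [CommRing A] [IsNoetherianRing A]
    [CommRing K] [Algebra A K] [Module.Finite A (integralClosure A K)] {A' : Subalgebra A K}
    (hA' : A' ≤ integralClosure A K) : IsNoetherianRing A' :=
  isNoetherian_of_tower A <| isNoetherian_of_injective (Subalgebra.inclusion hA').toLinearMap
    (Subalgebra.inclusion_injective hA')

theorem local_grauert_remmert_general {A R Q B : Type*} [CommRing A] [CommRing R] [CommRing Q]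
    [CommRing B] [Algebra A R] [Algebra A Q] [Algebra R Q] [Algebra R B] [IsScalarTower A R Q]
    [IsReduced A] [IsFractionRing A Q] [FaithfulSMul R Q] [IsNoetherianRing R]
    [Algebra.IsIntegral A R] (J : Ideal A)
    (hEnd : ∀ x : Q,
      (∀ j ∈ (J.map (algebraMap A R)).radical,
        x * algebraMap R Q j ∈ algebraMap R Q '' (J.map (algebraMap A R)).radical) →
      x ∈ (algebraMap R Q).range)
    (P : PrimeSpectrum A)
    (hP : PrimeSpectrum.zeroLocus
        (conductorIdeal (Localization.AtPrime P.asIdeal) : Set (Localization.AtPrime P.asIdeal)) ⊆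
      PrimeSpectrum.zeroLocus (J.map (algebraMap A (Localization.AtPrime P.asIdeal)) :
        Set (Localization.AtPrime P.asIdeal)))
    [IsLocalization (Algebra.algebraMapSubmonoid R P.asIdeal.primeCompl) B] :
    IsIntegrallyClosed B := by
  have : IsReduced Q := isReduced_of_isLocalization A⁰
  have : IsReduced R := isReduced_of_injective _ (FaithfulSMul.algebraMap_injective R Q)
  have : IsFractionRing R Q := isFractionRing_of_isScalarTower_of_faithfulSMul A R Q
  have : IsArtinianRing Q := isArtinianRing_of_isFractionRing R Q
  let M := P.asIdeal.primeCompl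
  let _ : Algebra A B := Algebra.compHom B (algebraMap A R)
  have : IsScalarTower A R B := .of_algebraMap_eq' rfl
  let _ : Algebra (Localization.AtPrime P.asIdeal) B := localizationAlgebra M R
  have : IsScalarTower A (Localization.AtPrime P.asIdeal) B := isScalarTower_localizationAlgebra M R
  refine isIntegrallyClosed_localization_of_exists_smul_mem_one (Q := Q)
    (Algebra.algebraMapSubmonoid R M) fun x hx ↦ ?_
  have hJ := (PrimeSpectrum.zeroLocus_subset_zeroLocus_iff _ _).mp hP
  obtain ⟨m, hm, k, hk⟩ := exists_pow_le_denominatorIdeal_smul (Algebra.algebraMapSubmonoid R M)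
    (map_le_radical_map_denominatorIdeal (B := B) M hJ (isIntegral_trans x hx))
  exact ⟨m, hm, mem_one_of_pow_le_denominatorIdeal (Ideal.radical_isRadical _) hEnd k
    (hx.smul m) hk⟩

/-- Let `A` be a reduced Noetherian ring with finite normalization,
`A ⊆ A′ ⊆ Ā` an intermediate ring, `W ⊆ Spec A`, `J` a test ideal at `W`, and
`J′ = √(J·A′)`. If every `x ∈ Q(A)` with `x·J′ ⊆ J′` lies in `A′`, then for every
`P ∈ W` the localization `A′_P` of `A′` at the multiplicative set `A ∖ P` is
integrally closed in its total ring of fractions. -/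
theorem local_grauert_remmert
    (A : Type*) [CommRing A] [IsReduced A] [IsNoetherianRing A]
    [Module.Finite A (integralClosure A (FractionRing A))]
    (A' : Subalgebra A (FractionRing A))
    (hA' : A' ≤ integralClosure A (FractionRing A))
    (W : Set (PrimeSpectrum A)) (J : Ideal A) (hJ : IsTestIdealAt A W J)
    (hEnd : ∀ x : FractionRing A,
      (∀ j ∈ (J.map (algebraMap A A')).radical,
        x * (j : FractionRing A) ∈
          (fun b : A' => (b : FractionRing A)) '' ((J.map (algebraMap A A')).radical)) →
      x ∈ A') :
    ∀ P ∈ W,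
      integralClosure
          (Localization (Algebra.algebraMapSubmonoid A' P.asIdeal.primeCompl))
          (FractionRing
            (Localization (Algebra.algebraMapSubmonoid A' P.asIdeal.primeCompl)))
        = ⊥ := by
  intro P hP
  have : IsNoetherianRing A' := isNoetherianRing_of_le_integralClosure hA'
  have : Algebra.IsIntegral A A' := le_integralClosure_iff_isIntegral.mp hA'
  have : IsIntegrallyClosed (Localization (Algebra.algebraMapSubmonoid A' P.asIdeal.primeCompl)) :=
    local_grauert_remmert_general (R := A') (Q := FractionRing A) J
      (fun x hx ↦ ⟨⟨x, hEnd x hx⟩, rfl⟩) P (hJ.2.2 P hP)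
  exact IsIntegrallyClosed.integralClosure_eq_bot _ _
end
end
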